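/- Let 0 < t < 1 and define f₀(x) := x/(1+x) and f_t(x) := (x+t)/(1+x+t) on [0,1]. Let ν_t be a Borel probability measure on [0,1] satisfying the self-conformality equation ν_t = (1/2)·(f₀)_*ν_t + (1/2)·(f_t)_*ν_t (the Lyons conductance measure). Then ν_t has power Fourier decay: there exist β > 0 and C > 0 such that |ν̂_t(ξ)| ≤ C|ξ|^{−β} for all ξ ∈ ℝ with |ξ| ≥ 1. -/

import Mathlib

open MeasureTheory
open scoped ENNReal

namespace Lyons

open Finset

/-- The denominator of the `n`-th inverse continued fraction branch. -/
noncomputable def den (t : ℝ) (n : ℕ) (y : unitInterval) : ℝ := 2 + t * (n + 1) - y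

lemma one_add_le_den (t : ℝ) (n : ℕ) (y : unitInterval) :
    1 + t * (n + 1) ≤ den t n y := by
  have := y.2.2
  unfold den; linarith

lemma one_add_t_le_den {t : ℝ} (ht : 0 < t) (n : ℕ) (y : unitInterval) :
    1 + t ≤ den t n y := by
  have h := one_add_le_den t n y
  have : 0 ≤ t * n := by positivity
  linarith

lemma den_pos {t : ℝ} (ht : 0 < t) (n : ℕ) (y : unitInterval) : 0 < den t n y := by
  have h := one_add_t_le_den ht n y
  linarith

/-- The branch `y ↦ 1 / (2 + t (n + 1) - y)`, as a self-map of the unit interval. -/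
noncomputable def branch {t : ℝ} (ht : 0 < t) (n : ℕ) (y : unitInterval) : unitInterval :=
  ⟨1 / den t n y, by
    have h := one_add_t_le_den ht n y
    constructor
    · exact div_nonneg zero_le_one (by linarith)
    · rw [div_le_one (by linarith)]; linarith⟩

lemma branch_coe {t : ℝ} (ht : 0 < t) (n : ℕ) (y : unitInterval) :
    (branch ht n y : ℝ) = 1 / den t n y := rfl

lemma branch_sub {t : ℝ} (ht : 0 < t) (n : ℕ) (y z : unitInterval) :
    (branch ht n y : ℝ) - branch ht n z = ((y : ℝ) - z) / (den t n y * den t n z) := by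
  have h1 := den_pos ht n y
  have h2 := den_pos ht n z
  rw [branch_coe, branch_coe]
  field_simp
  unfold den; ring

lemma abs_branch_sub {t : ℝ} (ht : 0 < t) (n : ℕ) (y z : unitInterval) :
    |(branch ht n y : ℝ) - branch ht n z| = |(y : ℝ) - z| / (den t n y * den t n z) := by
  rw [branch_sub, abs_div, abs_of_pos (mul_pos (den_pos ht n y) (den_pos ht n z))]

lemma abs_branch_sub_le {t : ℝ} (ht : 0 < t) (n : ℕ) (y z : unitInterval) :
    |(branch ht n y : ℝ) - branch ht n z| ≤ 1 / (1 + t) * |(y : ℝ) - z| := by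
  rw [abs_branch_sub, div_eq_mul_inv, mul_comm, ← one_div]
  gcongr
  have h1 := one_add_t_le_den ht n y
  have h2 := one_add_t_le_den ht n z
  nlinarith

lemma abs_log_den_sub_le {t : ℝ} (ht : 0 < t) (n : ℕ) (y z : unitInterval) :
    |Real.log (den t n y) - Real.log (den t n z)| ≤ |(y : ℝ) - z| := by
  have key : ∀ y z : unitInterval, Real.log (den t n y) - Real.log (den t n z)
      ≤ |(y : ℝ) - z| := by
    intro y z
    have h1 := den_pos ht n y
    have h2 := den_pos ht n z
    have h3 := one_add_t_le_den ht n z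
    rw [← Real.log_div h1.ne' h2.ne']
    refine (Real.log_le_sub_one_of_pos (div_pos h1 h2)).trans ?_
    have : den t n y / den t n z - 1 = ((z : ℝ) - y) / den t n z := by
      field_simp; unfold den; ring
    rw [this, div_le_iff₀ h2]
    have h4 : (z : ℝ) - y ≤ |(y : ℝ) - z| := by rw [abs_sub_comm]; exact le_abs_self _
    nlinarith [abs_nonneg ((y : ℝ) - z)]
  rw [abs_le]
  refine ⟨?_, key y z⟩
  have := key z y
  rw [abs_sub_comm] at this
  linarith

/-- The geometric weights. -/
noncomputable def wt (n : ℕ) : ℝ := (1 / 2) ^ (n + 1)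

lemma wt_pos (n : ℕ) : 0 < wt n := by unfold wt; positivity

lemma sum_wt (N : ℕ) : ∑ n ∈ range N, wt n = 1 - (1 / 2) ^ N := by
  induction N with
  | zero => simp
  | succ k ih => rw [sum_range_succ, ih, wt]; ring

lemma sum_wt_le_one (N : ℕ) : ∑ n ∈ range N, wt n ≤ 1 := by
  rw [sum_wt]; have : (0 : ℝ) ≤ (1 / 2) ^ N := by positivity
  linarith

lemma sum_wt_tail (N m : ℕ) (s : Finset ℕ) (hs : s ⊆ range N) (hm : ∀ n ∈ s, m ≤ n) :
    ∑ n ∈ s, wt n ≤ (1 / 2) ^ m := by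
  rcases le_total m N with h | h
  · have h1 : ∑ n ∈ s, wt n ≤ ∑ n ∈ Ico m N, wt n := by
      apply sum_le_sum_of_subset_of_nonneg
      · intro n hn
        exact mem_Ico.2 ⟨hm n hn, mem_range.1 (hs hn)⟩
      · intro i _ _; exact (wt_pos i).le
    rw [sum_Ico_eq_sub _ h, sum_wt, sum_wt] at h1
    have : (0 : ℝ) ≤ (1 / 2) ^ N := by positivity
    linarith
  · have : s = ∅ := by
      rw [eq_empty_iff_forall_notMem]
      intro n hn
      have := mem_range.1 (hs hn); have := hm n hn; omega
    rw [this]; simp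

/-- The averaging (sub-Markov) operator over the first `N` branches. -/
noncomputable def avg {t : ℝ} (ht : 0 < t) (N : ℕ) (f : unitInterval → ℝ) (y : unitInterval) : ℝ :=
  ∑ n ∈ range N, wt n * f (branch ht n y)

/-- The averaging operator twisted by the character `d ↦ d ^ (i b)` of the cocycle. -/
noncomputable def twisted {t : ℝ} (ht : 0 < t) (N : ℕ) (b : ℝ) (u : unitInterval → ℂ)
    (y : unitInterval) : ℂ :=
  ∑ n ∈ range N, (wt n : ℂ) *
    (Complex.exp ((b * Real.log (den t n y) : ℝ) * Complex.I) * u (branch ht n y))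

section avg
variable {t : ℝ} (ht : 0 < t) (N : ℕ)

lemma avg_mono {f g : unitInterval → ℝ} (h : ∀ y, f y ≤ g y) (y : unitInterval) :
    avg ht N f y ≤ avg ht N g y :=
  sum_le_sum fun n _ => mul_le_mul_of_nonneg_left (h _) (wt_pos n).le

lemma avg_nonneg {f : unitInterval → ℝ} (h : ∀ y, 0 ≤ f y) (y : unitInterval) :
    0 ≤ avg ht N f y :=
  sum_nonneg fun n _ => mul_nonneg (wt_pos n).le (h _)

lemma avg_le_of_le {f : unitInterval → ℝ} {c : ℝ} (hc : 0 ≤ c) (h : ∀ y, f y ≤ c)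
    (y : unitInterval) : avg ht N f y ≤ c := by
  calc avg ht N f y ≤ ∑ n ∈ range N, wt n * c :=
        sum_le_sum fun n _ => mul_le_mul_of_nonneg_left (h _) (wt_pos n).le
    _ = (∑ n ∈ range N, wt n) * c := by rw [sum_mul]
    _ ≤ 1 * c := mul_le_mul_of_nonneg_right (sum_wt_le_one N) hc
    _ = c := one_mul c

lemma avg_const_mul (c : ℝ) (f : unitInterval → ℝ) :
    avg ht N (fun y => c * f y) = fun y => c * avg ht N f y := by
  funext y
  simp only [avg, mul_sum]
  exact sum_congr rfl fun n _ => by ring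

lemma avg_iterate_const_mul (c : ℝ) (L : ℕ) (f : unitInterval → ℝ) :
    (avg ht N)^[L] (fun y => c * f y) = fun y => c * (avg ht N)^[L] f y := by
  induction L generalizing f with
  | zero => rfl
  | succ k ih => rw [Function.iterate_succ_apply, avg_const_mul, ih, Function.iterate_succ_apply]

lemma avg_iterate_mono (L : ℕ) {f g : unitInterval → ℝ} (h : ∀ y, f y ≤ g y)
    (y : unitInterval) : (avg ht N)^[L] f y ≤ (avg ht N)^[L] g y := by
  induction L generalizing f g with
  | zero => exact h y
  | succ k ih =>
    rw [Function.iterate_succ_apply, Function.iterate_succ_apply]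
    exact ih (avg_mono ht N h)

lemma avg_iterate_nonneg (L : ℕ) {f : unitInterval → ℝ} (h : ∀ y, 0 ≤ f y)
    (y : unitInterval) : 0 ≤ (avg ht N)^[L] f y := by
  induction L generalizing f with
  | zero => exact h y
  | succ k ih => rw [Function.iterate_succ_apply]; exact ih (avg_nonneg ht N h)

lemma avg_iterate_le_of_le (L : ℕ) {f : unitInterval → ℝ} {c : ℝ} (hc : 0 ≤ c)
    (h : ∀ y, f y ≤ c) (y : unitInterval) : (avg ht N)^[L] f y ≤ c := by
  induction L generalizing f with
  | zero => exact h y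
  | succ k ih => rw [Function.iterate_succ_apply]; exact ih (avg_le_of_le ht N hc h)

lemma avg_sum {ι : Type*} (s : Finset ι) (a : ι → ℝ) (f : ι → unitInterval → ℝ) :
    avg ht N (fun y => ∑ i ∈ s, a i * f i y) = fun y => ∑ i ∈ s, a i * avg ht N (f i) y := by
  funext y
  simp only [avg, mul_sum]
  rw [sum_comm]
  exact sum_congr rfl fun i _ => sum_congr rfl fun n _ => by ring

lemma avg_iterate_sum {ι : Type*} (s : Finset ι) (a : ι → ℝ) (f : ι → unitInterval → ℝ) (L : ℕ) :
    (avg ht N)^[L] (fun y => ∑ i ∈ s, a i * f i y) =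
      fun y => ∑ i ∈ s, a i * (avg ht N)^[L] (f i) y := by
  induction L generalizing f with
  | zero => rfl
  | succ k ih =>
    rw [Function.iterate_succ_apply, avg_sum, ih]
    simp only [Function.iterate_succ_apply]

lemma avg_iterate_succ_comp (L : ℕ) (f : unitInterval → ℝ) (φ : unitInterval → unitInterval)
    (y : unitInterval) :
    (avg ht N)^[L + 1] (fun z => f (φ z)) y =
      ∑ n ∈ range N, wt n * (avg ht N)^[L] (fun z => f (φ (branch ht n z))) y := by
  rw [Function.iterate_succ_apply]
  exact congrFun (avg_iterate_sum ht N (range N) wt (fun n z => f (φ (branch ht n z))) L) y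

lemma sq_sum_wt_le (f : ℕ → ℝ) :
    (∑ n ∈ range N, wt n * f n) ^ 2 ≤ ∑ n ∈ range N, wt n * f n ^ 2 := by
  have h := sum_mul_sq_le_sq_mul_sq (range N) (fun n => √(wt n)) (fun n => √(wt n) * f n)
  have e1 : ∀ n, √(wt n) * (√(wt n) * f n) = wt n * f n := fun n => by
    rw [← mul_assoc, Real.mul_self_sqrt (wt_pos n).le]
  have e2 : ∀ n, √(wt n) ^ 2 = wt n := fun n => Real.sq_sqrt (wt_pos n).le
  simp only [e1, mul_pow, e2] at h
  refine h.trans ?_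
  have : 0 ≤ ∑ n ∈ range N, wt n * f n ^ 2 :=
    sum_nonneg fun n _ => mul_nonneg (wt_pos n).le (sq_nonneg _)
  nlinarith [sum_wt_le_one N]

lemma sq_avg_le (f : unitInterval → ℝ) (y : unitInterval) :
    (avg ht N f y) ^ 2 ≤ avg ht N (fun z => f z ^ 2) y :=
  sq_sum_wt_le N _

lemma sq_avg_iterate_le (L : ℕ) {f : unitInterval → ℝ} (hf : ∀ y, 0 ≤ f y) (y : unitInterval) :
    ((avg ht N)^[L] f y) ^ 2 ≤ (avg ht N)^[L] (fun z => f z ^ 2) y := by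
  induction L generalizing f with
  | zero => exact le_rfl
  | succ k ih =>
    rw [Function.iterate_succ_apply, Function.iterate_succ_apply]
    exact (ih (avg_nonneg ht N hf)).trans (avg_iterate_mono ht N k (sq_avg_le ht N f) y)

lemma norm_twisted_le (b : ℝ) (u : unitInterval → ℂ) (y : unitInterval) :
    ‖twisted ht N b u y‖ ≤ avg ht N (fun z => ‖u z‖) y := by
  refine (norm_sum_le _ _).trans (sum_le_sum fun n _ => ?_)
  rw [norm_mul, norm_mul, Complex.norm_exp_ofReal_mul_I, one_mul, Complex.norm_real,
    Real.norm_of_nonneg (wt_pos n).le]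

lemma norm_twisted_iterate_le (b : ℝ) (L : ℕ) (u : unitInterval → ℂ) (y : unitInterval) :
    ‖(twisted ht N b)^[L] u y‖ ≤ (avg ht N)^[L] (fun z => ‖u z‖) y := by
  induction L generalizing u with
  | zero => exact le_rfl
  | succ k ih =>
    rw [Function.iterate_succ_apply, Function.iterate_succ_apply]
    exact (ih _).trans (avg_iterate_mono ht N k (norm_twisted_le ht N b u) y)

end avg

end Lyons

namespace Lyons

open Finset

/-- The Lipschitz constant used in the cone of majorised functions. -/
noncomputable def coneConst (t : ℝ) : ℝ := 2 * (1 + t) / t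

/-- The gain in the Lipschitz constant under one step. -/
noncomputable def coneRatio (t : ℝ) : ℝ := (2 + t) / (2 * (1 + t))

lemma two_le_coneConst {t : ℝ} (ht : 0 < t) : 2 ≤ coneConst t := by
  unfold coneConst; rw [le_div_iff₀ ht]; linarith

lemma coneRatio_pos {t : ℝ} (ht : 0 < t) : 0 < coneRatio t := by
  unfold coneRatio; positivity

lemma coneRatio_lt_one {t : ℝ} (ht : 0 < t) : coneRatio t < 1 := by
  unfold coneRatio; rw [div_lt_one (by positivity)]; linarith

lemma coneRatio_mul_coneConst {t : ℝ} (ht : 0 < t) :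
    coneRatio t * coneConst t = 1 + coneConst t * (1 / (1 + t)) := by
  unfold coneRatio coneConst
  field_simp
  ring

/-- `H` majorises `u`, at frequency scale `B`. -/
structure Maj (t B : ℝ) (u : unitInterval → ℂ) (H : unitInterval → ℝ) : Prop where
  norm_le : ∀ y, ‖u y‖ ≤ H y
  compar : ∀ y z : unitInterval, H y ≤ H z * Real.exp (B * |(y : ℝ) - z|)
  diff : ∀ y z : unitInterval,
    ‖u y - u z‖ ≤ coneConst t * (B * |(y : ℝ) - z|) * Real.exp (B * |(y : ℝ) - z|) * H y

lemma Maj.nonneg {t B : ℝ} {u : unitInterval → ℂ} {H : unitInterval → ℝ} (h : Maj t B u H)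
    (y : unitInterval) : 0 ≤ H y := (norm_nonneg _).trans (h.norm_le y)

/-- The quadratic mean of `H` under one step. -/
noncomputable def quadMean {t : ℝ} (ht : 0 < t) (N : ℕ) (H : unitInterval → ℝ)
    (y : unitInterval) : ℝ := √(avg ht N (fun z => H z ^ 2) y)

section step
variable {t : ℝ} (ht : 0 < t) (N : ℕ) (b : ℝ) {u : unitInterval → ℂ} {H : unitInterval → ℝ}

lemma quadMean_nonneg (y : unitInterval) : 0 ≤ quadMean ht N H y := Real.sqrt_nonneg _

lemma quadMean_sq (y : unitInterval) :
    quadMean ht N H y ^ 2 = avg ht N (fun z => H z ^ 2) y :=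
  Real.sq_sqrt (avg_nonneg ht N (fun _ => sq_nonneg _) y)

lemma avg_le_quadMean (y : unitInterval) : avg ht N H y ≤ quadMean ht N H y :=
  Real.le_sqrt_of_sq_le (sq_avg_le ht N H y)

lemma Maj.norm_twisted_le_quadMean {B : ℝ} (h : Maj t B u H) (y : unitInterval) :
    ‖twisted ht N b u y‖ ≤ quadMean ht N H y :=
  (norm_twisted_le ht N b u y).trans
    ((avg_mono ht N h.norm_le y).trans (avg_le_quadMean ht N y))

lemma Maj.quadMean_compar {B : ℝ} (hB : 0 ≤ B) (h : Maj t B u H) (y z : unitInterval) :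
    quadMean ht N H y ≤ quadMean ht N H z * Real.exp (1 / (1 + t) * (B * |(y : ℝ) - z|)) := by
  apply Real.sqrt_le_iff.2
  refine ⟨mul_nonneg (quadMean_nonneg ht N z) (Real.exp_nonneg _), ?_⟩
  rw [mul_pow, quadMean_sq, avg, avg, sum_mul]
  refine sum_le_sum fun n _ => ?_
  rw [mul_assoc, ← mul_pow]
  refine mul_le_mul_of_nonneg_left (pow_le_pow_left₀ (h.nonneg _) ?_ 2) (wt_pos n).le
  refine (h.compar _ (branch ht n z)).trans (mul_le_mul_of_nonneg_left ?_ (h.nonneg _))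
  apply Real.exp_le_exp.2
  have := mul_le_mul_of_nonneg_left (abs_branch_sub_le ht n y z) hB
  linarith

lemma norm_exp_I_sub_le (a c : ℝ) :
    ‖Complex.exp ((a : ℝ) * Complex.I) - Complex.exp ((c : ℝ) * Complex.I)‖ ≤ |a - c| := by
  have h : Complex.exp ((a : ℝ) * Complex.I) - Complex.exp ((c : ℝ) * Complex.I)
      = Complex.exp ((c : ℝ) * Complex.I) * (Complex.exp (Complex.I * ((a - c : ℝ))) - 1) := by
    rw [mul_sub, ← Complex.exp_add]
    congr 2
    · push_cast; ring
    · rw [mul_one]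
  rw [h, norm_mul, Complex.norm_exp_ofReal_mul_I, one_mul]
  exact Real.norm_exp_I_mul_ofReal_sub_one_le

lemma Maj.twisted_diff (h : Maj t |b| u H) (y z : unitInterval) :
    ‖twisted ht N b u y - twisted ht N b u z‖ ≤
      coneRatio t * coneConst t * (|b| * |(y : ℝ) - z|) * Real.exp (|b| * |(y : ℝ) - z|) *
        quadMean ht N H y := by
  set x := |b| * |(y : ℝ) - z| with hx
  have hx0 : 0 ≤ x := by positivity
  have hA := two_le_coneConst ht
  calc ‖twisted ht N b u y - twisted ht N b u z‖
      ≤ ∑ n ∈ range N, wt n * (coneRatio t * coneConst t * x * Real.exp x * H (branch ht n y)) := by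
        rw [twisted, twisted, ← sum_sub_distrib]
        refine (norm_sum_le _ _).trans (sum_le_sum fun n _ => ?_)
        rw [← mul_sub, norm_mul, Complex.norm_real, Real.norm_of_nonneg (wt_pos n).le]
        refine mul_le_mul_of_nonneg_left ?_ (wt_pos n).le
        set e1 := Complex.exp ((b * Real.log (den t n y) : ℝ) * Complex.I)
        set e2 := Complex.exp ((b * Real.log (den t n z) : ℝ) * Complex.I) with he2
        have e : e1 * u (branch ht n y) - e2 * u (branch ht n z)
          = (e1 - e2) * u (branch ht n y) + e2 * (u (branch ht n y) - u (branch ht n z)) := by ring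
        rw [e]
        refine (norm_add_le _ _).trans ?_
        rw [norm_mul, norm_mul, he2, Complex.norm_exp_ofReal_mul_I, one_mul, ← he2]
        have h1 : ‖e1 - e2‖ ≤ x := by
          refine (norm_exp_I_sub_le _ _).trans ?_
          rw [← mul_sub, abs_mul]
          exact mul_le_mul_of_nonneg_left (abs_log_den_sub_le ht n y z) (abs_nonneg _)
        have h2 := h.norm_le (branch ht n y)
        have h3 := h.diff (branch ht n y) (branch ht n z)
        have h4 : |b| * |(branch ht n y : ℝ) - branch ht n z| ≤ 1 / (1 + t) * x := by
          have := mul_le_mul_of_nonneg_left (abs_branch_sub_le ht n y z) (abs_nonneg b)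
          rw [hx]; linarith
        have h5 : 1 / (1 + t) * x ≤ x := by
          apply mul_le_of_le_one_left hx0
          rw [div_le_one (by linarith)]; linarith
        have hH := h.nonneg (branch ht n y)
        have h6 : Real.exp (|b| * |(branch ht n y : ℝ) - branch ht n z|) ≤ Real.exp x :=
          Real.exp_le_exp.2 (h4.trans h5)
        have h7 : 1 ≤ Real.exp x := Real.one_le_exp hx0
        calc ‖e1 - e2‖ * ‖u (branch ht n y)‖ + ‖u (branch ht n y) - u (branch ht n z)‖
            ≤ x * H (branch ht n y) +
              coneConst t * (1 / (1 + t) * x) * Real.exp x * H (branch ht n y) := by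
              refine add_le_add (mul_le_mul h1 h2 (norm_nonneg _) hx0) (h3.trans ?_)
              gcongr
          _ ≤ x * Real.exp x * H (branch ht n y) +
              coneConst t * (1 / (1 + t) * x) * Real.exp x * H (branch ht n y) := by
              gcongr
              exact le_mul_of_one_le_right hx0 h7
          _ = _ := by rw [coneRatio_mul_coneConst ht]; ring
    _ = coneRatio t * coneConst t * x * Real.exp x * avg ht N H y := by
        rw [avg, mul_sum]; exact sum_congr rfl fun n _ => by ring
    _ ≤ _ := by
        have := coneRatio_pos ht
        gcongr
        exact avg_le_quadMean ht N y

/-- The smallest log-Lipschitz majorant of `v`. -/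
noncomputable def logLipMaj (B : ℝ) (v : unitInterval → ℂ) (y : unitInterval) : ℝ :=
  ⨆ z : unitInterval, ‖v z‖ * Real.exp (-(B * |(y : ℝ) - z|))

/-- The majorant of `twisted ht N b u` produced from the majorant `H` of `u`. -/
noncomputable def nextMaj (u : unitInterval → ℂ) (H : unitInterval → ℝ) (y : unitInterval) : ℝ :=
  max (logLipMaj |b| (twisted ht N b u) y) (coneRatio t * quadMean ht N H y)

lemma Maj.weighted_le (h : Maj t |b| u H) (y z : unitInterval) :
    ‖twisted ht N b u z‖ * Real.exp (-(|b| * |(y : ℝ) - z|)) ≤ quadMean ht N H y *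
      Real.exp (-(t / (1 + t) * (|b| * |(y : ℝ) - z|))) := by
  have h1 := h.norm_twisted_le_quadMean ht N b z
  have h2 := h.quadMean_compar ht N (abs_nonneg b) z y
  rw [abs_sub_comm] at h2
  calc _ ≤ quadMean ht N H y * Real.exp (1 / (1 + t) * (|b| * |(y : ℝ) - z|)) *
      Real.exp (-(|b| * |(y : ℝ) - z|)) := by gcongr; exact h1.trans h2
    _ = _ := by
      rw [mul_assoc, ← Real.exp_add]
      congr 2
      field_simp
      ring

lemma Maj.weighted_le' (h : Maj t |b| u H) (y z : unitInterval) :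
    ‖twisted ht N b u z‖ * Real.exp (-(|b| * |(y : ℝ) - z|)) ≤ quadMean ht N H y := by
  refine (h.weighted_le ht N b y z).trans (mul_le_of_le_one_right (quadMean_nonneg ht N y) ?_)
  rw [Real.exp_le_one_iff]
  have : 0 ≤ t / (1 + t) * (|b| * |(y : ℝ) - z|) := by positivity
  linarith

lemma Maj.bddAbove (h : Maj t |b| u H) (y : unitInterval) :
    BddAbove (Set.range fun z : unitInterval =>
      ‖twisted ht N b u z‖ * Real.exp (-(|b| * |(y : ℝ) - z|))) :=
  ⟨quadMean ht N H y, by rintro _ ⟨z, rfl⟩; exact h.weighted_le' ht N b y z⟩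

lemma Maj.nextMaj_le (h : Maj t |b| u H) (y : unitInterval) :
    nextMaj ht N b u H y ≤ quadMean ht N H y :=
  max_le (ciSup_le fun z => h.weighted_le' ht N b y z)
    (mul_le_of_le_one_left (quadMean_nonneg ht N y) (coneRatio_lt_one ht).le)

lemma Maj.next (h : Maj t |b| u H) :
    Maj t |b| (twisted ht N b u) (nextMaj ht N b u H) where
  norm_le y := by
    refine le_max_of_le_left ?_
    refine le_ciSup_of_le (h.bddAbove ht N b y) y ?_
    simp
  compar y z := by
    have hE : 0 ≤ Real.exp (|b| * |(y : ℝ) - z|) := (Real.exp_pos _).le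
    have h1 : ∀ z', nextMaj ht N b u H z' ≥ logLipMaj |b| (twisted ht N b u) z' :=
      fun z' => le_max_left _ _
    have h2 : ∀ z', nextMaj ht N b u H z' ≥ coneRatio t * quadMean ht N H z' :=
      fun z' => le_max_right _ _
    refine max_le ?_ ?_
    · refine ciSup_le fun w => ?_
      calc ‖twisted ht N b u w‖ * Real.exp (-(|b| * |(y : ℝ) - w|))
          ≤ (‖twisted ht N b u w‖ * Real.exp (-(|b| * |(z : ℝ) - w|))) *
            Real.exp (|b| * |(y : ℝ) - z|) := by
            rw [mul_assoc, ← Real.exp_add]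
            gcongr
            have : |(z : ℝ) - w| ≤ |(y : ℝ) - z| + |(y : ℝ) - w| := by
              rw [abs_sub_comm (y : ℝ) z]
              exact abs_sub_le _ _ _
            have := mul_le_mul_of_nonneg_left this (abs_nonneg b)
            linarith
        _ ≤ _ := by
            gcongr
            exact (le_ciSup (h.bddAbove ht N b z) w).trans (h1 z)
    · calc coneRatio t * quadMean ht N H y
          ≤ coneRatio t * (quadMean ht N H z * Real.exp (1 / (1 + t) * (|b| * |(y : ℝ) - z|))) :=
            mul_le_mul_of_nonneg_left (h.quadMean_compar ht N (abs_nonneg b) y z)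
              (coneRatio_pos ht).le
        _ ≤ coneRatio t * (quadMean ht N H z * Real.exp (|b| * |(y : ℝ) - z|)) := by
            refine mul_le_mul_of_nonneg_left (mul_le_mul_of_nonneg_left (Real.exp_le_exp.2 ?_)
              (quadMean_nonneg ht N z)) (coneRatio_pos ht).le
            apply mul_le_of_le_one_left (by positivity)
            rw [div_le_one (by linarith)]; linarith
        _ ≤ _ := by
            rw [← mul_assoc]
            exact mul_le_mul_of_nonneg_right (h2 z) hE
  diff y z := by
    refine (h.twisted_diff ht N b y z).trans ?_
    have hA := two_le_coneConst ht
    calc coneRatio t * coneConst t * (|b| * |(y : ℝ) - z|) * Real.exp (|b| * |(y : ℝ) - z|) *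
        quadMean ht N H y = coneConst t * (|b| * |(y : ℝ) - z|) *
          Real.exp (|b| * |(y : ℝ) - z|) * (coneRatio t * quadMean ht N H y) := by ring
      _ ≤ _ := by
        gcongr
        exact le_max_right _ _

end step

/-- A local gain at a point propagates to a neighbourhood of size comparable to `1 / |b|`. -/
lemma exists_local_gain {t : ℝ} (ht : 0 < t) {η₀ : ℝ} (h0 : 0 < η₀) (h1 : η₀ ≤ 1) :
    ∃ δ > 0, ∃ η > 0, η < 1 ∧ ∀ (N : ℕ) (b : ℝ) (u : unitInterval → ℂ) (H : unitInterval → ℝ),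
      Maj t |b| u H → ∀ s : unitInterval,
      ‖twisted ht N b u s‖ ≤ (1 - η₀) * quadMean ht N H s →
      ∀ y : unitInterval, |b| * |(y : ℝ) - s| ≤ δ →
        nextMaj ht N b u H y ≤ (1 - η) * quadMean ht N H y := by
  have hA := two_le_coneConst ht
  set A := coneConst t with hAdef
  set δ := η₀ / (20 * A) with hδ
  have hδ0 : 0 < δ := by positivity
  have hAδ : A * δ = η₀ / 20 := by rw [hδ]; field_simp
  have hδ1 : δ ≤ η₀ / 40 := by nlinarith
  have hE : Real.exp (2 * δ) ≤ 1 + η₀ / 10 := by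
    have := Real.exp_bound_div_one_sub_of_interval (x := 2 * δ) (by positivity) (by linarith)
    refine this.trans ?_
    rw [div_le_iff₀ (by linarith)]
    nlinarith
  set q := max (1 - η₀ / 2) (max (Real.exp (-(t / (1 + t) * δ))) (coneRatio t)) with hq
  have hq1 : q < 1 := by
    refine max_lt (by linarith) (max_lt ?_ (coneRatio_lt_one ht))
    rw [Real.exp_lt_one_iff]
    have : 0 < t / (1 + t) * δ := by positivity
    linarith
  have hq0 : 0 < q := lt_max_of_lt_right (lt_max_of_lt_left (Real.exp_pos _))
  refine ⟨δ, hδ0, 1 - q, by linarith, by linarith, ?_⟩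
  intro N b u H h s hs y hy
  rw [sub_sub_cancel]
  have hG := fun z => quadMean_nonneg ht N (H := H) z
  refine max_le (ciSup_le fun z => ?_) ?_
  · rcases le_total δ (|b| * |(y : ℝ) - z|) with hz | hz
    · refine (h.weighted_le ht N b y z).trans ?_
      rw [mul_comm]
      refine mul_le_mul_of_nonneg_right ?_ (hG y)
      refine le_trans (Real.exp_le_exp.2 ?_) ((le_max_left _ _).trans (le_max_right _ _))
      have : t / (1 + t) * δ ≤ t / (1 + t) * (|b| * |(y : ℝ) - z|) := by gcongr
      linarith
    · have hx : |b| * |(s : ℝ) - z| ≤ 2 * δ := by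
        have : |(s : ℝ) - z| ≤ |(y : ℝ) - s| + |(y : ℝ) - z| := by
          rw [abs_sub_comm (y : ℝ) s]
          exact abs_sub_le _ _ _
        have := mul_le_mul_of_nonneg_left this (abs_nonneg b)
        linarith
      have hx0 : 0 ≤ |b| * |(s : ℝ) - z| := by positivity
      have hd : ‖twisted ht N b u s - twisted ht N b u z‖ ≤
          A * (2 * δ) * Real.exp (2 * δ) * quadMean ht N H s := by
        refine (h.twisted_diff ht N b s z).trans ?_
        have : coneRatio t * A ≤ A := mul_le_of_le_one_left (by linarith) (coneRatio_lt_one ht).le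
        have := hG s
        have := coneRatio_pos ht
        gcongr
      have hv : ‖twisted ht N b u z‖ ≤
          (1 - η₀ + A * (2 * δ) * Real.exp (2 * δ)) * quadMean ht N H s := by
        have := norm_sub_norm_le (twisted ht N b u z) (twisted ht N b u s)
        rw [norm_sub_rev] at this
        linarith
      have hGs : quadMean ht N H s ≤
          quadMean ht N H y * Real.exp (|b| * |(y : ℝ) - s|) := by
        refine (h.quadMean_compar ht N (abs_nonneg b) s y).trans ?_
        rw [abs_sub_comm]
        refine mul_le_mul_of_nonneg_left (Real.exp_le_exp.2 ?_) (hG y)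
        apply mul_le_of_le_one_left (by positivity)
        rw [div_le_one (by linarith)]; linarith
      have hGs' : quadMean ht N H s ≤ quadMean ht N H y * (1 + η₀ / 10) := by
        refine hGs.trans (mul_le_mul_of_nonneg_left (le_trans (Real.exp_le_exp.2 ?_) hE) (hG y))
        linarith
      have hc : 1 - η₀ + A * (2 * δ) * Real.exp (2 * δ) ≤ 1 - η₀ + η₀ / 10 * (1 + η₀ / 10) := by
        have : A * (2 * δ) = η₀ / 10 := by linarith
        rw [this]; gcongr
      have hc0 : 0 ≤ 1 - η₀ + η₀ / 10 * (1 + η₀ / 10) := by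
        have : 0 ≤ η₀ / 10 * (1 + η₀ / 10) := by positivity
        linarith
      calc ‖twisted ht N b u z‖ * Real.exp (-(|b| * |(y : ℝ) - z|)) ≤ ‖twisted ht N b u z‖ := by
            refine mul_le_of_le_one_right (norm_nonneg _) (Real.exp_le_one_iff.2 ?_)
            have : 0 ≤ |b| * |(y : ℝ) - z| := by positivity
            linarith
        _ ≤ (1 - η₀ + η₀ / 10 * (1 + η₀ / 10)) * (quadMean ht N H y * (1 + η₀ / 10)) :=
            hv.trans (mul_le_mul hc hGs' (hG s) hc0)
        _ = ((1 - η₀ + η₀ / 10 * (1 + η₀ / 10)) * (1 + η₀ / 10)) * quadMean ht N H y := by ring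
        _ ≤ (1 - η₀ / 2) * quadMean ht N H y := by
            refine mul_le_mul_of_nonneg_right ?_ (hG y)
            nlinarith [mul_nonneg h0.le h0.le, mul_nonneg h0.le (sub_nonneg.2 h1),
              mul_nonneg (mul_nonneg h0.le h0.le) (sub_nonneg.2 h1)]
        _ ≤ _ := mul_le_mul_of_nonneg_right (le_max_left _ _) (hG y)
  · exact mul_le_mul_of_nonneg_right ((le_max_right _ _).trans (le_max_right _ _)) (hG y)

end Lyons

namespace Lyons

open Finset

lemma half_le_norm_exp_I_sub {a c : ℝ} (h : |a - c| ≤ 1) :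
    |a - c| / 2 ≤
      ‖Complex.exp ((a : ℝ) * Complex.I) - Complex.exp ((c : ℝ) * Complex.I)‖ := by
  have key : Complex.exp ((a : ℝ) * Complex.I) - Complex.exp ((c : ℝ) * Complex.I)
      = Complex.exp ((c : ℝ) * Complex.I) * (Complex.exp (((a - c : ℝ)) * Complex.I) - 1) := by
    rw [mul_sub, ← Complex.exp_add]
    congr 2
    · push_cast; ring
    · rw [mul_one]
  rw [key, norm_mul, Complex.norm_exp_ofReal_mul_I, one_mul]
  refine le_trans ?_ (Complex.abs_im_le_norm _)
  rw [Complex.sub_im, Complex.exp_ofReal_mul_I_im, Complex.one_im, sub_zero]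
  have hsin : ∀ x : ℝ, 0 ≤ x → x ≤ 1 → x / 2 ≤ Real.sin x := by
    intro x hx0 hx1
    have h1 := Real.mul_le_sin hx0 (by linarith [Real.pi_gt_three])
    have h2 : (1 : ℝ) / 2 ≤ 2 / Real.pi := by
      rw [div_le_div_iff₀ (by norm_num) Real.pi_pos]; linarith [Real.pi_le_four]
    nlinarith
  rcases le_total 0 (a - c) with h0 | h0
  · rw [abs_of_nonneg h0] at h ⊢
    exact (hsin _ h0 h).trans (le_abs_self _)
  · rw [abs_of_nonpos h0] at h ⊢
    have := hsin _ (neg_nonneg.2 h0) h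
    rw [Real.sin_neg] at this
    exact this.trans (neg_le_abs _)

/-- The phase difference between two branches varies at a rate comparable to `1 / M`. -/
lemma log_den_diff_bounds {t : ℝ} (m : ℕ) (hM : 2 ≤ t * (m + 1))
    (y z : unitInterval) :
    |(y : ℝ) - z| / (6 * (t * (m + 1))) ≤
      |(Real.log (den t m y) - Real.log (den t (2 * m + 1) y)) -
        (Real.log (den t m z) - Real.log (den t (2 * m + 1) z))| ∧
    |(Real.log (den t m y) - Real.log (den t (2 * m + 1) y)) -
        (Real.log (den t m z) - Real.log (den t (2 * m + 1) z))| ≤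
      |(y : ℝ) - z| / (2 * (t * (m + 1))) := by
  set M := t * (m + 1) with hMd
  have e1 : ∀ w : unitInterval, den t m w = 2 + M - w := fun w => rfl
  have e2 : ∀ w : unitInterval, den t (2 * m + 1) w = 2 + 2 * M - w := fun w => by
    rw [den, hMd]; push_cast; ring
  simp only [e1, e2]
  suffices H : ∀ y z : unitInterval, (y : ℝ) ≤ z →
      ((z : ℝ) - y) / (6 * M) ≤ (Real.log (2 + M - y) - Real.log (2 + 2 * M - y)) -
        (Real.log (2 + M - z) - Real.log (2 + 2 * M - z)) ∧
      (Real.log (2 + M - y) - Real.log (2 + 2 * M - y)) -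
        (Real.log (2 + M - z) - Real.log (2 + 2 * M - z)) ≤ ((z : ℝ) - y) / (2 * M) by
    rcases le_total (y : ℝ) z with h | h
    · have hh := H y z h
      have h0 : 0 ≤ ((z : ℝ) - y) / (6 * M) := div_nonneg (by linarith) (by linarith)
      rw [abs_sub_comm, abs_of_nonneg (sub_nonneg.2 h), abs_of_nonneg (h0.trans hh.1)]
      exact hh
    · have hh := H z y h
      have h0 : 0 ≤ ((y : ℝ) - z) / (6 * M) := div_nonneg (by linarith) (by linarith)
      rw [abs_of_nonneg (sub_nonneg.2 h), abs_sub_comm, abs_of_nonneg (h0.trans hh.1)]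
      exact hh
  intro y z hyz
  have hy := y.2
  have hz := z.2
  obtain ⟨hy0, hy1⟩ := hy
  obtain ⟨hz0, hz1⟩ := hz
  have p1 : 0 < 2 + M - y := by linarith
  have p2 : 0 < 2 + 2 * M - y := by linarith
  have p3 : 0 < 2 + M - z := by linarith
  have p4 : 0 < 2 + 2 * M - z := by linarith
  have hd : 0 ≤ (z : ℝ) - y := by linarith
  have eq : (Real.log (2 + M - y) - Real.log (2 + 2 * M - y)) -
        (Real.log (2 + M - z) - Real.log (2 + 2 * M - z)) =
      Real.log (((2 + M - y) * (2 + 2 * M - z)) / ((2 + 2 * M - y) * (2 + M - z))) := by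
    rw [Real.log_div (by positivity) (by positivity), Real.log_mul p1.ne' p4.ne',
      Real.log_mul p2.ne' p3.ne']
    ring
  rw [eq]
  constructor
  · refine le_trans ?_ (Real.one_sub_inv_le_log_of_pos (by positivity))
    have : 1 - (((2 + M - y) * (2 + 2 * M - z)) / ((2 + 2 * M - y) * (2 + M - z)))⁻¹
        = M * (z - y) / ((2 + M - y) * (2 + 2 * M - z)) := by
      rw [inv_div, one_sub_div (by positivity)]
      congr 1; ring
    rw [this, div_le_div_iff₀ (by linarith) (by positivity)]
    have hp : (2 + M - y) * (2 + 2 * M - z) ≤ (2 * M) * (3 * M) := by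
      apply mul_le_mul <;> linarith
    nlinarith [mul_le_mul_of_nonneg_left hp hd]
  · refine (Real.log_le_sub_one_of_pos (by positivity)).trans ?_
    have : ((2 + M - y) * (2 + 2 * M - z)) / ((2 + 2 * M - y) * (2 + M - z)) - 1
        = M * (z - y) / ((2 + 2 * M - y) * (2 + M - z)) := by
      rw [div_sub_one (by positivity)]
      congr 1; ring
    rw [this, div_le_div_iff₀ (by positivity) (by linarith)]
    have hp : (2 * M) * M ≤ (2 + 2 * M - y) * (2 + M - z) := by
      apply mul_le_mul <;> linarith
    nlinarith [mul_le_mul_of_nonneg_left hp hd]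

section
variable {t : ℝ} (ht : 0 < t) (N : ℕ) (b : ℝ) {u : unitInterval → ℂ} {H : unitInterval → ℝ}

/-- If there is almost no cancellation in `twisted ht N b u y`, then every summand is close to
the mean, and `u` almost saturates its majorant. -/
lemma defect_le {B : ℝ} (h : Maj t B u H) (y : unitInterval) {n : ℕ} (hn : n < N) :
    wt n * (‖Complex.exp ((b * Real.log (den t n y) : ℝ) * Complex.I) * u (branch ht n y) -
        twisted ht N b u y‖ ^ 2 + (H (branch ht n y) ^ 2 - ‖u (branch ht n y)‖ ^ 2)) ≤
      quadMean ht N H y ^ 2 - ‖twisted ht N b u y‖ ^ 2 := by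
  set v := twisted ht N b u y with hv
  set e : ℕ → ℂ := fun n => Complex.exp ((b * Real.log (den t n y) : ℝ) * Complex.I) with he
  have hterm : ∀ n, 0 ≤ wt n * (‖e n * u (branch ht n y) - v‖ ^ 2 +
      (H (branch ht n y) ^ 2 - ‖u (branch ht n y)‖ ^ 2)) := by
    intro n
    have := pow_le_pow_left₀ (norm_nonneg _) (h.norm_le (branch ht n y)) 2
    have := wt_pos n
    have h3 : 0 ≤ H (branch ht n y) ^ 2 - ‖u (branch ht n y)‖ ^ 2 := by linarith
    positivity
  refine (single_le_sum (f := fun n => wt n * (‖e n * u (branch ht n y) - v‖ ^ 2 +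
      (H (branch ht n y) ^ 2 - ‖u (branch ht n y)‖ ^ 2))) (fun i _ => hterm i)
      (mem_range.2 hn)).trans ?_
  have hexp : ∀ n, ‖e n * u (branch ht n y) - v‖ ^ 2 =
      ‖u (branch ht n y)‖ ^ 2 + ‖v‖ ^ 2 -
        2 * ((e n * u (branch ht n y)) * starRingEnd ℂ v).re := by
    intro n
    rw [Complex.sq_norm, Complex.normSq_sub, ← Complex.sq_norm, ← Complex.sq_norm, norm_mul, he,
      Complex.norm_exp_ofReal_mul_I, one_mul]
  have hsum : ∑ n ∈ range N, wt n * ((e n * u (branch ht n y)) * starRingEnd ℂ v).re = ‖v‖ ^ 2 := by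
    have h1 : v * starRingEnd ℂ v = ((‖v‖ ^ 2 : ℝ) : ℂ) := by
      rw [Complex.mul_conj, Complex.sq_norm]
    have h2 : (v * starRingEnd ℂ v).re = ‖v‖ ^ 2 := by rw [h1, Complex.ofReal_re]
    have h3 : ∀ w : ℂ, (v * w).re = ∑ n ∈ range N, wt n * ((e n * u (branch ht n y)) * w).re := by
      intro w
      rw [hv, twisted, sum_mul, Complex.re_sum]
      refine sum_congr rfl fun n _ => ?_
      rw [mul_assoc, Complex.re_ofReal_mul]
    rw [← h2, h3]
  have h2 : ∀ n ∈ range N, wt n * (‖e n * u (branch ht n y) - v‖ ^ 2 +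
      (H (branch ht n y) ^ 2 - ‖u (branch ht n y)‖ ^ 2)) = wt n * H (branch ht n y) ^ 2 +
      wt n * ‖v‖ ^ 2 - 2 * (wt n * ((e n * u (branch ht n y)) * starRingEnd ℂ v).re) := by
    intro n _
    rw [hexp]; ring
  rw [sum_congr rfl h2, sum_sub_distrib, sum_add_distrib, ← mul_sum, hsum, ← sum_mul,
    quadMean_sq, avg]
  have := mul_le_mul_of_nonneg_right (sum_wt_le_one N) (sq_nonneg ‖v‖)
  linarith

end

/-- Consequences of the absence of cancellation at a point. -/
lemma near_saturation {t : ℝ} (ht : 0 < t) {N : ℕ} {b B : ℝ} {u : unitInterval → ℂ}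
    {H : unitInterval → ℝ} (h : Maj t B u H) {y : unitInterval} {η₀ ε p : ℝ}
    (hε0 : 0 ≤ ε) (hε : ε ≤ 1 / 4) (hη4 : η₀ ≤ 1 / 4) (hp : 0 < p) (hηε : 2 * η₀ ≤ p * ε ^ 2)
    (hv : (1 - η₀) * quadMean ht N H y < ‖twisted ht N b u y‖) {n : ℕ} (hn : n < N)
    (hpn : p ≤ wt n) :
    ‖Complex.exp ((b * Real.log (den t n y) : ℝ) * Complex.I) * u (branch ht n y) -
        twisted ht N b u y‖ ≤ ε * quadMean ht N H y ∧
    H (branch ht n y) ≤ 2 * quadMean ht N H y ∧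
    quadMean ht N H y / 2 ≤ ‖u (branch ht n y)‖ := by
  set G := quadMean ht N H y with hG
  set v := twisted ht N b u y with hvd
  set e := Complex.exp ((b * Real.log (den t n y) : ℝ) * Complex.I) with he
  have hG0 : 0 ≤ G := quadMean_nonneg ht N y
  have hvG : ‖v‖ ≤ G := h.norm_twisted_le_quadMean ht N b y
  have hd := defect_le ht N b h y hn
  have hHu : 0 ≤ H (branch ht n y) ^ 2 - ‖u (branch ht n y)‖ ^ 2 :=
    sub_nonneg.2 (pow_le_pow_left₀ (norm_nonneg _) (h.norm_le _) 2)
  have hsq : (1 - 2 * η₀) * G ^ 2 ≤ ‖v‖ ^ 2 := by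
    have := pow_le_pow_left₀ (mul_nonneg (by linarith) hG0) hv.le 2
    nlinarith [mul_nonneg (sq_nonneg η₀) (sq_nonneg G)]
  have hup : ‖e * u (branch ht n y) - v‖ ^ 2 +
      (H (branch ht n y) ^ 2 - ‖u (branch ht n y)‖ ^ 2) ≤ (ε * G) ^ 2 := by
    set Q := ‖e * u (branch ht n y) - v‖ ^ 2 +
      (H (branch ht n y) ^ 2 - ‖u (branch ht n y)‖ ^ 2) with hQ
    have hQ0 : 0 ≤ Q := add_nonneg (sq_nonneg _) hHu
    have h1 : p * Q ≤ p * (ε * G) ^ 2 := by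
      have h2 : p * Q ≤ wt n * Q := mul_le_mul_of_nonneg_right hpn hQ0
      have h3 : 2 * η₀ * G ^ 2 ≤ p * ε ^ 2 * G ^ 2 :=
        mul_le_mul_of_nonneg_right hηε (sq_nonneg G)
      nlinarith
    exact le_of_mul_le_mul_left h1 hp
  have h1 : ‖e * u (branch ht n y) - v‖ ≤ ε * G := by
    refine le_of_sq_le_sq ?_ (by positivity)
    linarith
  have hue : ‖e * u (branch ht n y)‖ = ‖u (branch ht n y)‖ := by
    rw [norm_mul, he, Complex.norm_exp_ofReal_mul_I, one_mul]
  have hu1 : ‖u (branch ht n y)‖ ≤ (1 + ε) * G := by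
    have := norm_sub_norm_le (e * u (branch ht n y)) v
    rw [hue] at this; linarith
  refine ⟨h1, ?_, ?_⟩
  · refine le_of_sq_le_sq ?_ (by positivity)
    have h2 : ‖u (branch ht n y)‖ ^ 2 ≤ ((1 + ε) * G) ^ 2 :=
      pow_le_pow_left₀ (norm_nonneg _) hu1 2
    have h3 : H (branch ht n y) ^ 2 ≤ ((1 + ε) * G) ^ 2 + (ε * G) ^ 2 := by
      nlinarith [sq_nonneg ‖e * u (branch ht n y) - v‖]
    have h4 : (1 + ε) ^ 2 + ε ^ 2 ≤ 4 := by nlinarith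
    nlinarith [mul_le_mul_of_nonneg_right h4 (sq_nonneg G)]
  · have := norm_sub_norm_le v (e * u (branch ht n y))
    rw [hue, norm_sub_rev] at this
    nlinarith

set_option maxHeartbeats 400000 in
/-- At frequency-scaled distance in `[x₀, 1]` at least one of two points sees a definite
amount of cancellation. -/
lemma exists_cancellation {t : ℝ} (ht : 0 < t) {x₀ : ℝ} (hx₀ : 0 < x₀) :
    ∃ N₀ : ℕ, ∃ η₀ > 0, η₀ ≤ 1 ∧ ∀ N ≥ N₀, ∀ (b : ℝ) (u : unitInterval → ℂ)
      (H : unitInterval → ℝ), Maj t |b| u H → ∀ y z : unitInterval,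
      x₀ ≤ |b| * |(y : ℝ) - z| → |b| * |(y : ℝ) - z| ≤ 1 →
      ‖twisted ht N b u y‖ ≤ (1 - η₀) * quadMean ht N H y ∨
      ‖twisted ht N b u z‖ ≤ (1 - η₀) * quadMean ht N H z := by
  have hA := two_le_coneConst ht
  set A := coneConst t with hAdef
  obtain ⟨m, hm⟩ := exists_nat_ge (576 * A / t)
  rw [div_le_iff₀ ht] at hm
  set M := t * (m + 1) with hM
  have hMA : 576 * A ≤ M := by rw [hM]; nlinarith
  have hM2 : 2 ≤ M := by linarith
  clear_value A M
  set ε := min (1 / 4) (x₀ / (400 * M)) with hε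
  have hε0 : 0 < ε := lt_min (by norm_num) (by positivity)
  have hε4 : ε ≤ 1 / 4 := min_le_left _ _
  have hεM : ε * (400 * M) ≤ x₀ := by
    rw [← le_div_iff₀ (by positivity)]; exact min_le_right _ _
  set p := wt (2 * m + 1) with hp
  have hp0 : 0 < p := wt_pos _
  have hp1 : p ≤ 1 := by rw [hp, wt]; exact pow_le_one₀ (by norm_num) (by norm_num)
  have hpε : p * ε ^ 2 / 2 ≤ 1 / 4 := by
    have : p * ε ^ 2 ≤ 1 * (1 / 4) ^ 2 := by gcongr
    linarith
  clear_value ε p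
  refine ⟨2 * m + 2, p * ε ^ 2 / 2, by positivity, by linarith, ?_⟩
  intro N hN b u H h y z hx0 hx1
  by_contra! hcon
  obtain ⟨hy, hz⟩ := hcon
  have hα : p ≤ wt m := by
    rw [hp, wt, wt]
    exact pow_le_pow_of_le_one (by norm_num) (by norm_num) (by omega)
  obtain ⟨yα, yHα, yuα⟩ := near_saturation ht h hε0.le hε4 hpε hp0
    (by linarith) hy (n := m) (by omega) hα
  obtain ⟨yβ, yHβ, -⟩ := near_saturation ht h hε0.le hε4 hpε hp0
    (by linarith) hy (n := 2 * m + 1) (by omega) hp.le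
  obtain ⟨zα, -, -⟩ := near_saturation ht h hε0.le hε4 hpε hp0
    (by linarith) hz (n := m) (by omega) hα
  obtain ⟨zβ, -, -⟩ := near_saturation ht h hε0.le hε4 hpε hp0
    (by linarith) hz (n := 2 * m + 1) (by omega) hp.le
  set Gy := quadMean ht N H y with hGy
  set Gz := quadMean ht N H z with hGz
  have hGy0 : 0 < Gy := by
    have h1 := h.norm_twisted_le_quadMean ht N b y
    have h2 : 0 ≤ Gy := quadMean_nonneg ht N y
    by_contra hcon
    have : Gy = 0 := le_antisymm (not_lt.1 hcon) h2
    rw [← hGy] at h1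
    rw [this] at hy h1
    linarith
  have hGzy : Gz ≤ 3 * Gy := by
    have h1 := h.quadMean_compar ht N (abs_nonneg b) z y
    have h2 : Real.exp (1 / (1 + t) * (|b| * |(z : ℝ) - y|)) ≤ 3 := by
      rw [abs_sub_comm]
      refine (Real.exp_le_exp.2 (?_ : _ ≤ (1 : ℝ))).trans
        (Real.exp_one_lt_d9.le.trans (by norm_num))
      have : 1 / (1 + t) ≤ 1 := by rw [div_le_one (by linarith)]; linarith
      have h3 : 0 ≤ 1 / (1 + t) := by positivity
      nlinarith
    nlinarith
  set x := |b| * |(y : ℝ) - z| with hx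
  clear_value x Gy Gz
  have hxpos : 0 < x := hx₀.trans_le hx0
  have hMd : ∀ n, m ≤ n → ∀ w : unitInterval, M ≤ den t n w := by
    intro n hn w
    have h1 := one_add_le_den t n w
    have h2 : (m : ℝ) ≤ n := by exact_mod_cast hn
    have : t * (m + 1) ≤ t * (n + 1) := by gcongr
    rw [hM]; linarith
  have hdiff : ∀ n, m ≤ n → H (branch ht n y) ≤ 2 * Gy →
      ‖u (branch ht n y) - u (branch ht n z)‖ ≤ 6 * A * x / M ^ 2 * Gy := by
    intro n hn hH
    refine (h.diff _ _).trans ?_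
    rw [abs_branch_sub, ← hAdef]
    have h1 : |b| * (|(y : ℝ) - z| / (den t n y * den t n z)) ≤ x / M ^ 2 := by
      rw [← mul_div_assoc, ← hx, sq]
      have hy0 := den_pos ht n y
      exact div_le_div_of_nonneg_left (by positivity) (by positivity)
        (mul_le_mul (hMd n hn y) (hMd n hn z) (by linarith) hy0.le)
    have h2 : x / M ^ 2 ≤ 1 := by
      rw [div_le_one (by positivity)]; nlinarith
    have h3 : Real.exp (|b| * (|(y : ℝ) - z| / (den t n y * den t n z))) ≤ 3 :=
      (Real.exp_le_exp.2 (h1.trans h2)).trans (Real.exp_one_lt_d9.le.trans (by norm_num))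
    calc _ ≤ A * (x / M ^ 2) * 3 * (2 * Gy) := by
          have := h.nonneg (branch ht n y)
          have := den_pos ht n y
          have := den_pos ht n z
          gcongr
      _ = _ := by ring
  have hdα := hdiff m le_rfl yHα
  have hdβ := hdiff (2 * m + 1) (by omega) yHβ
  have hphase := log_den_diff_bounds m (by rw [← hM]; exact hM2) y z
  rw [← hM] at hphase
  set ly := Real.log (den t m y) - Real.log (den t (2 * m + 1) y) with hly
  set lz := Real.log (den t m z) - Real.log (den t (2 * m + 1) z) with hlz
  clear_value ly lz
  have hΩ1 : x / (6 * M) ≤ |b * ly - b * lz| := by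
    rw [← mul_sub, abs_mul, hx, mul_div_assoc]
    exact mul_le_mul_of_nonneg_left hphase.1 (abs_nonneg b)
  have hΩ2 : |b * ly - b * lz| ≤ 1 := by
    have h1 : |b * ly - b * lz| ≤ x / (2 * M) := by
      rw [← mul_sub, abs_mul, hx, mul_div_assoc]
      exact mul_le_mul_of_nonneg_left hphase.2 (abs_nonneg b)
    refine h1.trans ?_
    rw [div_le_one (by positivity)]; linarith
  have hphase2 := half_le_norm_exp_I_sub hΩ2
  have hE : ∀ w : unitInterval, ∀ G : ℝ,
      ‖Complex.exp ((b * Real.log (den t m w) : ℝ) * Complex.I) * u (branch ht m w) -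
        twisted ht N b u w‖ ≤ ε * G →
      ‖Complex.exp ((b * Real.log (den t (2 * m + 1) w) : ℝ) * Complex.I) *
        u (branch ht (2 * m + 1) w) - twisted ht N b u w‖ ≤ ε * G →
      ‖Complex.exp ((b * (Real.log (den t m w) - Real.log (den t (2 * m + 1) w)) : ℝ) *
        Complex.I) * u (branch ht m w) - u (branch ht (2 * m + 1) w)‖ ≤ 2 * ε * G := by
    intro w G h1 h2
    set eβ := Complex.exp ((b * Real.log (den t (2 * m + 1) w) : ℝ) * Complex.I) with heβ
    have h3 : ‖eβ‖ = 1 := by rw [heβ, Complex.norm_exp_ofReal_mul_I]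
    have h4 : Complex.exp ((b * Real.log (den t m w) : ℝ) * Complex.I) = eβ *
        Complex.exp ((b * (Real.log (den t m w) - Real.log (den t (2 * m + 1) w)) : ℝ) *
        Complex.I) := by
      rw [heβ, ← Complex.exp_add]
      congr 1; push_cast; ring
    rw [← one_mul ‖_ - _‖, ← h3, ← norm_mul, mul_sub, ← mul_assoc, ← h4]
    refine (norm_sub_le_norm_sub_add_norm_sub _ (twisted ht N b u w) _).trans ?_
    rw [norm_sub_rev (twisted ht N b u w)]
    linarith
  have hEy := hE y Gy yα yβ
  have hEz := hE z Gz zα zβ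
  rw [← hly] at hEy
  rw [← hlz] at hEz
  clear hE hdiff hMd yα yβ zα zβ
  set X1 := u (branch ht m y)
  set X2 := u (branch ht m z)
  set Z1 := u (branch ht (2 * m + 1) y)
  set Z2 := u (branch ht (2 * m + 1) z)
  set w1 := Complex.exp ((b * ly : ℝ) * Complex.I) with hw1
  set w2 := Complex.exp ((b * lz : ℝ) * Complex.I) with hw2
  have hw2n : ‖w2‖ = 1 := by rw [hw2, Complex.norm_exp_ofReal_mul_I]
  clear_value X1 X2 Z1 Z2 w1 w2
  have hid : (w1 - w2) * X1 = (w1 * X1 - Z1) - (w2 * X2 - Z2) + ((Z1 - Z2) - w2 * (X1 - X2)) := by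
    ring
  have hn1 : ‖(w1 - w2) * X1‖ ≤ 2 * ε * Gy + 2 * ε * Gz + (6 * A * x / M ^ 2 * Gy +
      6 * A * x / M ^ 2 * Gy) := by
    rw [hid]
    refine (norm_add_le _ _).trans (add_le_add ((norm_sub_le _ _).trans (add_le_add hEy hEz))
      ((norm_sub_le _ _).trans (add_le_add hdβ ?_)))
    rw [norm_mul, hw2n, one_mul]; exact hdα
  have hn2 : x / (6 * M) / 2 * (Gy / 2) ≤ ‖(w1 - w2) * X1‖ := by
    rw [norm_mul]
    have : x / (6 * M) / 2 ≤ ‖w1 - w2‖ := by linarith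
    gcongr
  have hfin : x / (24 * M) * Gy ≤ (8 * ε + 12 * A * x / M ^ 2) * Gy := by
    have e1 : x / (6 * M) / 2 * (Gy / 2) = x / (24 * M) * Gy := by ring
    have e2 : 2 * ε * Gz ≤ 2 * ε * (3 * Gy) := by gcongr
    rw [← e1]
    refine (hn2.trans hn1).trans ?_
    have e3 : (8 * ε + 12 * A * x / M ^ 2) * Gy = 2 * ε * Gy + 2 * ε * (3 * Gy) +
      (6 * A * x / M ^ 2 * Gy + 6 * A * x / M ^ 2 * Gy) := by ring
    rw [e3]; linarith
  have hfin2 := le_of_mul_le_mul_right hfin hGy0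
  have e4 : 12 * A * x / M ^ 2 ≤ x / (48 * M) := by
    rw [div_le_div_iff₀ (by positivity) (by positivity)]
    have : 0 ≤ x * M := by positivity
    nlinarith [mul_le_mul_of_nonneg_left hMA this]
  have e5 : x / (24 * M) = 2 * (x / (48 * M)) := by ring
  have e6 : x / (48 * M) ≤ 8 * ε := by linarith
  rw [div_le_iff₀ (by positivity)] at e6
  have e7 : 0 < ε * M := mul_pos hε0 (by linarith)
  linarith

end Lyons

namespace Lyons

open Finset

/-- `φ` is a Möbius self-map of the unit interval whose derivative at `0` is `1 / d ^ 2`. -/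
structure Node (t : ℝ) (φ : unitInterval → unitInterval) (d ρ : ℝ) : Prop where
  d_pos : 0 < d
  rho_nonneg : 0 ≤ ρ
  rho_le : ρ ≤ 1 / (1 + t)
  sub_eq : ∀ r s : unitInterval,
    (φ r : ℝ) - φ s = ((r : ℝ) - s) / (d ^ 2 * ((1 - ρ * r) * (1 - ρ * s)))

/-- The distortion constant of the branches. -/
noncomputable def distConst (t : ℝ) : ℝ := (t / (1 + t)) ^ 2

lemma distConst_pos {t : ℝ} (ht : 0 < t) : 0 < distConst t := by
  unfold distConst; positivity

lemma distConst_le_one {t : ℝ} (ht : 0 < t) : distConst t ≤ 1 := by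
  unfold distConst
  apply pow_le_one₀ (by positivity)
  rw [div_le_one (by positivity)]; linarith

lemma node_id {t : ℝ} (ht : 0 < t) : Node t (fun z => z) 1 0 where
  d_pos := one_pos
  rho_nonneg := le_rfl
  rho_le := by positivity
  sub_eq r s := by simp

lemma Node.one_sub_ge {t : ℝ} (ht : 0 < t) {φ : unitInterval → unitInterval} {d ρ : ℝ}
    (h : Node t φ d ρ) (r : unitInterval) : t / (1 + t) ≤ 1 - ρ * r := by
  have h1 : ρ * r ≤ 1 / (1 + t) := by
    have := h.rho_le
    have := h.rho_nonneg
    nlinarith [r.2.1, r.2.2]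
  have : t / (1 + t) = 1 - 1 / (1 + t) := by field_simp; ring
  linarith

lemma Node.rho_le_one {t : ℝ} (ht : 0 < t) {φ : unitInterval → unitInterval} {d ρ : ℝ}
    (h : Node t φ d ρ) : ρ ≤ 1 :=
  h.rho_le.trans (by rw [div_le_one (by positivity)]; linarith)

lemma Node.abs_sub_le {t : ℝ} (ht : 0 < t) {φ : unitInterval → unitInterval} {d ρ : ℝ}
    (h : Node t φ d ρ) (r s : unitInterval) :
    |(φ r : ℝ) - φ s| ≤ |(r : ℝ) - s| / (d ^ 2 * distConst t) := by
  have hd := h.d_pos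
  have hr := h.one_sub_ge ht r
  have hs := h.one_sub_ge ht s
  have h0 : 0 < t / (1 + t) := by positivity
  rw [h.sub_eq, abs_div, abs_of_pos (mul_pos (pow_pos hd 2)
    (mul_pos (h0.trans_le hr) (h0.trans_le hs)))]
  refine div_le_div_of_nonneg_left (abs_nonneg _) (mul_pos (pow_pos hd 2) (distConst_pos ht)) ?_
  refine mul_le_mul_of_nonneg_left ?_ (by positivity)
  rw [distConst, sq]
  exact mul_le_mul hr hs h0.le (h0.le.trans hr)

lemma Node.le_abs_sub {t : ℝ} (ht : 0 < t) {φ : unitInterval → unitInterval} {d ρ : ℝ}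
    (h : Node t φ d ρ) (r s : unitInterval) :
    |(r : ℝ) - s| / d ^ 2 ≤ |(φ r : ℝ) - φ s| := by
  have hd := h.d_pos
  have hr := h.one_sub_ge ht r
  have hs := h.one_sub_ge ht s
  have h0 : 0 < t / (1 + t) := by positivity
  have hr1 : 1 - ρ * r ≤ 1 := by have := mul_nonneg h.rho_nonneg r.2.1; linarith
  have hs1 : 1 - ρ * s ≤ 1 := by have := mul_nonneg h.rho_nonneg s.2.1; linarith
  have hp := mul_pos (h0.trans_le hr) (h0.trans_le hs)
  rw [h.sub_eq, abs_div, abs_of_pos (mul_pos (pow_pos hd 2) hp)]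
  refine div_le_div_of_nonneg_left (abs_nonneg _) (mul_pos (pow_pos hd 2) hp) ?_
  refine mul_le_of_le_one_right (by positivity) ?_
  exact mul_le_one₀ hr1 (h0.le.trans hs) hs1

lemma Node.comp {t : ℝ} (ht : 0 < t) {φ : unitInterval → unitInterval} {d ρ : ℝ}
    (h : Node t φ d ρ) (n : ℕ) :
    Node t (fun z => φ (branch ht n z)) (d * (2 + t * (n + 1) - ρ))
      (1 / (2 + t * (n + 1) - ρ)) := by
  have hρ := h.rho_le_one ht
  have hd := h.d_pos
  have h0 : 0 ≤ t * n := by positivity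
  have ha : 1 + t ≤ 2 + t * (n + 1) - ρ := by linarith
  refine ⟨mul_pos hd (by linarith), div_nonneg zero_le_one (by linarith),
    one_div_le_one_div_of_le (by linarith) ha, fun r s => ?_⟩
  rw [h.sub_eq, branch_sub, branch_coe, branch_coe]
  have hr := den_pos ht n r
  have hs := den_pos ht n s
  set a := 2 + t * (n + 1) - ρ with had
  have ha0 : 0 < a := by linarith
  have hr1 : 0 < a - r := by have := r.2.2; linarith
  have hs1 : 0 < a - s := by have := s.2.2; linarith
  have e1 : 1 - ρ * (1 / den t n r) = (a - r) / den t n r := by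
    field_simp; rw [den, had]; ring
  have e2 : 1 - ρ * (1 / den t n s) = (a - s) / den t n s := by
    field_simp; rw [den, had]; ring
  have e3 : 1 - 1 / a * r = (a - r) / a := by field_simp
  have e4 : 1 - 1 / a * s = (a - s) / a := by field_simp
  rw [e1, e2, e3, e4]
  field_simp

lemma avg_sub {t : ℝ} (ht : 0 < t) (N : ℕ) (f g : unitInterval → ℝ) :
    avg ht N (fun y => f y - g y) = fun y => avg ht N f y - avg ht N g y := by
  funext y
  simp only [avg, mul_sub, sum_sub_distrib]

lemma wt_mul_le_avg {t : ℝ} (ht : 0 < t) {N : ℕ} {f : unitInterval → ℝ} (hf : ∀ y, 0 ≤ f y)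
    {n : ℕ} (hn : n < N) (y : unitInterval) : wt n * f (branch ht n y) ≤ avg ht N f y :=
  single_le_sum (f := fun n => wt n * f (branch ht n y))
    (fun i _ => mul_nonneg (wt_pos i).le (hf _)) (mem_range.2 hn)

/-- A definite proportion of the mass is lost below any node of bounded frequency. -/
lemma exists_terminal_gain {t : ℝ} (ht : 0 < t) :
    ∃ N₀ : ℕ, ∃ c > 0, c ≤ 1 ∧ ∀ N ≥ N₀, ∀ (b : ℝ) (u : unitInterval → ℂ)
      (H : unitInterval → ℝ), Maj t |b| u H → ∀ φ d ρ, Node t φ d ρ →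
      distConst t / 8 / 81 ≤ |b| / d ^ 2 → |b| / d ^ 2 ≤ distConst t / 8 → ∀ y,
      (avg ht N)^[2] (fun z => nextMaj ht N b u H (φ z) ^ 2) y ≤
        (1 - c) * (avg ht N)^[2] (fun z => quadMean ht N H (φ z) ^ 2) y := by
  have hC := distConst_pos ht
  have hC1 := distConst_le_one ht
  set C := distConst t with hCd
  set g := t / ((2 + t) * (2 + 2 * t)) with hg
  have hg0 : 0 < g := by positivity
  have hg1 : g ≤ 1 := by rw [hg, div_le_one (by positivity)]; nlinarith
  obtain ⟨N₀, η₀, hη0, hη1, hcan⟩ := exists_cancellation ht (x₀ := C / 8 / 81 * g) (by positivity)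
  obtain ⟨δ, hδ, η, hη, hη1, hloc⟩ := exists_local_gain ht hη0 hη1
  obtain ⟨m, hm⟩ := exists_nat_ge (1 / (δ * t))
  have hmt : 1 ≤ δ * (1 + t * (m + 1)) := by
    rw [div_le_iff₀ (by positivity)] at hm
    nlinarith [mul_pos hδ ht]
  have hwt1 : ∀ n, wt n ≤ 1 := fun n => pow_le_one₀ (by norm_num) (by norm_num)
  refine ⟨max N₀ (m + 2), wt 1 * wt m * η / 3, ?_, ?_, ?_⟩
  · have := wt_pos 1
    have := wt_pos m
    positivity
  · have h1 : wt 1 * wt m ≤ 1 := mul_le_one₀ (hwt1 1) (wt_pos m).le (hwt1 m)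
    have h2 : wt 1 * wt m * η ≤ 1 := mul_le_one₀ h1 hη.le hη1.le
    linarith
  intro N hN b u H h φ d ρ hφ hκ1 hκ2 y
  have hN1 : N₀ ≤ N := (le_max_left _ _).trans hN
  have hN2 : m + 2 ≤ N := (le_max_right _ _).trans hN
  have hd := hφ.d_pos
  have hdist : ∀ r s : unitInterval, |b| * |(φ r : ℝ) - φ s| ≤ 1 / 8 * |(r : ℝ) - s| := by
    intro r s
    calc |b| * |(φ r : ℝ) - φ s| ≤ |b| * (|(r : ℝ) - s| / (d ^ 2 * C)) :=
          mul_le_mul_of_nonneg_left (hφ.abs_sub_le ht r s) (abs_nonneg b)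
      _ = |b| / d ^ 2 * (|(r : ℝ) - s| / C) := by field_simp
      _ ≤ C / 8 * (|(r : ℝ) - s| / C) := by gcongr
      _ = _ := by field_simp
  have hle1 : ∀ r s : unitInterval, |(r : ℝ) - s| ≤ 1 := by
    intro r s
    rw [abs_le]
    constructor <;> linarith [r.2.1, r.2.2, s.2.1, s.2.2]
  have hgap : |(branch ht 0 0 : ℝ) - branch ht 1 0| = g := by
    rw [branch_coe, branch_coe, den, den, hg]
    simp only [Set.Icc.coe_zero, Nat.cast_zero, Nat.cast_one]
    have e1 : 2 + t * (0 + 1) - 0 = 2 + t := by ring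
    have e2 : 2 + t * (1 + 1) - 0 = 2 + 2 * t := by ring
    rw [e1, e2, div_sub_div _ _ (by positivity) (by positivity), abs_of_nonneg]
    · congr 1; ring
    · apply div_nonneg _ (by positivity)
      linarith
  have hs : ∃ e, e ≤ 1 ∧ ‖twisted ht N b u (φ (branch ht e 0))‖ ≤
      (1 - η₀) * quadMean ht N H (φ (branch ht e 0)) := by
    have hlow : C / 8 / 81 * g ≤
        |b| * |(φ (branch ht 0 0) : ℝ) - φ (branch ht 1 0)| := by
      have h2 := mul_le_mul_of_nonneg_left
        (hφ.le_abs_sub ht (branch ht 0 0) (branch ht 1 0)) (abs_nonneg b)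
      rw [hgap] at h2
      refine le_trans ?_ h2
      have : |b| * (g / d ^ 2) = |b| / d ^ 2 * g := by ring
      rw [this]; gcongr
    have hupp : |b| * |(φ (branch ht 0 0) : ℝ) - φ (branch ht 1 0)| ≤ 1 := by
      refine (hdist _ _).trans ?_
      rw [hgap]; linarith
    rcases hcan N hN1 b u H h _ _ hlow hupp with h1 | h1
    · exact ⟨0, by norm_num, h1⟩
    · exact ⟨1, le_rfl, h1⟩
  obtain ⟨e, he, hse⟩ := hs
  have hcell : ∀ r : unitInterval, nextMaj ht N b u H (φ (branch ht e (branch ht m r))) ≤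
      (1 - η) * quadMean ht N H (φ (branch ht e (branch ht m r))) := by
    intro r
    refine hloc N b u H h _ hse _ ?_
    have h1 : |(branch ht e (branch ht m r) : ℝ) - branch ht e 0| ≤ δ := by
      refine (abs_branch_sub_le ht e _ _).trans ?_
      have h2 : (branch ht m r : ℝ) ≤ δ := by
        rw [branch_coe, div_le_iff₀ (den_pos ht m r)]
        exact hmt.trans (mul_le_mul_of_nonneg_left (one_add_le_den t m r) hδ.le)
      rw [Set.Icc.coe_zero, sub_zero, abs_of_nonneg (branch ht m r).2.1]
      refine le_trans (mul_le_of_le_one_left (branch ht m r).2.1 ?_) h2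
      rw [div_le_one (by linarith)]; linarith
    have := hdist (branch ht e (branch ht m r)) (branch ht e 0)
    linarith
  have hnn := fun z => quadMean_nonneg ht N (H := H) z
  have hnext0 : ∀ z, 0 ≤ nextMaj ht N b u H z := (h.next ht N b).nonneg
  have hcomp : ∀ r s : unitInterval,
      quadMean ht N H (φ r) ^ 2 ≤ 3 * quadMean ht N H (φ s) ^ 2 := by
    intro r s
    have h1 := h.quadMean_compar ht N (abs_nonneg b) (φ r) (φ s)
    have h2 : 1 / (1 + t) * (|b| * |(φ r : ℝ) - φ s|) ≤ 1 / 8 := by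
      have h3 : 1 / (1 + t) ≤ 1 := by rw [div_le_one (by linarith)]; linarith
      have h4 := hdist r s
      have h5 := hle1 r s
      refine (mul_le_of_le_one_left (by positivity) h3).trans (by linarith)
    have h3 : quadMean ht N H (φ r) ≤ quadMean ht N H (φ s) * Real.exp (1 / 8) :=
      h1.trans (mul_le_mul_of_nonneg_left (Real.exp_le_exp.2 h2) (hnn _))
    have h4 := pow_le_pow_left₀ (hnn _) h3 2
    rw [mul_pow, ← Real.exp_nat_mul] at h4
    have h5 : Real.exp (((2 : ℕ) : ℝ) * (1 / 8)) ≤ 3 :=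
      (Real.exp_le_exp.2 (by norm_num : ((2 : ℕ) : ℝ) * (1 / 8) ≤ 1)).trans
        (Real.exp_one_lt_d9.le.trans (by norm_num))
    nlinarith [sq_nonneg (quadMean ht N H (φ s))]
  set f : unitInterval → ℝ := fun z =>
    quadMean ht N H (φ z) ^ 2 - nextMaj ht N b u H (φ z) ^ 2 with hf
  have hf0 : ∀ z, 0 ≤ f z := fun z =>
    sub_nonneg.2 (pow_le_pow_left₀ (hnext0 _) (h.nextMaj_le ht N b _) 2)
  have hit : (avg ht N)^[2] (fun z => quadMean ht N H (φ z) ^ 2) y -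
      (avg ht N)^[2] (fun z => nextMaj ht N b u H (φ z) ^ 2) y = avg ht N (avg ht N f) y := by
    rw [hf, avg_sub, avg_sub]; rfl
  have hlow : wt m * (wt e * f (branch ht e (branch ht m y))) ≤ avg ht N (avg ht N f) y :=
    (mul_le_mul_of_nonneg_left (wt_mul_le_avg ht hf0 (by omega) _) (wt_pos m).le).trans
      (wt_mul_le_avg ht (avg_nonneg ht N hf0) (by omega) y)
  set q := quadMean ht N H (φ (branch ht e (branch ht m y))) with hq
  have hfq : η * q ^ 2 ≤ f (branch ht e (branch ht m y)) := by
    have h1 := pow_le_pow_left₀ (hnext0 _) (hcell y) 2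
    have h2 : f (branch ht e (branch ht m y)) = q ^ 2 -
      nextMaj ht N b u H (φ (branch ht e (branch ht m y))) ^ 2 := rfl
    rw [h2]
    nlinarith [mul_nonneg (mul_nonneg hη.le (sub_nonneg.2 hη1.le)) (sq_nonneg q)]
  have hQ : (avg ht N)^[2] (fun z => quadMean ht N H (φ z) ^ 2) y ≤ 3 * q ^ 2 :=
    avg_iterate_le_of_le ht N 2 (by positivity) (fun z => hcomp z _) y
  have hwe : wt 1 ≤ wt e := pow_le_pow_of_le_one (by norm_num) (by norm_num) (by omega)
  have hfin : wt 1 * wt m * η / 3 * (avg ht N)^[2] (fun z => quadMean ht N H (φ z) ^ 2) y ≤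
      avg ht N (avg ht N f) y := by
    refine le_trans ?_ hlow
    have hw1 := wt_pos 1
    have hwm := wt_pos m
    calc wt 1 * wt m * η / 3 * (avg ht N)^[2] (fun z => quadMean ht N H (φ z) ^ 2) y
        ≤ wt 1 * wt m * η / 3 * (3 * q ^ 2) := mul_le_mul_of_nonneg_left hQ (by positivity)
      _ = wt m * (wt 1 * (η * q ^ 2)) := by ring
      _ ≤ _ := mul_le_mul_of_nonneg_left (mul_le_mul hwe hfq (by positivity) (wt_pos e).le) hwm.le
  linarith

end Lyons

namespace Lyons

open Finset

/-- If some branches below a node overshoot the terminal range of frequencies, then a sibling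
branch in the terminal range carries at least as much mass as all of them together. -/
lemma overshoot_sum_le {t : ℝ} (ht : 0 < t) (ht1 : t < 1) (N : ℕ) {Q : unitInterval → ℝ} {b : ℝ}
    (hQ0 : ∀ y, 0 ≤ Q y)
    (hQ : ∀ y z : unitInterval, Q y ≤ Q z * Real.exp (2 * (|b| * |(y : ℝ) - z|)))
    {φ : unitInterval → unitInterval} {d ρ : ℝ} (hφ : Node t φ d ρ)
    (hκ : distConst t / 8 < |b| / d ^ 2) {J : Finset ℕ} (hJN : J ⊆ range N)
    (hJ : ∀ n ∈ J, |b| / (d * (2 + t * (n + 1) - ρ)) ^ 2 < distConst t / 8 / 81)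
    (hne : J.Nonempty) :
    ∃ k < N, k ∉ J ∧ distConst t / 8 / 81 ≤ |b| / (d * (2 + t * (k + 1) - ρ)) ^ 2 ∧
      |b| / (d * (2 + t * (k + 1) - ρ)) ^ 2 ≤ distConst t / 8 ∧
      ∀ L y, ∑ n ∈ J, wt n * (avg ht N)^[L] (fun z => Q (φ (branch ht n z))) y ≤
        wt k * (avg ht N)^[L] (fun z => Q (φ (branch ht k z))) y := by
  have hC := distConst_pos ht
  set C := distConst t with hCd
  set a : ℕ → ℝ := fun n => 2 + t * (n + 1) - ρ with ha
  have hρ := hφ.rho_le_one ht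
  have hρ0 := hφ.rho_nonneg
  have hd := hφ.d_pos
  have ha1 : ∀ n, 1 < a n := fun n => by
    have : 0 ≤ t * n := by positivity
    simp only [ha]; linarith
  set κ := |b| / d ^ 2 with hκd
  have hκ0 : 0 < κ := lt_trans (by positivity) hκ
  have hdiv : ∀ n : ℕ, |b| / (d * (2 + t * (n + 1) - ρ)) ^ 2 = κ / a n ^ 2 := fun n => by
    rw [mul_pow, hκd, div_div]
  simp only [hdiv] at hJ ⊢
  classical
  have hex : ∃ n, κ / a n ^ 2 ≤ C / 8 := by
    obtain ⟨j, hj⟩ := hne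
    exact ⟨j, (hJ j hj).le.trans (by linarith)⟩
  set k := Nat.find hex with hk
  have hk1 : κ / a k ^ 2 ≤ C / 8 := Nat.find_spec hex
  have hkmin : ∀ n < k, C / 8 < κ / a n ^ 2 := fun n hn => not_le.1 (Nat.find_min hex hn)
  have hkJ : ∀ j ∈ J, k ≤ j := fun j hj => Nat.find_min' hex ((hJ j hj).le.trans (by linarith))
  have hak := ha1 k
  have hk2 : C / 8 / 9 ≤ κ / a k ^ 2 := by
    rw [le_div_iff₀ (by positivity)]
    rcases Nat.eq_zero_or_pos k with h0 | h0
    · have h3 : a k ≤ 3 := by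
        simp only [ha, h0]; push_cast; linarith
      have h9 : a k ^ 2 ≤ 9 := by nlinarith
      calc C / 8 / 9 * a k ^ 2 ≤ C / 8 / 9 * 9 := by gcongr
        _ ≤ κ := by linarith
    · have h1 := hkmin (k - 1) (by omega)
      have h2 : a k = a (k - 1) + t := by
        simp only [ha]; rw [Nat.cast_sub h0]; push_cast; ring
      have h3 := ha1 (k - 1)
      rw [lt_div_iff₀ (by positivity)] at h1
      have h4 : a k ^ 2 ≤ 4 * a (k - 1) ^ 2 := by rw [h2]; nlinarith
      calc C / 8 / 9 * a k ^ 2 ≤ C / 8 / 9 * (4 * a (k - 1) ^ 2) := by gcongr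
        _ ≤ C / 8 * a (k - 1) ^ 2 := by
          have : 0 ≤ C / 8 * a (k - 1) ^ 2 := by positivity
          linarith
        _ ≤ κ := h1.le
  have hknotJ : k ∉ J := fun h => by
    have := hJ k h
    linarith
  have hkN : k < N := by
    obtain ⟨j, hj⟩ := hne
    exact (hkJ j hj).trans_lt (mem_range.1 (hJN hj))
  refine ⟨k, hkN, hknotJ, by linarith, hk1, fun L y => ?_⟩
  set X := (avg ht N)^[L] (fun z => Q (φ (branch ht k z))) y with hX
  have hX0 : 0 ≤ X := avg_iterate_nonneg ht N L (fun z => hQ0 _) y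
  have hgapj : ∀ j ∈ J, 2 * a k < (j : ℝ) - k := by
    intro j hj
    have h1 := hJ j hj
    have h2 := ha1 j
    have h3 : 9 * a k ^ 2 < a j ^ 2 := by
      rw [div_lt_iff₀ (by positivity)] at h1
      rw [le_div_iff₀ (by positivity)] at hk2
      have : C / 8 / 81 * (9 * a k ^ 2) < C / 8 / 81 * a j ^ 2 := by linarith
      exact lt_of_mul_lt_mul_left this (by positivity)
    have h4 : 3 * a k < a j := by
      refine lt_of_pow_lt_pow_left₀ 2 (by linarith) ?_
      rw [mul_pow]; linarith
    have h5 : a j - a k = t * ((j : ℝ) - k) := by simp only [ha]; ring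
    have h6 : (0 : ℝ) ≤ (j : ℝ) - k := sub_nonneg.2 (by exact_mod_cast hkJ j hj)
    nlinarith
  set q := ⌊2 * a k⌋₊ with hq
  have hq2 : 2 ≤ q := Nat.le_floor (by push_cast; linarith)
  have hqlt : 2 * a k < q + 1 := Nat.lt_floor_add_one _
  have hsum : ∑ n ∈ J, wt n ≤ wt k * (1 / 2) ^ q := by
    refine (sum_wt_tail N (k + 1 + q) J hJN fun j hj => ?_).trans (le_of_eq ?_)
    · have h1 := hgapj j hj
      have h2 := Nat.floor_le (a := 2 * a k) (by linarith)
      rw [← hq] at h2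
      have h3 : ((q + k : ℕ) : ℝ) < j := by push_cast; linarith
      have h4 : q + k < j := by exact_mod_cast h3
      omega
    · rw [wt, pow_add]
  have hcomp : ∀ j ∈ J, (avg ht N)^[L] (fun z => Q (φ (branch ht j z))) y ≤ 2 ^ q * X := by
    intro j hj
    rw [hX, ← congrFun (avg_iterate_const_mul ht N ((2 : ℝ) ^ q) L _) y]
    refine avg_iterate_mono ht N L (fun z => ?_) y
    refine (hQ _ (φ (branch ht k z))).trans ?_
    rw [mul_comm]
    refine mul_le_mul_of_nonneg_right ?_ (hQ0 _)
    have hden : ∀ n, k ≤ n → (branch ht n z : ℝ) ≤ 2 / a k := by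
      intro n hn
      rw [branch_coe, div_le_div_iff₀ (den_pos ht n z) (by linarith)]
      have h1 := one_add_le_den t n z
      have h2 : t * (k + 1 : ℝ) ≤ t * (n + 1) := by
        have : (k : ℝ) ≤ n := by exact_mod_cast hn
        gcongr
      have h3 : a k ≤ 2 * (1 + t * (k + 1)) := by
        have : 0 ≤ t * (k + 1 : ℝ) := by positivity
        simp only [ha]; linarith
      linarith
    have hb : |(branch ht j z : ℝ) - branch ht k z| ≤ 2 / a k := by
      have h1 := hden j (hkJ j hj)
      have h2 := hden k le_rfl
      rw [abs_le]
      constructor <;> linarith [(branch ht j z).2.1, (branch ht k z).2.1]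
    have h1 : |b| * |(φ (branch ht j z) : ℝ) - φ (branch ht k z)| ≤ a k / 4 := by
      calc |b| * |(φ (branch ht j z) : ℝ) - φ (branch ht k z)|
          ≤ |b| * ((2 / a k) / (d ^ 2 * C)) := by
            refine mul_le_mul_of_nonneg_left ((hφ.abs_sub_le ht _ _).trans ?_) (abs_nonneg b)
            gcongr
        _ = κ * (2 / (a k * C)) := by rw [hκd]; field_simp
        _ ≤ (C / 8 * a k ^ 2) * (2 / (a k * C)) := by
            refine mul_le_mul_of_nonneg_right ?_ (by positivity)
            rwa [div_le_iff₀ (by positivity)] at hk1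
        _ = a k / 4 := by field_simp; norm_num
    have h2 : 2 * (|b| * |(φ (branch ht j z) : ℝ) - φ (branch ht k z)|) ≤ q * (1 / 2) := by
      have : (2 : ℝ) ≤ q := by exact_mod_cast hq2
      linarith
    refine (Real.exp_le_exp.2 h2).trans ?_
    rw [Real.exp_nat_mul]
    refine pow_le_pow_left₀ (Real.exp_pos _).le ?_ q
    have h3 := Real.exp_bound_div_one_sub_of_interval (x := 1 / 2) (by norm_num) (by norm_num)
    refine h3.trans (by norm_num)
  calc ∑ n ∈ J, wt n * (avg ht N)^[L] (fun z => Q (φ (branch ht n z))) y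
      ≤ ∑ n ∈ J, wt n * (2 ^ q * X) :=
        sum_le_sum fun n hn => mul_le_mul_of_nonneg_left (hcomp n hn) (wt_pos n).le
    _ = (∑ n ∈ J, wt n) * (2 ^ q * X) := by rw [sum_mul]
    _ ≤ (wt k * (1 / 2) ^ q) * (2 ^ q * X) := mul_le_mul_of_nonneg_right hsum (by positivity)
    _ = wt k * X * ((1 / 2) ^ q * 2 ^ q) := by ring
    _ = _ := by rw [← mul_pow]; norm_num

/-- A proportional loss on terminal nodes gives a proportional loss on all nodes. -/
lemma tree_gain {t : ℝ} (ht : 0 < t) (ht1 : t < 1) (N : ℕ) {Q R : unitInterval → ℝ} {b c : ℝ}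
    (hc0 : 0 < c) (hR0 : ∀ y, 0 ≤ R y) (hRQ : ∀ y, R y ≤ Q y)
    (hQ : ∀ y z : unitInterval, Q y ≤ Q z * Real.exp (2 * (|b| * |(y : ℝ) - z|)))
    (hterm : ∀ φ d ρ, Node t φ d ρ →
      distConst t / 8 / 81 ≤ |b| / d ^ 2 → |b| / d ^ 2 ≤ distConst t / 8 → ∀ y,
      (avg ht N)^[2] (fun z => R (φ z)) y ≤ (1 - c) * (avg ht N)^[2] (fun z => Q (φ z)) y)
    (l : ℕ) : ∀ φ d ρ, Node t φ d ρ → distConst t / 8 / 81 ≤ |b| / d ^ 2 →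
      |b| / d ^ 2 ≤ distConst t / 8 * (1 + t) ^ (2 * l) → ∀ L ≥ l + 2, ∀ y,
      (avg ht N)^[L] (fun z => R (φ z)) y ≤ (1 - c / 2) * (avg ht N)^[L] (fun z => Q (φ z)) y := by
  have hC := distConst_pos ht
  have hQ0 : ∀ y, 0 ≤ Q y := fun y => (hR0 y).trans (hRQ y)
  have hterm' : ∀ φ d ρ, Node t φ d ρ →
      distConst t / 8 / 81 ≤ |b| / d ^ 2 → |b| / d ^ 2 ≤ distConst t / 8 → ∀ L ≥ 2, ∀ y,
      (avg ht N)^[L] (fun z => R (φ z)) y ≤ (1 - c) * (avg ht N)^[L] (fun z => Q (φ z)) y := by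
    intro φ d ρ hφ h1 h2 L hL y
    obtain ⟨m, rfl⟩ : ∃ m, L = m + 2 := ⟨L - 2, by omega⟩
    rw [Function.iterate_add_apply, Function.iterate_add_apply,
      ← congrFun (avg_iterate_const_mul ht N (1 - c) m _) y]
    exact avg_iterate_mono ht N m (hterm φ d ρ hφ h1 h2) y
  have hweak : ∀ φ d ρ, Node t φ d ρ →
      distConst t / 8 / 81 ≤ |b| / d ^ 2 → |b| / d ^ 2 ≤ distConst t / 8 → ∀ L ≥ 2, ∀ y,
      (avg ht N)^[L] (fun z => R (φ z)) y ≤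
        (1 - c / 2) * (avg ht N)^[L] (fun z => Q (φ z)) y := by
    intro φ d ρ hφ h1 h2 L hL y
    refine (hterm' φ d ρ hφ h1 h2 L hL y).trans
      (mul_le_mul_of_nonneg_right (by linarith) (avg_iterate_nonneg ht N L (fun z => hQ0 _) y))
  induction l with
  | zero =>
    intro φ d ρ hφ h1 h2 L hL y
    exact hweak φ d ρ hφ h1 (by simpa using h2) L hL y
  | succ l ih =>
    intro φ d ρ hφ h1 h2 L hL y
    rcases le_or_gt (|b| / d ^ 2) (distConst t / 8) with hκ | hκ
    · exact hweak φ d ρ hφ h1 hκ L (by omega) y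
    obtain ⟨L, rfl⟩ : ∃ m, L = m + 1 := ⟨L - 1, by omega⟩
    have hd := hφ.d_pos
    have hρ := hφ.rho_le_one ht
    classical
    set J := (range N).filter
      (fun n : ℕ => |b| / (d * (2 + t * (n + 1) - ρ)) ^ 2 < distConst t / 8 / 81) with hJ
    set X : ℕ → ℝ := fun n => (avg ht N)^[L] (fun z => Q (φ (branch ht n z))) y with hX
    set Y : ℕ → ℝ := fun n => (avg ht N)^[L] (fun z => R (φ (branch ht n z))) y with hY
    have hX0 : ∀ n, 0 ≤ X n := fun n => avg_iterate_nonneg ht N L (fun z => hQ0 _) y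
    have hYX : ∀ n, Y n ≤ X n := fun n => avg_iterate_mono ht N L (fun z => hRQ _) y
    have hgood : ∀ n ∈ range N, n ∉ J → Y n ≤ (1 - c / 2) * X n := by
      intro n hn hnJ
      have h3 : distConst t / 8 / 81 ≤ |b| / (d * (2 + t * (n + 1) - ρ)) ^ 2 := by
        by_contra hcon
        exact hnJ (mem_filter.2 ⟨hn, not_le.1 hcon⟩)
      refine ih _ _ _ (hφ.comp ht n) h3 ?_ L (by omega) y
      have h4 : 1 + t ≤ 2 + t * (n + 1) - ρ := by
        have : 0 ≤ t * n := by positivity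
        linarith
      have h5 : (1 + t) ^ 2 ≤ (2 + t * (n + 1) - ρ) ^ 2 := pow_le_pow_left₀ (by linarith) h4 2
      rw [mul_pow, ← div_div, div_le_iff₀ (lt_of_lt_of_le (by positivity) h5)]
      calc |b| / d ^ 2 ≤ distConst t / 8 * (1 + t) ^ (2 * (l + 1)) := h2
        _ = distConst t / 8 * (1 + t) ^ (2 * l) * (1 + t) ^ 2 := by ring
        _ ≤ _ := mul_le_mul_of_nonneg_left h5 (by positivity)
    rw [avg_iterate_succ_comp ht N L R φ y, avg_iterate_succ_comp ht N L Q φ y]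
    change ∑ n ∈ range N, wt n * Y n ≤ (1 - c / 2) * ∑ n ∈ range N, wt n * X n
    rcases J.eq_empty_or_nonempty with hJe | hne
    · rw [mul_sum]
      refine sum_le_sum fun n hn => ?_
      have := mul_le_mul_of_nonneg_left (hgood n hn (by simp [hJe])) (wt_pos n).le
      linarith
    · have hJN : J ⊆ range N := filter_subset _ _
      obtain ⟨k, hkN, hkJ, hk1, hk2, hk3⟩ := overshoot_sum_le ht ht1 N hQ0 hQ hφ hκ hJN
        (fun n hn => (mem_filter.1 hn).2) hne
      have hk := hterm' _ _ _ (hφ.comp ht k) hk1 hk2 L (by omega) y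
      have hk3' : ∑ n ∈ J, wt n * X n ≤ wt k * X k := hk3 L y
      have hkm : k ∈ range N \ J := mem_sdiff.2 ⟨mem_range.2 hkN, hkJ⟩
      have hsplit : ∀ f : ℕ → ℝ, ∑ n ∈ range N, f n =
          ∑ n ∈ (range N \ J).erase k, f n + f k + ∑ n ∈ J, f n := by
        intro f
        rw [sum_erase_add _ _ hkm, sum_sdiff hJN]
      rw [hsplit, hsplit (fun n => wt n * X n)]
      have e1 : ∑ n ∈ (range N \ J).erase k, wt n * Y n ≤
          (1 - c / 2) * ∑ n ∈ (range N \ J).erase k, wt n * X n := by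
        rw [mul_sum]
        refine sum_le_sum fun n hn => ?_
        have hn' := mem_sdiff.1 (mem_of_mem_erase hn)
        have := mul_le_mul_of_nonneg_left (hgood n hn'.1 hn'.2) (wt_pos n).le
        linarith
      have e2 : wt k * Y k ≤ wt k * ((1 - c) * X k) := mul_le_mul_of_nonneg_left hk (wt_pos k).le
      have e3 : ∑ n ∈ J, wt n * Y n ≤ ∑ n ∈ J, wt n * X n :=
        sum_le_sum fun n _ => mul_le_mul_of_nonneg_left (hYX n) (wt_pos n).le
      nlinarith

end Lyons

namespace Lyons

open Finset

/-- The majorants of the iterates of the twisted operator, starting from a constant. -/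
noncomputable def majSeq {t : ℝ} (ht : 0 < t) (N : ℕ) (b M : ℝ) (u : unitInterval → ℂ) :
    ℕ → unitInterval → ℝ
  | 0 => fun _ => M
  | j + 1 => nextMaj ht N b ((twisted ht N b)^[j] u) (majSeq ht N b M u j)

lemma maj_majSeq {t : ℝ} (ht : 0 < t) (N : ℕ) {b M : ℝ} {u : unitInterval → ℂ}
    (h0 : Maj t |b| u fun _ => M) (j : ℕ) :
    Maj t |b| ((twisted ht N b)^[j] u) (majSeq ht N b M u j) := by
  induction j with
  | zero => exact h0
  | succ j ih =>
    rw [Function.iterate_succ_apply']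
    exact ih.next ht N b

/-- **Spectral gap** for the twisted operators, uniformly in the truncation. -/
lemma exists_norm_twisted_iterate_le {t : ℝ} (ht : 0 < t) (ht1 : t < 1) :
    ∃ N₀ : ℕ, ∃ σ C : ℝ, 0 < σ ∧ σ < 1 ∧ 0 < C ∧ ∀ N ≥ N₀, ∀ b : ℝ, 1 ≤ |b| →
      ∀ (M : ℝ) (u : unitInterval → ℂ), (∀ y, ‖u y‖ ≤ M) →
        (∀ y z, ‖u y - u z‖ ≤ |b| * |(y : ℝ) - z| * M) →
        ∀ k y, ‖(twisted ht N b)^[k] u y‖ ≤ C * √|b| * σ ^ k * M := by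
  obtain ⟨N₀, c, hc0, hc1, hterm⟩ := exists_terminal_gain ht
  have hD := distConst_pos ht
  have hD1 := distConst_le_one ht
  set D := distConst t with hDd
  clear_value D
  set σ := max √(1 - c / 2) (1 / (1 + t)) with hσ
  have hσ1 : σ < 1 := by
    refine max_lt ?_ ?_
    · rw [Real.sqrt_lt' one_pos]; linarith
    · rw [div_lt_one (by positivity)]; linarith
  have hσ2 : 1 / (1 + t) ≤ σ := le_max_right _ _
  have hσ3 : 1 - c / 2 ≤ σ ^ 2 := by
    have h : √(1 - c / 2) ≤ σ := le_max_left _ _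
    calc 1 - c / 2 = √(1 - c / 2) ^ 2 := (Real.sq_sqrt (by linarith)).symm
      _ ≤ σ ^ 2 := by gcongr
  clear_value σ
  have hσ0 : 0 < σ := lt_of_lt_of_le (by positivity) hσ2
  refine ⟨N₀, σ, (1 + t) ^ 3 * √(8 / D), hσ0, hσ1, by positivity, ?_⟩
  intro N hN b hb M u hu hu' k y
  have hM : 0 ≤ M := (norm_nonneg _).trans (hu 0)
  have h0 : Maj t |b| u fun _ => M :=
    { norm_le := hu
      compar := fun y z => by
        have : 1 ≤ Real.exp (|b| * |(y : ℝ) - z|) := Real.one_le_exp (by positivity)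
        nlinarith
      diff := fun y z => by
        refine (hu' y z).trans ?_
        have h1 : 1 ≤ Real.exp (|b| * |(y : ℝ) - z|) := Real.one_le_exp (by positivity)
        have h2 := two_le_coneConst ht
        have h3 : 0 ≤ |b| * |(y : ℝ) - z| := by positivity
        have h4 : 1 ≤ coneConst t * Real.exp (|b| * |(y : ℝ) - z|) := by nlinarith
        calc |b| * |(y : ℝ) - z| * M ≤
              (coneConst t * Real.exp (|b| * |(y : ℝ) - z|)) * (|b| * |(y : ℝ) - z| * M) :=
              le_mul_of_one_le_left (by positivity) h4
          _ = _ := by ring }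
  have hlex : ∃ l : ℕ, |b| ≤ D / 8 * (1 + t) ^ (2 * l) := by
    obtain ⟨l, hl⟩ := pow_unbounded_of_one_lt (|b| / (D / 8)) (show 1 < (1 + t) ^ 2 by nlinarith)
    refine ⟨l, ?_⟩
    rw [pow_mul, mul_comm]
    exact ((div_lt_iff₀ (by positivity)).1 hl).le
  classical
  obtain ⟨l, hl, hlmin⟩ : ∃ l : ℕ, |b| ≤ D / 8 * (1 + t) ^ (2 * l) ∧
      (1 + t) ^ l ≤ (1 + t) * √(8 / D) * √|b| := by
    refine ⟨Nat.find hlex, Nat.find_spec hlex, ?_⟩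
    rw [mul_assoc, ← Real.sqrt_mul (by positivity)]
    rcases Nat.eq_zero_or_eq_succ_pred (Nat.find hlex) with h | h
    · rw [h, pow_zero]
      have h8 : 1 ≤ 8 / D * |b| := by
        rw [div_mul_eq_mul_div, le_div_iff₀ hD]; nlinarith
      have := Real.one_le_sqrt.2 h8
      nlinarith
    · have hm := Nat.find_min hlex (m := (Nat.find hlex).pred) (by omega)
      rw [not_le] at hm
      rw [h, pow_succ, mul_comm]
      gcongr
      apply Real.le_sqrt_of_sq_le
      rw [← pow_mul, mul_comm (Nat.pred _), div_mul_eq_mul_div, le_div_iff₀ hD]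
      linarith
  have hgain : ∀ j, ∀ L ≥ l + 2, ∀ y,
      (avg ht N)^[L] (fun z => majSeq ht N b M u j z ^ 2) y ≤ (1 - c / 2) ^ j * M ^ 2 := by
    intro j
    induction j with
    | zero =>
      intro L _ y
      rw [pow_zero, one_mul]
      exact avg_iterate_le_of_le ht N L (c := M ^ 2) (sq_nonneg M) (fun z => le_rfl) y
    | succ j ih =>
      intro L hL y
      have hm := maj_majSeq ht N h0 j
      have hB := abs_nonneg b
      have key := tree_gain ht ht1 N (b := b) (c := c)
        (Q := fun z => quadMean ht N (majSeq ht N b M u j) z ^ 2)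
        (R := fun z => majSeq ht N b M u (j + 1) z ^ 2) hc0
        (fun z => sq_nonneg _)
        (fun z => by
          have h1 := (hm.next ht N b).nonneg z
          have h2 := hm.nextMaj_le ht N b z
          exact pow_le_pow_left₀ h1 h2 2)
        (fun y z => by
          have h1 := hm.quadMean_compar ht N hB y z
          have h2 := quadMean_nonneg ht N (H := majSeq ht N b M u j) y
          have h3 := quadMean_nonneg ht N (H := majSeq ht N b M u j) z
          have h4 : (1 : ℝ) / (1 + t) * (|b| * |(y : ℝ) - z|) ≤ |b| * |(y : ℝ) - z| := by
            refine mul_le_of_le_one_left (by positivity) ?_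
            rw [div_le_one (by positivity)]; linarith
          calc quadMean ht N (majSeq ht N b M u j) y ^ 2
              ≤ (quadMean ht N (majSeq ht N b M u j) z * Real.exp (|b| * |(y : ℝ) - z|)) ^ 2 := by
                refine pow_le_pow_left₀ h2 (h1.trans ?_) 2
                gcongr
            _ = _ := by rw [mul_pow, ← Real.exp_nat_mul]; norm_num)
        (by rw [← hDd]; exact hterm N hN b _ _ hm) l _ _ _ (node_id ht)
        (by rw [one_pow, div_one, ← hDd]; linarith)
        (by rw [one_pow, div_one, ← hDd]; exact hl) L hL y
      refine key.trans ?_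
      have h5 : (avg ht N)^[L] (fun z => quadMean ht N (majSeq ht N b M u j) z ^ 2) y =
          (avg ht N)^[L + 1] (fun z => majSeq ht N b M u j z ^ 2) y := by
        rw [Function.iterate_succ_apply]
        have h6 : (fun z => quadMean ht N (majSeq ht N b M u j) z ^ 2) =
            avg ht N fun z => majSeq ht N b M u j z ^ 2 := funext fun z => quadMean_sq ht N z
        rw [h6]
      rw [h5, pow_succ', mul_assoc]
      exact mul_le_mul_of_nonneg_left (ih (L + 1) (by omega) y) (by linarith)
  have hσL : ∀ L ≤ l + 2, (1 : ℝ) ≤ (1 + t) ^ 3 * √(8 / D) * √|b| * σ ^ L := by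
    intro L hL
    calc (1 : ℝ) ≤ ((1 + t) * σ) ^ (l + 2) := by
          refine one_le_pow₀ ?_
          rw [div_le_iff₀ (by positivity)] at hσ2; linarith
      _ = (1 + t) ^ 2 * (1 + t) ^ l * σ ^ (l + 2) := by rw [mul_pow, pow_add (1 + t)]; ring
      _ ≤ (1 + t) ^ 2 * ((1 + t) * √(8 / D) * √|b|) * σ ^ L := by
          gcongr ?_ * ?_
          · gcongr
          · exact pow_le_pow_of_le_one hσ0.le hσ1.le hL
      _ = _ := by ring
  rcases le_total k (l + 2) with hk | hk
  · calc ‖(twisted ht N b)^[k] u y‖ ≤ M :=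
          (norm_twisted_iterate_le ht N b k u y).trans
            (avg_iterate_le_of_le ht N k hM hu y)
      _ ≤ _ := le_mul_of_one_le_left hM (hσL k hk)
  · obtain ⟨j, rfl⟩ := Nat.exists_eq_add_of_le hk
    have hm := maj_majSeq ht N h0 j
    have h6 : ‖(twisted ht N b)^[l + 2 + j] u y‖ ≤ σ ^ j * M := by
      refine abs_le_of_sq_le_sq' ?_ (by positivity) |>.2
      rw [Function.iterate_add_apply]
      calc ‖(twisted ht N b)^[l + 2] ((twisted ht N b)^[j] u) y‖ ^ 2
          ≤ ((avg ht N)^[l + 2] (majSeq ht N b M u j) y) ^ 2 := by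
            refine pow_le_pow_left₀ (norm_nonneg _) ?_ 2
            exact (norm_twisted_iterate_le ht N b _ _ y).trans
              (avg_iterate_mono ht N _ hm.norm_le y)
        _ ≤ (avg ht N)^[l + 2] (fun z => majSeq ht N b M u j z ^ 2) y := sq_avg_iterate_le ht N _ hm.nonneg y
        _ ≤ (1 - c / 2) ^ j * M ^ 2 := hgain j _ le_rfl y
        _ ≤ (σ ^ 2) ^ j * M ^ 2 := by
            gcongr; linarith
        _ = _ := by ring
    refine h6.trans ?_
    have h7 := hσL (l + 2) le_rfl
    calc σ ^ j * M = 1 * (σ ^ j * M) := (one_mul _).symm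
      _ ≤ ((1 + t) ^ 3 * √(8 / D) * √|b| * σ ^ (l + 2)) * (σ ^ j * M) := by gcongr
      _ = _ := by ring

end Lyons

namespace Lyons

open Finset

section skew
variable {E : Type*} [NormedAddCommGroup E] [NormedSpace ℝ E] {t : ℝ} (ht : 0 < t) (N : ℕ)

/-- The averaging operator over the first `N` branches, with the additive cocycle `log (den t n)`
recorded in a real coordinate. -/
noncomputable def skew (G : ℝ → unitInterval → E) (s : ℝ) (r : unitInterval) : E :=
  ∑ n ∈ range N, wt n • G (s + Real.log (den t n r)) (branch ht n r)

lemma skew_iterate_succ (k : ℕ) (G : ℝ → unitInterval → E) (s : ℝ) (r : unitInterval) :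
    (skew ht N)^[k + 1] G s r = ∑ n ∈ range N,
      wt n • (skew ht N)^[k] G (s + Real.log (den t n r)) (branch ht n r) := by
  rw [Function.iterate_succ_apply']; rfl

lemma norm_skew_iterate_le (k : ℕ) (G : ℝ → unitInterval → E) (s : ℝ) (r : unitInterval) :
    ‖(skew ht N)^[k] G s r‖ ≤ (skew ht N)^[k] (fun s r => ‖G s r‖) s r := by
  induction k generalizing s r with
  | zero => exact le_rfl
  | succ k ih =>
    simp only [skew_iterate_succ]
    refine (norm_sum_le _ _).trans (sum_le_sum fun n _ => ?_)
    rw [norm_smul, Real.norm_of_nonneg (wt_pos n).le, smul_eq_mul]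
    exact mul_le_mul_of_nonneg_left (ih _ _) (wt_pos n).le

lemma skew_iterate_sum {ι : Type*} (S : Finset ι) (k : ℕ) (G : ι → ℝ → unitInterval → E)
    (s : ℝ) (r : unitInterval) :
    (skew ht N)^[k] (fun s r => ∑ i ∈ S, G i s r) s r = ∑ i ∈ S, (skew ht N)^[k] (G i) s r := by
  induction k generalizing s r with
  | zero => rfl
  | succ k ih =>
    simp only [skew_iterate_succ, ih, smul_sum]
    rw [sum_comm]

lemma skew_iterate_translate (a : ℝ) (k : ℕ) (G : ℝ → unitInterval → E)
    (s : ℝ) (r : unitInterval) :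
    (skew ht N)^[k] (fun s r => G (s - a) r) s r = (skew ht N)^[k] G (s - a) r := by
  induction k generalizing s r with
  | zero => rfl
  | succ k ih =>
    simp only [skew_iterate_succ, ih]
    exact sum_congr rfl fun n _ => by rw [add_sub_right_comm]

lemma skew_iterate_integral {α : Type*} [MeasurableSpace α] {μ : Measure α}
    {G : α → ℝ → unitInterval → E} (hG : ∀ s r, Integrable (fun a => G a s r) μ) (k : ℕ)
    (s : ℝ) (r : unitInterval) :
    Integrable (fun a => (skew ht N)^[k] (G a) s r) μ ∧
      (skew ht N)^[k] (fun s r => ∫ a, G a s r ∂μ) s r = ∫ a, (skew ht N)^[k] (G a) s r ∂μ := by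
  induction k generalizing s r with
  | zero => exact ⟨hG s r, rfl⟩
  | succ k ih =>
    simp only [skew_iterate_succ]
    have h : ∀ n ∈ range N, Integrable (fun a => wt n •
        (skew ht N)^[k] (G a) (s + Real.log (den t n r)) (branch ht n r)) μ :=
      fun n _ => (ih _ _).1.smul (wt n)
    refine ⟨integrable_finsetSum _ h, ?_⟩
    rw [integral_finsetSum _ h]
    exact sum_congr rfl fun n _ => by rw [(ih _ _).2, integral_smul]

lemma skew_iterate_mono (k : ℕ) {F G : ℝ → unitInterval → ℝ} (h : ∀ s r, F s r ≤ G s r)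
    (s : ℝ) (r : unitInterval) : (skew ht N)^[k] F s r ≤ (skew ht N)^[k] G s r := by
  induction k generalizing s r with
  | zero => exact h s r
  | succ k ih =>
    simp only [skew_iterate_succ, smul_eq_mul]
    exact sum_le_sum fun n _ => mul_le_mul_of_nonneg_left (ih _ _) (wt_pos n).le

lemma skew_iterate_nonneg (k : ℕ) {G : ℝ → unitInterval → ℝ} (h : ∀ s r, 0 ≤ G s r)
    (s : ℝ) (r : unitInterval) : 0 ≤ (skew ht N)^[k] G s r := by
  induction k generalizing s r with
  | zero => exact h s r
  | succ k ih =>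
    simp only [skew_iterate_succ, smul_eq_mul]
    exact sum_nonneg fun n _ => mul_nonneg (wt_pos n).le (ih _ _)

lemma skew_iterate_le_of_le (k : ℕ) {G : ℝ → unitInterval → ℝ} {c : ℝ} (hc : 0 ≤ c)
    (h : ∀ s r, G s r ≤ c) (s : ℝ) (r : unitInterval) : (skew ht N)^[k] G s r ≤ c := by
  induction k generalizing s r with
  | zero => exact h s r
  | succ k ih =>
    simp only [skew_iterate_succ, smul_eq_mul]
    calc _ ≤ ∑ n ∈ range N, wt n * c :=
          sum_le_sum fun n _ => mul_le_mul_of_nonneg_left (ih _ _) (wt_pos n).le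
      _ = (∑ n ∈ range N, wt n) * c := by rw [sum_mul]
      _ ≤ 1 * c := mul_le_mul_of_nonneg_right (sum_wt_le_one N) hc
      _ = c := one_mul c

lemma sq_skew_iterate_le (k : ℕ) (G : ℝ → unitInterval → ℝ) (s : ℝ) (r : unitInterval) :
    ((skew ht N)^[k] G s r) ^ 2 ≤ (skew ht N)^[k] (fun s r => G s r ^ 2) s r := by
  induction k generalizing s r with
  | zero => exact le_rfl
  | succ k ih =>
    simp only [skew_iterate_succ, smul_eq_mul]
    exact (sq_sum_wt_le N _).trans
      (sum_le_sum fun n _ => mul_le_mul_of_nonneg_left (ih _ _) (wt_pos n).le)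

lemma skew_iterate_ofReal (k : ℕ) (G : ℝ → unitInterval → ℝ) (s : ℝ) (r : unitInterval) :
    (skew ht N)^[k] (fun s r => (G s r : ℂ)) s r = ((skew ht N)^[k] G s r : ℝ) := by
  induction k generalizing s r with
  | zero => rfl
  | succ k ih =>
    simp only [skew_iterate_succ, ih, smul_eq_mul]
    push_cast
    rfl

lemma skew_iterate_char (b : ℝ) (k : ℕ) (u : unitInterval → ℂ) (s : ℝ) (r : unitInterval) :
    (skew ht N)^[k] (fun s r => Complex.exp ((b * s : ℝ) * Complex.I) * u r) s r =
      Complex.exp ((b * s : ℝ) * Complex.I) * (twisted ht N b)^[k] u r := by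
  induction k generalizing s r with
  | zero => rfl
  | succ k ih =>
    simp only [skew_iterate_succ, ih, Function.iterate_succ_apply', twisted, mul_sum]
    refine sum_congr rfl fun n _ => ?_
    rw [Complex.real_smul, mul_add, Complex.ofReal_add, add_mul, Complex.exp_add]
    ring

lemma sum_wt_mul_succ_le (N : ℕ) : ∑ n ∈ range N, wt n * (n + 1) ≤ 2 := by
  have h : ∀ N : ℕ, ∑ n ∈ range N, wt n * (n + 1) = 2 - (N + 2) * (1 / 2) ^ N := by
    intro N
    induction N with
    | zero => norm_num
    | succ k ih => rw [sum_range_succ, ih, wt]; push_cast; ring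
  rw [h]
  have : (0 : ℝ) ≤ (N + 2) * (1 / 2) ^ N := by positivity
  linarith

lemma skew_iterate_exp_le (ht1 : t ≤ 1) (k : ℕ) {G : ℝ → unitInterval → ℝ} {c : ℝ} (hc : 0 ≤ c)
    (h : ∀ s r, G s r ≤ c * Real.exp s) (s : ℝ) (r : unitInterval) :
    (skew ht N)^[k] G s r ≤ 4 ^ k * c * Real.exp s := by
  induction k generalizing s r with
  | zero => simpa using h s r
  | succ k ih =>
    simp only [skew_iterate_succ, smul_eq_mul]
    have hden : ∀ n : ℕ, den t n r ≤ 2 + (n + 1) := fun n => by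
      have h1 := r.2.1
      have h2 : t * ((n : ℝ) + 1) ≤ 1 * (n + 1) := by gcongr
      unfold den; linarith
    calc _ ≤ ∑ n ∈ range N, (wt n * 2 + wt n * (n + 1)) * (4 ^ k * c * Real.exp s) := by
          refine sum_le_sum fun n _ => ?_
          rw [← mul_add, mul_assoc]
          refine mul_le_mul_of_nonneg_left ?_ (wt_pos n).le
          refine (ih _ _).trans ?_
          rw [Real.exp_add, Real.exp_log (den_pos ht n r), ← mul_assoc, mul_comm]
          exact mul_le_mul_of_nonneg_right (hden n) (by positivity)
      _ = ((∑ n ∈ range N, wt n) * 2 + ∑ n ∈ range N, wt n * (n + 1)) *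
            (4 ^ k * c * Real.exp s) := by rw [← sum_mul, sum_add_distrib, sum_mul]
      _ ≤ 4 * (4 ^ k * c * Real.exp s) := by
          have h1 := sum_wt_le_one N
          have h2 := sum_wt_mul_succ_le N
          exact mul_le_mul_of_nonneg_right (by linarith) (by positivity)
      _ = _ := by ring

end skew

end Lyons

namespace Lyons

open FourierTransform

/-- A smooth cutoff with its first two derivatives and a bound for them. -/
structure IsCutoff (κ κ₁ κ₂ : ℝ → ℝ) (K : ℝ) : Prop where
  one_le : 1 ≤ K
  deriv₁ : ∀ s, HasDerivAt κ (κ₁ s) s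
  deriv₂ : ∀ s, HasDerivAt κ₁ (κ₂ s) s
  cont : Continuous κ₂
  eq_one : ∀ s, |s| ≤ 1 → κ s = 1
  nonneg : ∀ s, 0 ≤ κ s
  le_one : ∀ s, κ s ≤ 1
  eq_zero : ∀ s, 2 < |s| → κ s = 0
  eq_zero₁ : ∀ s, 2 < |s| → κ₁ s = 0
  eq_zero₂ : ∀ s, 2 < |s| → κ₂ s = 0
  bound₁ : ∀ s, |κ₁ s| ≤ K
  bound₂ : ∀ s, |κ₂ s| ≤ K

lemma exists_bound_of_eq_zero {f : ℝ → ℝ} (hf : Continuous f) (h0 : ∀ s, 2 < |s| → f s = 0) :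
    ∃ K, ∀ s, |f s| ≤ K := by
  obtain ⟨K, hK⟩ := (isCompact_Icc (a := (-2 : ℝ)) (b := 2)).exists_bound_of_continuousOn
    hf.continuousOn
  refine ⟨K, fun s => ?_⟩
  rcases le_or_gt |s| 2 with h | h
  · exact hK s (abs_le.1 h)
  · rw [h0 s h, abs_zero]
    exact (norm_nonneg _).trans (hK 0 (by norm_num))

lemma deriv_eq_zero_of_eq_zero {f : ℝ → ℝ} (h0 : ∀ s, 2 < |s| → f s = 0) (s : ℝ)
    (hs : 2 < |s|) : deriv f s = 0 := by
  have h : f =ᶠ[nhds s] fun _ => 0 := by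
    filter_upwards [(isOpen_lt continuous_const continuous_abs).mem_nhds hs] with x hx
    exact h0 x hx
  rw [h.deriv_eq, deriv_const]

lemma exists_isCutoff : ∃ κ κ₁ κ₂ K, IsCutoff κ κ₁ κ₂ K := by
  set f : ContDiffBump (0 : ℝ) := ⟨1, 2, one_pos, one_lt_two⟩
  have hf : ContDiff ℝ 3 f := f.contDiff
  have hf1 : ContDiff ℝ 2 (deriv f) := by
    rw [show (3 : WithTop ℕ∞) = 2 + 1 by norm_num, contDiff_succ_iff_deriv] at hf
    exact hf.2.2
  have hf2 : ContDiff ℝ 1 (deriv (deriv f)) := by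
    have h := hf1
    rw [show (2 : WithTop ℕ∞) = 1 + 1 by norm_num, contDiff_succ_iff_deriv] at h
    exact h.2.2
  have z0 : ∀ s : ℝ, 2 < |s| → f s = 0 := fun s hs =>
    f.zero_of_le_dist (by rw [dist_zero_right, Real.norm_eq_abs]; exact hs.le)
  have z1 := deriv_eq_zero_of_eq_zero z0
  have z2 := deriv_eq_zero_of_eq_zero z1
  obtain ⟨K1, hK1⟩ := exists_bound_of_eq_zero hf1.continuous z1
  obtain ⟨K2, hK2⟩ := exists_bound_of_eq_zero hf2.continuous z2
  refine ⟨f, deriv f, deriv (deriv f), max 1 (max K1 K2),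
    { one_le := le_max_left _ _
      deriv₁ := fun s => (hf.differentiable (by norm_num) s).hasDerivAt
      deriv₂ := fun s => (hf1.differentiable (by norm_num) s).hasDerivAt
      cont := hf2.continuous
      eq_one := fun s hs => f.one_of_mem_closedBall
        (by rw [mem_closedBall_zero_iff, Real.norm_eq_abs]; exact hs)
      nonneg := fun s => f.nonneg
      le_one := fun s => f.le_one
      eq_zero := z0
      eq_zero₁ := z1
      eq_zero₂ := z2
      bound₁ := fun s => (hK1 s).trans ((le_max_left _ _).trans (le_max_right _ _))
      bound₂ := fun s => (hK2 s).trans ((le_max_right _ _).trans (le_max_right _ _)) }⟩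

lemma integrable_of_eq_zero {f : ℝ → ℂ} (hf : Continuous f) (h0 : ∀ s, 2 < |s| → f s = 0) :
    Integrable f := by
  refine hf.integrable_of_hasCompactSupport
    (HasCompactSupport.intro (isCompact_Icc (a := (-2 : ℝ)) (b := 2)) fun s hs => h0 s ?_)
  by_contra! h
  exact hs (abs_le.1 h)

lemma norm_fourier_le_of_eq_zero {f : ℝ → ℂ} {A : ℝ} (h0 : ∀ s, 2 < |s| → f s = 0)
    (hA : ∀ s, ‖f s‖ ≤ A) (β : ℝ) : ‖𝓕 f β‖ ≤ 4 * A := by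
  rw [Real.fourier_real_eq, ← setIntegral_eq_integral_of_forall_compl_eq_zero
    (s := Set.Icc (-2) 2)]
  · refine (norm_setIntegral_le_of_norm_le_const (C := A) (by simp) fun s _ => ?_).trans ?_
    · rw [Circle.norm_smul]; exact hA s
    · simp [Measure.real]; norm_num; linarith
  · intro s hs
    rw [h0 s, smul_zero]
    by_contra! h
    exact hs (abs_le.1 h)

lemma fourier_of_hasDerivAt {f f' : ℝ → ℂ} (hd : ∀ s, HasDerivAt f (f' s) s) (hc : Continuous f')
    (h0 : ∀ s, 2 < |s| → f s = 0) (h0' : ∀ s, 2 < |s| → f' s = 0) (β : ℝ) :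
    𝓕 f' β = 2 * Real.pi * Complex.I * β * 𝓕 f β := by
  have hdiff : Differentiable ℝ f := fun s => (hd s).differentiableAt
  have hderiv : deriv f = f' := funext fun s => (hd s).deriv
  have h := Real.fourier_deriv (integrable_of_eq_zero hdiff.continuous h0) hdiff
    (by rw [hderiv]; exact integrable_of_eq_zero hc h0')
  rw [hderiv] at h
  rw [h]
  rfl

lemma norm_fourier_le {f f₁ f₂ : ℝ → ℂ} {A : ℝ} (hd : ∀ s, HasDerivAt f (f₁ s) s)
    (hd₁ : ∀ s, HasDerivAt f₁ (f₂ s) s) (hc : Continuous f₂)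
    (h0 : ∀ s, 2 < |s| → f s = 0) (h1 : ∀ s, 2 < |s| → f₁ s = 0) (h2 : ∀ s, 2 < |s| → f₂ s = 0)
    (hA : ∀ s, ‖f s‖ ≤ A) (hA₂ : ∀ s, ‖f₂ s‖ ≤ A) (β : ℝ) :
    ‖𝓕 f β‖ ≤ 8 * A * (1 + β ^ 2)⁻¹ := by
  have hc₁ : Continuous f₁ :=
    continuous_iff_continuousAt.2 fun s => (hd₁ s).continuousAt
  have e1 := fourier_of_hasDerivAt hd hc₁ h0 h1 β
  have e2 := fourier_of_hasDerivAt hd₁ hc h1 h2 β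
  have b0 := norm_fourier_le_of_eq_zero h0 hA β
  have b2 := norm_fourier_le_of_eq_zero h2 hA₂ β
  rw [e2, norm_mul _ (𝓕 f₁ β), e1, norm_mul _ (𝓕 f β)] at b2
  have hn : ‖(2 * Real.pi * Complex.I * β : ℂ)‖ = 2 * Real.pi * |β| := by
    simp [abs_of_pos Real.pi_pos]
  rw [hn] at b2
  rw [← div_eq_mul_inv, le_div_iff₀ (by positivity)]
  have hpi := Real.pi_gt_three
  have h3 : β ^ 2 * ‖𝓕 f β‖ ≤ 2 * Real.pi * |β| * (2 * Real.pi * |β| * ‖𝓕 f β‖) := by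
    have : 2 * Real.pi * |β| * (2 * Real.pi * |β| * ‖𝓕 f β‖) =
        (2 * Real.pi) ^ 2 * (β ^ 2 * ‖𝓕 f β‖) := by rw [← sq_abs β]; ring
    rw [this]
    exact le_mul_of_one_le_left (by positivity) (by nlinarith)
  nlinarith

end Lyons

namespace Lyons

open FourierTransform

/-- The phase `2πi B e^{-2s}`. -/
noncomputable def phase (B s : ℝ) : ℂ := (2 * Real.pi * B * Real.exp (-2 * s) : ℝ) * Complex.I

/-- The oscillating window `κ(s) exp (2πi B q e^{-2s})`. -/
noncomputable def window (κ : ℝ → ℝ) (B q s : ℝ) : ℂ := κ s * Complex.exp (q * phase B s)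

lemma norm_exp_phase (B q s : ℝ) : ‖Complex.exp (q * phase B s)‖ = 1 := by
  rw [phase, ← mul_assoc, ← Complex.ofReal_mul, Complex.norm_exp_ofReal_mul_I]

lemma hasDerivAt_phase (B s : ℝ) : HasDerivAt (phase B) (-2 * phase B s) s := by
  have h1 : HasDerivAt (fun s : ℝ => 2 * Real.pi * B * Real.exp (-2 * s))
      (2 * Real.pi * B * (Real.exp (-2 * s) * (-2 * 1))) s :=
    (((hasDerivAt_id s).const_mul (-2)).exp).const_mul _
  refine (h1.ofReal_comp.mul_const Complex.I).congr_deriv ?_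
  simp only [phase]
  push_cast
  ring

lemma hasDerivAt_exp_phase (B q s : ℝ) : HasDerivAt (fun s => Complex.exp (q * phase B s))
    (-2 * q * phase B s * Complex.exp (q * phase B s)) s := by
  convert ((hasDerivAt_phase B s).const_mul (q : ℂ)).cexp using 1
  ring

/-- The coefficient of the first derivative of the window. -/
noncomputable def windowCoeff₁ (κ κ₁ : ℝ → ℝ) (B q s : ℝ) : ℂ := κ₁ s - 2 * q * phase B s * κ s

/-- The coefficient of the second derivative of the window. -/
noncomputable def windowCoeff₂ (κ κ₁ κ₂ : ℝ → ℝ) (B q s : ℝ) : ℂ :=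
  κ₂ s + q * phase B s * (4 * κ s - 4 * κ₁ s) + 4 * q ^ 2 * phase B s ^ 2 * κ s

lemma norm_phase_le {B s : ℝ} (hs : |s| ≤ 2) :
    ‖phase B s‖ ≤ 2 * Real.pi * |B| * Real.exp 4 := by
  rw [phase, norm_mul, Complex.norm_I, mul_one, Complex.norm_real, Real.norm_eq_abs, abs_mul,
    abs_mul, abs_of_pos (show 0 < 2 * Real.pi by positivity), Real.abs_exp]
  gcongr
  linarith [(abs_le.1 hs).1]

namespace IsCutoff
variable {κ κ₁ κ₂ : ℝ → ℝ} {K : ℝ} (hκ : IsCutoff κ κ₁ κ₂ K)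
include hκ

lemma abs_le_one (s : ℝ) : |κ s| ≤ 1 := by
  rw [abs_of_nonneg (hκ.nonneg s)]; exact hκ.le_one s

lemma hasDerivAt_window (B q s : ℝ) : HasDerivAt (window κ B q)
    (windowCoeff₁ κ κ₁ B q s * Complex.exp (q * phase B s)) s := by
  refine (((hκ.deriv₁ s).ofReal_comp).mul (hasDerivAt_exp_phase B q s)).congr_deriv ?_
  unfold windowCoeff₁; ring

lemma hasDerivAt_window_deriv (B q s : ℝ) :
    HasDerivAt (fun s => windowCoeff₁ κ κ₁ B q s * Complex.exp (q * phase B s))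
      (windowCoeff₂ κ κ₁ κ₂ B q s * Complex.exp (q * phase B s)) s := by
  refine ((((hκ.deriv₂ s).ofReal_comp).sub
    (((hasDerivAt_phase B s).const_mul (2 * q : ℂ)).mul ((hκ.deriv₁ s).ofReal_comp))).mul
    (hasDerivAt_exp_phase B q s)).congr_deriv ?_
  simp only [windowCoeff₂, Pi.sub_apply, Pi.mul_apply]; ring

lemma continuous_fun : Continuous κ :=
  continuous_iff_continuousAt.2 fun s => (hκ.deriv₁ s).continuousAt

lemma continuous_deriv : Continuous κ₁ :=
  continuous_iff_continuousAt.2 fun s => (hκ.deriv₂ s).continuousAt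

lemma continuous_window_deriv₂ (B q : ℝ) :
    Continuous fun s => windowCoeff₂ κ κ₁ κ₂ B q s * Complex.exp (q * phase B s) := by
  have h0 := hκ.continuous_fun
  have h1 := hκ.continuous_deriv
  have h2 := hκ.cont
  have h3 : Continuous (phase B) :=
    continuous_iff_continuousAt.2 fun s => (hasDerivAt_phase B s).continuousAt
  unfold windowCoeff₂
  fun_prop

lemma norm_windowCoeff₂_le {B q s R : ℝ} (hq0 : 0 ≤ q) (hq1 : q ≤ 1)
    (hR : 1 ≤ R) (hR' : ‖phase B s‖ ≤ R) : ‖windowCoeff₂ κ κ₁ κ₂ B q s‖ ≤ 13 * K * R ^ 2 := by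
  have hK := hκ.one_le
  have a0 := hκ.abs_le_one s
  have a1 := hκ.bound₁ s
  have a2 := hκ.bound₂ s
  have hd : ‖(4 * κ s - 4 * κ₁ s : ℂ)‖ ≤ 8 * K := by
    refine (norm_sub_le _ _).trans ?_
    simp only [norm_mul, Complex.norm_real, Real.norm_eq_abs, Complex.norm_ofNat]
    linarith
  have t1 : ‖(q * phase B s * (4 * κ s - 4 * κ₁ s) : ℂ)‖ ≤ 1 * R * (8 * K) := by
    rw [norm_mul, norm_mul, Complex.norm_real, Real.norm_of_nonneg hq0]
    gcongr
  have t2 : ‖(4 * q ^ 2 * phase B s ^ 2 * κ s : ℂ)‖ ≤ 4 * 1 ^ 2 * R ^ 2 * 1 := by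
    rw [norm_mul, norm_mul, norm_mul, norm_pow, norm_pow, Complex.norm_real,
      Real.norm_of_nonneg hq0, Complex.norm_ofNat, Complex.norm_real, Real.norm_eq_abs]
    gcongr
  have t0 : ‖(κ₂ s : ℂ)‖ ≤ K := by rw [Complex.norm_real]; exact a2
  refine (norm_add₃_le).trans ?_
  have hR2 : R ≤ R ^ 2 := by nlinarith
  have hR3 : K ≤ K * R ^ 2 := by nlinarith
  have hR4 : R * K ≤ K * R ^ 2 := by nlinarith
  nlinarith [sq_nonneg R]

lemma norm_windowCoeff₂_sub_le {B q q' s R : ℝ} (hq0 : 0 ≤ q) (hq1 : q ≤ 1)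
    (hq0' : 0 ≤ q') (hq1' : q' ≤ 1) (hR : 1 ≤ R) (hR' : ‖phase B s‖ ≤ R) :
    ‖windowCoeff₂ κ κ₁ κ₂ B q s - windowCoeff₂ κ κ₁ κ₂ B q' s‖ ≤
      16 * K * R ^ 2 * |q - q'| := by
  have hK := hκ.one_le
  have a0 := hκ.abs_le_one s
  have a1 := hκ.bound₁ s
  have hd : ‖(4 * κ s - 4 * κ₁ s : ℂ)‖ ≤ 8 * K := by
    refine (norm_sub_le _ _).trans ?_
    simp only [norm_mul, Complex.norm_real, Real.norm_eq_abs, Complex.norm_ofNat]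
    linarith
  have e : windowCoeff₂ κ κ₁ κ₂ B q s - windowCoeff₂ κ κ₁ κ₂ B q' s =
      ((q - q' : ℝ) : ℂ) * (phase B s * (4 * κ s - 4 * κ₁ s) +
        4 * ((q + q' : ℝ) : ℂ) * phase B s ^ 2 * κ s) := by
    unfold windowCoeff₂; push_cast; ring
  have t1 : ‖(phase B s * (4 * κ s - 4 * κ₁ s) : ℂ)‖ ≤ R * (8 * K) := by
    rw [norm_mul]; gcongr
  have t2 : ‖(4 * ((q + q' : ℝ) : ℂ) * phase B s ^ 2 * κ s : ℂ)‖ ≤ 4 * 2 * R ^ 2 * 1 := by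
    rw [norm_mul, norm_mul, norm_mul, norm_pow, Complex.norm_real,
      Real.norm_of_nonneg (by positivity), Complex.norm_ofNat, Complex.norm_real, Real.norm_eq_abs]
    gcongr
    linarith
  rw [e, norm_mul, Complex.norm_real, Real.norm_eq_abs, mul_comm]
  refine mul_le_mul_of_nonneg_right ((norm_add_le _ _).trans ?_) (abs_nonneg _)
  have hR2 : R ≤ R ^ 2 := by nlinarith
  have hR4 : R * K ≤ K * R ^ 2 := by nlinarith
  nlinarith [sq_nonneg R]

end IsCutoff

lemma norm_exp_phase_sub_le (B q q' s : ℝ) :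
    ‖Complex.exp (q * phase B s) - Complex.exp (q' * phase B s)‖ ≤ |q - q'| * ‖phase B s‖ := by
  have h : ∀ q : ℝ, (q : ℂ) * phase B s =
      ((q * (2 * Real.pi * B * Real.exp (-2 * s)) : ℝ) : ℂ) * Complex.I := fun q => by
    rw [phase, ← mul_assoc, ← Complex.ofReal_mul]
  rw [h, h]
  refine (norm_exp_I_sub_le _ _).trans (le_of_eq ?_)
  rw [← sub_mul, abs_mul, phase, norm_mul, Complex.norm_I, mul_one, Complex.norm_real,
    Real.norm_eq_abs]

end Lyons

namespace Lyons

open FourierTransform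

lemma integrable_fourierChar_smul (β : ℝ) {f : ℝ → ℂ} (hf : Integrable f) :
    Integrable fun s => Real.fourierChar (-(s * β)) • f s := by
  simpa [mul_comm] using (Real.fourierIntegral_convergent_iff (μ := volume) β).2 hf

namespace IsCutoff
variable {κ κ₁ κ₂ : ℝ → ℝ} {K : ℝ} (hκ : IsCutoff κ κ₁ κ₂ K)
include hκ

lemma window_eq_zero (B q s : ℝ) (hs : 2 < |s|) : window κ B q s = 0 := by
  simp [window, hκ.eq_zero s hs]

lemma window_deriv_eq_zero (B q s : ℝ) (hs : 2 < |s|) :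
    windowCoeff₁ κ κ₁ B q s * Complex.exp (q * phase B s) = 0 := by
  simp [windowCoeff₁, hκ.eq_zero s hs, hκ.eq_zero₁ s hs]

lemma window_deriv₂_eq_zero (B q s : ℝ) (hs : 2 < |s|) :
    windowCoeff₂ κ κ₁ κ₂ B q s * Complex.exp (q * phase B s) = 0 := by
  simp [windowCoeff₂, hκ.eq_zero s hs, hκ.eq_zero₁ s hs, hκ.eq_zero₂ s hs]

lemma continuous_window (B q : ℝ) : Continuous (window κ B q) :=
  continuous_iff_continuousAt.2 fun s => (hκ.hasDerivAt_window B q s).continuousAt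

lemma norm_window_le (B q s : ℝ) : ‖window κ B q s‖ ≤ κ s := by
  rw [window, norm_mul, norm_exp_phase, mul_one, Complex.norm_real,
    Real.norm_of_nonneg (hκ.nonneg s)]

lemma norm_fourier_window_le {B q R : ℝ} (hq0 : 0 ≤ q) (hq1 : q ≤ 1) (hR : 1 ≤ R)
    (hR' : ∀ s, |s| ≤ 2 → ‖phase B s‖ ≤ R) (β : ℝ) :
    ‖𝓕 (window κ B q) β‖ ≤ 8 * (13 * K * R ^ 2) * (1 + β ^ 2)⁻¹ := by
  have hK := hκ.one_le
  have hR2 : 1 ≤ R ^ 2 := one_le_pow₀ hR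
  refine norm_fourier_le (hκ.hasDerivAt_window B q) (hκ.hasDerivAt_window_deriv B q)
    (hκ.continuous_window_deriv₂ B q) (hκ.window_eq_zero B q) (hκ.window_deriv_eq_zero B q)
    (hκ.window_deriv₂_eq_zero B q) (fun s => ?_) (fun s => ?_) β
  · refine (hκ.norm_window_le B q s).trans ((hκ.le_one s).trans ?_)
    nlinarith
  · rcases le_or_gt |s| 2 with hs | hs
    · rw [norm_mul, norm_exp_phase, mul_one]
      exact hκ.norm_windowCoeff₂_le hq0 hq1 hR (hR' s hs)
    · rw [hκ.window_deriv₂_eq_zero B q s hs, norm_zero]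
      positivity

lemma norm_fourier_window_sub_le {B q q' R : ℝ} (hq0 : 0 ≤ q) (hq1 : q ≤ 1)
    (hq0' : 0 ≤ q') (hq1' : q' ≤ 1) (hR : 1 ≤ R)
    (hR' : ∀ s, |s| ≤ 2 → ‖phase B s‖ ≤ R) (β : ℝ) :
    ‖𝓕 (window κ B q) β - 𝓕 (window κ B q') β‖ ≤
      8 * (29 * K * R ^ 3 * |q - q'|) * (1 + β ^ 2)⁻¹ := by
  have hK := hκ.one_le
  have hR2 : 1 ≤ R ^ 2 := one_le_pow₀ hR
  have hR3 : R ^ 2 ≤ R ^ 3 := pow_le_pow_right₀ hR (by norm_num)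
  have hd := abs_nonneg (q - q')
  have hF : 𝓕 (window κ B q) β - 𝓕 (window κ B q') β =
      𝓕 (fun s => window κ B q s - window κ B q' s) β := by
    rw [Real.fourier_real_eq, Real.fourier_real_eq, Real.fourier_real_eq, ← integral_sub]
    · exact integral_congr_ae (Filter.Eventually.of_forall fun s => by simp only [smul_sub])
    · exact integrable_fourierChar_smul β
        (integrable_of_eq_zero (hκ.continuous_window B q) (hκ.window_eq_zero B q))
    · exact integrable_fourierChar_smul β
        (integrable_of_eq_zero (hκ.continuous_window B q') (hκ.window_eq_zero B q'))
  rw [hF]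
  refine norm_fourier_le (f := fun s => window κ B q s - window κ B q' s)
    (f₁ := fun s => windowCoeff₁ κ κ₁ B q s * Complex.exp (q * phase B s) -
      windowCoeff₁ κ κ₁ B q' s * Complex.exp (q' * phase B s))
    (f₂ := fun s => windowCoeff₂ κ κ₁ κ₂ B q s * Complex.exp (q * phase B s) -
      windowCoeff₂ κ κ₁ κ₂ B q' s * Complex.exp (q' * phase B s))
    (fun s => (hκ.hasDerivAt_window B q s).sub (hκ.hasDerivAt_window B q' s))
    (fun s => (hκ.hasDerivAt_window_deriv B q s).sub (hκ.hasDerivAt_window_deriv B q' s))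
    ((hκ.continuous_window_deriv₂ B q).sub (hκ.continuous_window_deriv₂ B q'))
    (fun s hs => ?_) (fun s hs => ?_) (fun s hs => ?_) (fun s => ?_) (fun s => ?_) β
  · rw [hκ.window_eq_zero _ _ s hs, hκ.window_eq_zero _ _ s hs, sub_zero]
  · rw [hκ.window_deriv_eq_zero _ _ s hs, hκ.window_deriv_eq_zero _ _ s hs, sub_zero]
  · rw [hκ.window_deriv₂_eq_zero _ _ s hs, hκ.window_deriv₂_eq_zero _ _ s hs, sub_zero]
  · rcases le_or_gt |s| 2 with hs | hs
    · rw [window, window, ← mul_sub, norm_mul, Complex.norm_real, Real.norm_eq_abs]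
      calc |κ s| * ‖Complex.exp (q * phase B s) - Complex.exp (q' * phase B s)‖
          ≤ 1 * (|q - q'| * R) := by
            have := hκ.abs_le_one s
            have h1 := norm_exp_phase_sub_le B q q' s
            have h2 := hR' s hs
            gcongr
            exact h1.trans (by gcongr)
        _ = R * |q - q'| := by ring
        _ ≤ (29 * K * R ^ 3) * |q - q'| := by
            gcongr
            have : R ≤ R ^ 3 := by nlinarith
            nlinarith
    · rw [hκ.window_eq_zero _ _ s hs, hκ.window_eq_zero _ _ s hs, sub_zero, norm_zero]
      positivity
  · rcases le_or_gt |s| 2 with hs | hs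
    · have e : windowCoeff₂ κ κ₁ κ₂ B q s * Complex.exp (q * phase B s) -
          windowCoeff₂ κ κ₁ κ₂ B q' s * Complex.exp (q' * phase B s) =
          (windowCoeff₂ κ κ₁ κ₂ B q s - windowCoeff₂ κ κ₁ κ₂ B q' s) *
            Complex.exp (q * phase B s) + windowCoeff₂ κ κ₁ κ₂ B q' s *
            (Complex.exp (q * phase B s) - Complex.exp (q' * phase B s)) := by ring
      rw [e]
      refine (norm_add_le _ _).trans ?_
      rw [norm_mul, norm_mul, norm_exp_phase, mul_one]
      have h1 := hκ.norm_windowCoeff₂_sub_le hq0 hq1 hq0' hq1' hR (hR' s hs)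
      have h2 := hκ.norm_windowCoeff₂_le hq0' hq1' hR (hR' s hs)
      have h3 : ‖Complex.exp (q * phase B s) - Complex.exp (q' * phase B s)‖ ≤ |q - q'| * R :=
        (norm_exp_phase_sub_le B q q' s).trans (by have := hR' s hs; gcongr)
      calc _ ≤ 16 * K * R ^ 2 * |q - q'| + (13 * K * R ^ 2) * (|q - q'| * R) := by gcongr
        _ ≤ 16 * K * R ^ 3 * |q - q'| + (13 * K * R ^ 2) * (|q - q'| * R) := by gcongr
        _ = _ := by ring
    · rw [hκ.window_deriv₂_eq_zero _ _ s hs, hκ.window_deriv₂_eq_zero _ _ s hs, sub_zero,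
        norm_zero]
      positivity

lemma norm_fourier_window_low {B q c β : ℝ} (hc : 0 < c) (hcq : c ≤ q) (hB : B ≠ 0)
    (hβ : |β| ≤ 1) :
    ‖𝓕 (window κ B q) β‖ ≤ 3 * K * Real.exp 4 / (c * |B|) := by
  have hK := hκ.one_le
  have hpi := Real.pi_gt_three
  have hE : ∀ s : ℝ, HasDerivAt (fun s : ℝ => (Real.exp (2 * s) : ℂ))
      ((2 * Real.exp (2 * s) : ℝ) : ℂ) s := fun s =>
    ((((hasDerivAt_id s).const_mul 2).exp).ofReal_comp).congr_deriv (by simp; ring)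
  set k₁ : ℝ → ℂ := fun s => Real.exp (2 * s) * window κ B q s with hk₁
  set k₂ : ℝ → ℂ := fun s => ((κ₁ s + 2 * κ s) * Real.exp (2 * s) : ℝ) *
    Complex.exp (q * phase B s) with hk₂
  have hd : ∀ s, HasDerivAt k₁ (k₂ s - (4 * Real.pi * q * B : ℝ) * (window κ B q s *
      Complex.I)) s := fun s => by
    refine ((hE s).mul (hκ.hasDerivAt_window B q s)).congr_deriv ?_
    have h1 : (Real.exp (2 * s) : ℂ) * phase B s = (2 * Real.pi * B : ℝ) * Complex.I := by
      rw [phase, ← mul_assoc, ← Complex.ofReal_mul]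
      congr 2
      rw [mul_left_comm, ← Real.exp_add]
      simp
    have h2 : (Real.exp (2 * s) : ℂ) * (windowCoeff₁ κ κ₁ B q s * Complex.exp (q * phase B s)) =
        Real.exp (2 * s) * κ₁ s * Complex.exp (q * phase B s) -
        2 * q * κ s * Complex.exp (q * phase B s) * (Real.exp (2 * s) * phase B s) := by
      unfold windowCoeff₁; ring
    rw [h2, h1]
    simp only [hk₂, window]
    push_cast
    ring
  have hk₁c : Continuous k₁ := continuous_iff_continuousAt.2 fun s => (hd s).continuousAt
  have hph : Continuous (phase B) :=
    continuous_iff_continuousAt.2 fun s => (hasDerivAt_phase B s).continuousAt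
  have hk₂c : Continuous k₂ := by
    have h0 := hκ.continuous_fun
    have h1 := hκ.continuous_deriv
    fun_prop
  have hwc := hκ.continuous_window B q
  have z₁ : ∀ s, 2 < |s| → k₁ s = 0 := fun s hs => by
    simp [hk₁, hκ.window_eq_zero B q s hs]
  have z₂ : ∀ s, 2 < |s| → k₂ s = 0 := fun s hs => by
    simp [hk₂, hκ.eq_zero s hs, hκ.eq_zero₁ s hs]
  have key := fourier_of_hasDerivAt hd (by fun_prop) z₁
    (fun s hs => by rw [z₂ s hs, hκ.window_eq_zero B q s hs]; simp) β
  have hF : 𝓕 (fun s => k₂ s - (4 * Real.pi * q * B : ℝ) * (window κ B q s * Complex.I)) β =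
      𝓕 k₂ β - (4 * Real.pi * q * B : ℝ) * (𝓕 (window κ B q) β * Complex.I) := by
    rw [Real.fourier_real_eq, Real.fourier_real_eq, Real.fourier_real_eq, ← integral_mul_const,
      ← integral_const_mul, ← integral_sub]
    · refine integral_congr_ae (Filter.Eventually.of_forall fun s => ?_)
      simp only [Circle.smul_def, smul_eq_mul]
      ring
    · exact integrable_fourierChar_smul β
        (integrable_of_eq_zero hk₂c z₂)
    · refine Integrable.const_mul (Integrable.mul_const ?_ _) _
      exact integrable_fourierChar_smul β
        (integrable_of_eq_zero hwc (hκ.window_eq_zero B q))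
  rw [hF] at key
  have hexp : ∀ s : ℝ, |s| ≤ 2 → Real.exp (2 * s) ≤ Real.exp 4 := fun s hs =>
    Real.exp_le_exp.2 (by linarith [(abs_le.1 hs).2])
  have b₁ : ‖𝓕 k₁ β‖ ≤ 4 * Real.exp 4 := norm_fourier_le_of_eq_zero z₁ (fun s => by
    rcases le_or_gt |s| 2 with hs | hs
    · rw [hk₁, norm_mul, Complex.norm_real, Real.norm_eq_abs, Real.abs_exp]
      have h1 := hexp s hs
      have h2 := (hκ.norm_window_le B q s).trans (hκ.le_one s)
      calc _ ≤ Real.exp 4 * 1 := by gcongr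
        _ = _ := mul_one _
    · rw [z₁ s hs, norm_zero]; positivity) β
  have b₂ : ‖𝓕 k₂ β‖ ≤ 4 * (3 * K * Real.exp 4) := norm_fourier_le_of_eq_zero z₂ (fun s => by
    rcases le_or_gt |s| 2 with hs | hs
    · rw [hk₂, norm_mul, norm_exp_phase, mul_one, Complex.norm_real, Real.norm_eq_abs, abs_mul,
        Real.abs_exp]
      have h1 := hexp s hs
      have h2 := hκ.bound₁ s
      have h3 := hκ.abs_le_one s
      have h4 : |κ₁ s + 2 * κ s| ≤ 3 * K := by
        refine (abs_add_le _ _).trans ?_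
        rw [abs_mul, abs_two]; linarith
      gcongr
    · rw [z₂ s hs, norm_zero]; positivity) β
  have hq : 0 < q := hc.trans_le hcq
  have hn : ‖((4 * Real.pi * q * B : ℝ) * (𝓕 (window κ B q) β * Complex.I) : ℂ)‖ =
      4 * Real.pi * q * |B| * ‖𝓕 (window κ B q) β‖ := by
    rw [norm_mul, norm_mul, Complex.norm_I, mul_one, Complex.norm_real, Real.norm_eq_abs,
      abs_mul, abs_of_pos (show 0 < 4 * Real.pi * q by positivity)]
  have e : ((4 * Real.pi * q * B : ℝ) * (𝓕 (window κ B q) β * Complex.I) : ℂ) =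
      𝓕 k₂ β - 2 * Real.pi * Complex.I * β * 𝓕 k₁ β := by rw [← key]; ring
  have hn₁ : ‖(2 * Real.pi * Complex.I * β * 𝓕 k₁ β : ℂ)‖ = 2 * Real.pi * |β| * ‖𝓕 k₁ β‖ := by
    simp [abs_of_pos Real.pi_pos]
  have hfin : 4 * Real.pi * q * |B| * ‖𝓕 (window κ B q) β‖ ≤
      4 * (3 * K * Real.exp 4) + 2 * Real.pi * 1 * (4 * Real.exp 4) := by
    rw [← hn, e]
    refine (norm_sub_le _ _).trans ?_
    rw [hn₁]
    gcongr
  have hB' := abs_pos.2 hB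
  rw [le_div_iff₀ (by positivity)]
  have h5 : 4 * Real.pi * (‖𝓕 (window κ B q) β‖ * (c * |B|)) ≤
      4 * Real.pi * (3 * K * Real.exp 4) := by
    calc _ = 4 * Real.pi * c * |B| * ‖𝓕 (window κ B q) β‖ := by ring
      _ ≤ 4 * Real.pi * q * |B| * ‖𝓕 (window κ B q) β‖ := by gcongr
      _ ≤ _ := hfin
      _ ≤ _ := by
        have h6 := Real.exp_pos 4
        have h7 : Real.exp 4 ≤ K * Real.exp 4 := by nlinarith
        nlinarith
  exact le_of_mul_le_mul_left h5 (by positivity)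

end IsCutoff

end Lyons

namespace Lyons

open FourierTransform

/-- **Decay of smooth unit windows** under the skew averaging operator. -/
lemma exists_norm_skew_window_le {t : ℝ} (ht : 0 < t) (ht1 : t < 1) {κ κ₁ κ₂ : ℝ → ℝ} {K : ℝ}
    (hκ : IsCutoff κ κ₁ κ₂ K) :
    ∃ N₀ : ℕ, ∃ σ : ℝ, 0 < σ ∧ σ < 1 ∧ ∀ c L : ℝ, 0 < c → 0 ≤ L → ∃ C > 0, ∀ N ≥ N₀,
      ∀ q : unitInterval → ℝ, (∀ r, c ≤ q r) → (∀ r, q r ≤ 1) →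
        (∀ r r', |q r - q r'| ≤ L * |(r : ℝ) - r'|) → ∀ B : ℝ, 1 ≤ |B| → ∀ k s r,
        ‖(skew ht N)^[k] (fun s r => window κ B (q r) s) s r‖ ≤
          C * (1 / |B| + |B| ^ 3 * σ ^ k) := by
  obtain ⟨N₀, σ, C₁, hσ0, hσ1, hC₁, hgap⟩ := exists_norm_twisted_iterate_le ht ht1
  refine ⟨N₀, σ, hσ0, hσ1, fun c L hc hL => ?_⟩
  have hK := hκ.one_le
  have hpi := Real.pi_gt_three
  set w₁ : ℝ → ℝ := fun β => (1 + β ^ 2)⁻¹ with hw₁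
  set w₂ : ℝ → ℝ := fun β => √|2 * Real.pi * β| * (1 + β ^ 2)⁻¹ with hw₂
  have hi₁ : Integrable w₁ := integrable_inv_one_add_sq
  have hi₂ : Integrable w₂ := by
    have h := integrable_rpow_neg_one_add_norm_sq (E := ℝ) (μ := volume) (r := 3 / 2)
      (by norm_num)
    refine (h.const_mul √(2 * Real.pi)).mono' (by fun_prop) (Filter.Eventually.of_forall fun β => ?_)
    have hp : 0 < 1 + β ^ 2 := by positivity
    rw [Real.norm_of_nonneg (by positivity), Real.norm_eq_abs, sq_abs]
    simp only [hw₂]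
    rw [abs_mul, abs_of_pos (by positivity), Real.sqrt_mul (by positivity), mul_assoc]
    refine mul_le_mul_of_nonneg_left ?_ (Real.sqrt_nonneg _)
    have h1 : √|β| ≤ (1 + β ^ 2) ^ (1 / 4 : ℝ) := by
      have h2 : |β| ≤ √(1 + β ^ 2) := Real.abs_le_sqrt (by linarith)
      refine (Real.sqrt_le_sqrt h2).trans (le_of_eq ?_)
      rw [Real.sqrt_eq_rpow, Real.sqrt_eq_rpow, ← Real.rpow_mul hp.le]
      norm_num
    calc √|β| * (1 + β ^ 2)⁻¹ ≤ (1 + β ^ 2) ^ (1 / 4 : ℝ) * (1 + β ^ 2)⁻¹ := by gcongr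
      _ = (1 + β ^ 2) ^ (-(3 / 2) / 2 : ℝ) := by
        rw [← Real.rpow_neg_one, ← Real.rpow_add hp]; norm_num
  set A := 3 * K * Real.exp 4 / c * 2 with hA
  set D := 8 * (29 * K * (2 * Real.pi * Real.exp 4) ^ 3) * (L + 1) with hD
  have hA0 : 0 < A := by positivity
  have hD0 : 0 < D := by positivity
  have hI₁ : 0 ≤ ∫ β, w₁ β := integral_nonneg fun β => by positivity
  have hI₂ : 0 ≤ ∫ β, w₂ β := integral_nonneg fun β => by positivity
  refine ⟨A * (∫ β, w₁ β) + C₁ * D * (∫ β, w₂ β) + 1, by positivity, ?_⟩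
  intro N hN q hcq hq1 hqL B hB k s r
  have hB0 : 0 < |B| := by linarith
  have hq0 : ∀ r, 0 ≤ q r := fun r => hc.le.trans (hcq r)
  set R := 2 * Real.pi * |B| * Real.exp 4 with hR
  have hR1 : 1 ≤ R := by
    have : 1 ≤ Real.exp 4 := Real.one_le_exp (by norm_num)
    calc (1 : ℝ) = 1 * 1 * 1 := by norm_num
      _ ≤ R := by rw [hR]; gcongr; linarith
  have hR' : ∀ s, |s| ≤ 2 → ‖phase B s‖ ≤ R := fun s => norm_phase_le
  have hDR : 8 * (29 * K * R ^ 3) * (L + 1) = D * |B| ^ 3 := by rw [hR, hD]; ring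
  set M : ℝ → ℝ := fun β => D * |B| ^ 3 * (1 + β ^ 2)⁻¹ with hM
  have hF₁ : ∀ β r, ‖𝓕 (window κ B (q r)) β‖ ≤ M β := fun β r => by
    refine (hκ.norm_fourier_window_le (hq0 r) (hq1 r) hR1 hR' β).trans ?_
    rw [hM, ← hDR]
    refine mul_le_mul_of_nonneg_right ?_ (by positivity)
    have h1 : R ^ 2 ≤ R ^ 3 := pow_le_pow_right₀ hR1 (by norm_num)
    calc 8 * (13 * K * R ^ 2) ≤ 8 * (29 * K * R ^ 3) := by gcongr; norm_num
      _ ≤ _ := le_mul_of_one_le_right (by positivity) (by linarith)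
  have hF₂ : ∀ β r r', ‖𝓕 (window κ B (q r)) β - 𝓕 (window κ B (q r')) β‖ ≤
      |(r : ℝ) - r'| * M β := fun β r r' => by
    refine (hκ.norm_fourier_window_sub_le (hq0 r) (hq1 r) (hq0 r') (hq1 r') hR1 hR' β).trans ?_
    have h1 : |q r - q r'| ≤ (L + 1) * |(r : ℝ) - r'| :=
      (hqL r r').trans (by gcongr; linarith)
    calc _ ≤ 8 * (29 * K * R ^ 3 * ((L + 1) * |(r : ℝ) - r'|)) * (1 + β ^ 2)⁻¹ := by gcongr
      _ = |(r : ℝ) - r'| * (8 * (29 * K * R ^ 3) * (L + 1) * (1 + β ^ 2)⁻¹) := by ring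
      _ = _ := by rw [hDR]
  have hFc : ∀ r, Continuous (𝓕 (window κ B (q r))) := fun r =>
    VectorFourier.fourierIntegral_continuous Real.continuous_fourierChar (by fun_prop)
      (integrable_of_eq_zero (hκ.continuous_window B (q r)) (hκ.window_eq_zero B (q r)))
  have hFi : ∀ r, Integrable (𝓕 (window κ B (q r))) := fun r =>
    (hi₁.const_mul (D * |B| ^ 3)).mono' (hFc r).aestronglyMeasurable
      (Filter.Eventually.of_forall fun β => hF₁ β r)
  set G : ℝ → ℝ → unitInterval → ℂ := fun β s r =>
    Complex.exp ((2 * Real.pi * β * s : ℝ) * Complex.I) * 𝓕 (window κ B (q r)) β with hG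
  have hGi : ∀ s r, Integrable (fun β => G β s r) := fun s r => by
    refine (hFi r).bdd_mul (c := 1) (Continuous.aestronglyMeasurable (by fun_prop))
      (Filter.Eventually.of_forall fun β => ?_)
    rw [Complex.norm_exp_ofReal_mul_I]
  have hinv : (fun s r => window κ B (q r) s) = fun s r => ∫ β, G β s r := by
    funext s r
    have h := Continuous.fourierInv_fourier_eq (hκ.continuous_window B (q r))
      (integrable_of_eq_zero (hκ.continuous_window B (q r)) (hκ.window_eq_zero B (q r))) (hFi r)
    conv_lhs => rw [← h]
    rw [Real.fourierInv_eq']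
    refine integral_congr_ae (Filter.Eventually.of_forall fun β => ?_)
    simp only [hG, smul_eq_mul]
    congr 3
    simp
    ring
  rw [hinv, (skew_iterate_integral ht N hGi k s r).2]
  have hpt : ∀ β, ‖(skew ht N)^[k] (G β) s r‖ ≤
      A / |B| * w₁ β + C₁ * D * (|B| ^ 3 * σ ^ k) * w₂ β := fun β => by
    rw [hG, skew_iterate_char, norm_mul, Complex.norm_exp_ofReal_mul_I, one_mul]
    have n₁ : 0 ≤ A / |B| * w₁ β := by positivity
    have n₂ : 0 ≤ C₁ * D * (|B| ^ 3 * σ ^ k) * w₂ β := by positivity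
    rcases le_or_gt |β| 1 with hβ | hβ
    · have h1 : ‖(twisted ht N (2 * Real.pi * β))^[k]
          (fun r => 𝓕 (window κ B (q r)) β) r‖ ≤ 3 * K * Real.exp 4 / (c * |B|) :=
        (norm_twisted_iterate_le ht N _ k _ r).trans
          (avg_iterate_le_of_le ht N k (by positivity) (fun r =>
            hκ.norm_fourier_window_low hc (hcq r) (abs_pos.1 hB0) hβ) r)
      have h2 : 3 * K * Real.exp 4 / (c * |B|) ≤ A / |B| * w₁ β := by
        have h3 : 1 / 2 ≤ w₁ β := by
          have : β ^ 2 ≤ 1 := (sq_le_one_iff_abs_le_one β).2 hβ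
          simp only [hw₁]
          rw [one_div]
          exact inv_anti₀ (by positivity) (by linarith)
        have h4 : 3 * K * Real.exp 4 / (c * |B|) = A / |B| * (1 / 2) := by
          rw [hA]; field_simp
        rw [h4]
        gcongr
      linarith
    · have h2π : 1 ≤ |2 * Real.pi * β| := by
        rw [abs_mul, abs_of_pos (by positivity)]; nlinarith
      have h1 := hgap N hN (2 * Real.pi * β) h2π (M β)
        (fun r => 𝓕 (window κ B (q r)) β) (hF₁ β) (fun y z => by
          refine (hF₂ β y z).trans ?_
          have hMβ : 0 ≤ M β := by positivity
          rw [mul_assoc]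
          exact le_mul_of_one_le_left (by positivity) h2π) k r
      refine h1.trans ?_
      have h3 : C₁ * √|2 * Real.pi * β| * σ ^ k * M β =
          C₁ * D * (|B| ^ 3 * σ ^ k) * w₂ β := by rw [hM, hw₂]; ring
      linarith
  refine (norm_integral_le_of_norm_le ((hi₁.const_mul _).add (hi₂.const_mul _))
    (Filter.Eventually.of_forall hpt)).trans ?_
  have hsum : ∫ β, ((fun β => A / |B| * w₁ β) + fun β => C₁ * D * (|B| ^ 3 * σ ^ k) * w₂ β) β =
      A / |B| * (∫ β, w₁ β) + C₁ * D * (|B| ^ 3 * σ ^ k) * ∫ β, w₂ β := by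
    rw [← integral_const_mul, ← integral_const_mul]
    exact integral_add (hi₁.const_mul _) (hi₂.const_mul _)
  rw [hsum]
  set I₁ := ∫ β, w₁ β
  set I₂ := ∫ β, w₂ β
  have e1 : A / |B| * I₁ = A * I₁ * (1 / |B|) := by ring
  have p1 : 0 ≤ 1 / |B| := by positivity
  have p2 : 0 ≤ |B| ^ 3 * σ ^ k := by positivity
  have p3 : 0 ≤ A * I₁ := by positivity
  have p4 : 0 ≤ C₁ * D * I₂ := by positivity
  rw [e1]
  nlinarith

end Lyons

namespace Lyons

open Finset

/-- The measure `ν` on `[0,1]` is stationary for the Lyons iterated function system. -/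
structure IsConductance (t : ℝ) (ν : Measure ℝ) : Prop where
  prob : IsProbabilityMeasure ν
  supp : ν (Set.Icc (0 : ℝ) 1)ᶜ = 0
  conf : ν = (1 / 2 : ℝ≥0∞) • Measure.map (fun x : ℝ => x / (1 + x)) ν
    + (1 / 2 : ℝ≥0∞) • Measure.map (fun x : ℝ => (x + t) / (1 + x + t)) ν

/-- The Fourier coefficient of the image of `ν` under `x ↦ e^{-2s} x / (1 + (1 - r) x / t)`, at
frequency `-a / 2π`, in absolute value. -/
noncomputable def coeff (t : ℝ) (ν : Measure ℝ) (a s : ℝ) (r : unitInterval) : ℝ :=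
  ‖∫ x : ℝ, Complex.exp ((a * Real.exp (-2 * s) * (x / (1 + (1 - r) / t * x)) : ℝ) *
    Complex.I) ∂ν‖

namespace IsConductance
variable {t : ℝ} {ν : Measure ℝ} (h : IsConductance t ν)
include h

lemma ae_mem : ∀ᵐ x ∂ν, x ∈ Set.Icc (0 : ℝ) 1 := by
  rw [ae_iff]; exact h.supp

lemma integrable {E : Type*} [NormedAddCommGroup E] {g : ℝ → E} {M : ℝ}
    (hg : StronglyMeasurable g) (hM : ∀ x, ‖g x‖ ≤ M) : Integrable g ν := by
  have := h.prob
  exact Integrable.of_bound hg.aestronglyMeasurable M (Filter.Eventually.of_forall hM)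

variable {E : Type*} [NormedAddCommGroup E] [NormedSpace ℝ E] {g : ℝ → E} {M : ℝ}

lemma integral_eq (hg : StronglyMeasurable g) (hM : ∀ x, ‖g x‖ ≤ M) :
    ∫ x, g x ∂ν = (1 / 2 : ℝ) • ∫ x, g (x / (1 + x)) ∂ν +
      (1 / 2 : ℝ) • ∫ x, g ((x + t) / (1 + x + t)) ∂ν := by
  have := h.prob
  have m0 : Measurable fun x : ℝ => x / (1 + x) := by fun_prop
  have m1 : Measurable fun x : ℝ => (x + t) / (1 + x + t) := by fun_prop
  have i0 : Integrable g (Measure.map (fun x : ℝ => x / (1 + x)) ν) :=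
    have := Measure.isProbabilityMeasure_map (μ := ν) m0.aemeasurable
    Integrable.of_bound hg.aestronglyMeasurable M (Filter.Eventually.of_forall hM)
  have i1 : Integrable g (Measure.map (fun x : ℝ => (x + t) / (1 + x + t)) ν) :=
    have := Measure.isProbabilityMeasure_map (μ := ν) m1.aemeasurable
    Integrable.of_bound hg.aestronglyMeasurable M (Filter.Eventually.of_forall hM)
  have e : ∫ x, g x ∂ν = _ := congrArg (fun μ => ∫ x, g x ∂μ) h.conf
  rw [e, integral_add_measure (i0.smul_measure (by simp)) (i1.smul_measure (by simp)),
    integral_smul_measure, integral_smul_measure, integral_map m0.aemeasurable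
    hg.aestronglyMeasurable, integral_map m1.aemeasurable hg.aestronglyMeasurable]
  simp

lemma integral_eq_sum (ht : 0 < t) (N : ℕ) (hg : StronglyMeasurable g) (hM : ∀ x, ‖g x‖ ≤ M) :
    ∫ x, g x ∂ν = ∑ n ∈ range N, wt n • ∫ x, g ((x + t) / (1 + (n + 1) * (x + t))) ∂ν +
      ((1 / 2 : ℝ) ^ N) • ∫ x, g (x / (1 + N * x)) ∂ν := by
  induction N with
  | zero => simp
  | succ k ih =>
    have e := h.integral_eq (g := fun x => g (x / (1 + k * x)))
      (hg.comp_measurable (by fun_prop)) (fun x => hM _)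
    have e0 : ∫ x, g (x / (1 + x) / (1 + k * (x / (1 + x)))) ∂ν =
        ∫ x, g (x / (1 + (k + 1 : ℕ) * x)) ∂ν := by
      refine integral_congr_ae (h.ae_mem.mono fun x hx => ?_)
      have hx0 := hx.1
      have : (0 : ℝ) < 1 + k * x + x := by positivity
      simp only
      congr 1
      push_cast
      field_simp
      ring_nf
    have e1 : ∫ x, g ((x + t) / (1 + x + t) / (1 + k * ((x + t) / (1 + x + t)))) ∂ν =
        ∫ x, g ((x + t) / (1 + (k + 1) * (x + t))) ∂ν := by
      refine integral_congr_ae (h.ae_mem.mono fun x hx => ?_)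
      have hx0 := hx.1
      have : (0 : ℝ) < 1 + x + t := by positivity
      have : (0 : ℝ) < 1 + k * (x + t) + (x + t) := by positivity
      simp only
      congr 1
      field_simp
      ring_nf
    rw [ih, sum_range_succ, e, e0, e1, smul_add, smul_smul, smul_smul, wt, ← pow_succ]
    abel

end IsConductance

lemma coeff_nonneg (t : ℝ) (ν : Measure ℝ) (a s : ℝ) (r : unitInterval) :
    0 ≤ coeff t ν a s r := norm_nonneg _

namespace IsConductance
variable {t : ℝ} {ν : Measure ℝ} (h : IsConductance t ν)
include h

lemma norm_integral_exp_le (f : ℝ → ℝ) :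
    ‖∫ x, Complex.exp ((f x : ℝ) * Complex.I) ∂ν‖ ≤ 1 := by
  have := h.prob
  refine (norm_integral_le_of_norm_le_const (C := 1) (Filter.Eventually.of_forall fun x => ?_)).trans
    (by simp)
  rw [Complex.norm_exp_ofReal_mul_I]

lemma coeff_le_one (a s : ℝ) (r : unitInterval) : coeff t ν a s r ≤ 1 :=
  h.norm_integral_exp_le _

lemma coeff_le (ht : 0 < t) (N : ℕ) (a s : ℝ) (r : unitInterval) :
    coeff t ν a s r ≤ skew ht N (coeff t ν a) s r + (1 / 2) ^ N := by
  set g : ℝ → ℂ := fun x => Complex.exp ((a * Real.exp (-2 * s) * (x / (1 + (1 - r) / t * x)) : ℝ) *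
    Complex.I) with hg
  have hgm : Measurable g := by fun_prop
  have hM : ∀ x, ‖g x‖ ≤ 1 := fun x => by rw [hg, Complex.norm_exp_ofReal_mul_I]
  have e := h.integral_eq_sum ht N hgm.stronglyMeasurable hM
  have hterm : ∀ n : ℕ, ‖∫ x, g ((x + t) / (1 + (n + 1) * (x + t))) ∂ν‖ =
      coeff t ν a (s + Real.log (den t n r)) (branch ht n r) := by
    intro n
    have hD := den_pos ht n r
    have hr1 := r.2.2
    have hDd : den t n r = 1 + (n + 1) * t + (1 - r) := by unfold den; ring
    have e1 : ∫ x, g ((x + t) / (1 + (n + 1) * (x + t))) ∂ν =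
        ∫ x, Complex.exp ((a * Real.exp (-2 * s) * (t / den t n r) : ℝ) * Complex.I) *
          Complex.exp ((a * Real.exp (-2 * (s + Real.log (den t n r))) *
            (x / (1 + (1 - branch ht n r) / t * x)) : ℝ) * Complex.I) ∂ν := by
      refine integral_congr_ae (h.ae_mem.mono fun x hx => ?_)
      have hx0 := hx.1
      simp only [hg]
      rw [← Complex.exp_add, ← add_mul, ← Complex.ofReal_add]
      congr 3
      have hexp : Real.exp (-2 * (s + Real.log (den t n r))) =
          Real.exp (-2 * s) / den t n r ^ 2 := by
        rw [mul_add, Real.exp_add, neg_mul 2 (Real.log _), Real.exp_neg, two_mul (Real.log _),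
          Real.exp_add, Real.exp_log hD]
        field_simp
      have hd : (t * den t n r) ≠ 0 := by positivity
      have p1 : 0 < 1 + (n + 1) * (x + t) := by positivity
      have p2 : 0 < t + (t * (n + 1) + (1 - r)) * (x + t) := by
        have : (0 : ℝ) ≤ t * (n + 1) + (1 - r) := by
          have : 0 ≤ t * ((n : ℝ) + 1) := by positivity
          linarith
        positivity
      have p3 : 0 < t * den t n r + (den t n r - 1) * x := by
        have h1 := one_add_t_le_den ht n r
        have : 0 ≤ (den t n r - 1) * x := mul_nonneg (by linarith) hx0
        positivity
      have l1 : (x + t) / (1 + (n + 1) * (x + t)) /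
          (1 + (1 - r) / t * ((x + t) / (1 + (n + 1) * (x + t)))) =
          t * (x + t) / (t + (t * (n + 1) + (1 - r)) * (x + t)) := by
        rw [div_div, div_eq_div_iff _ p2.ne']
        · field_simp; ring
        · have : (1 + ((n : ℝ) + 1) * (x + t)) * (1 + (1 - r) / t * ((x + t) / (1 + (n + 1) *
              (x + t)))) = (t + (t * (n + 1) + (1 - r)) * (x + t)) / t := by field_simp; ring
          rw [this]; positivity
      have l2 : x / (1 + (1 - 1 / den t n r) / t * x) =
          t * den t n r * x / (t * den t n r + (den t n r - 1) * x) := by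
        have : 1 + (1 - 1 / den t n r) / t * x =
            (t * den t n r + (den t n r - 1) * x) / (t * den t n r) := by field_simp
        rw [this, div_div_eq_mul_div, mul_comm x]
      have l3 : t + (t * (n + 1) + (1 - r)) * (x + t) = t * den t n r + (den t n r - 1) * x := by
        rw [hDd]; ring
      rw [hexp, branch_coe, l1, l2, l3]
      obtain ⟨P, hP⟩ : ∃ P, P = t * den t n r + (den t n r - 1) * x := ⟨_, rfl⟩
      rw [← hP] at p3 ⊢
      field_simp
      rw [hP]
      ring
    rw [e1, integral_const_mul, norm_mul, Complex.norm_exp_ofReal_mul_I, one_mul]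
    rfl
  have e' : coeff t ν a s r = ‖∫ x, g x ∂ν‖ := rfl
  rw [e', e]
  refine (norm_add_le _ _).trans (add_le_add ((norm_sum_le _ _).trans (le_of_eq ?_)) ?_)
  · refine sum_congr rfl fun n _ => ?_
    rw [norm_smul, Real.norm_of_nonneg (wt_pos n).le, hterm, smul_eq_mul]
  · rw [norm_smul, Real.norm_of_nonneg (by positivity)]
    exact mul_le_of_le_one_right (by positivity) (h.norm_integral_exp_le _)

/-- Stopping the cocycle when it enters a window `[r₀, r₀ + W]`. -/
lemma coeff_le_sum (ht : 0 < t) (N : ℕ) (a : ℝ) {r₀ W : ℝ} (hW : Real.log (2 + t * N) ≤ W)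
    (k : ℕ) : ∀ (s : ℝ) (r : unitInterval), s ≤ r₀ + W → r₀ ≤ s + k * Real.log (1 + t) →
      coeff t ν a s r ≤ ∑ i ∈ range (k + 1), (skew ht N)^[i]
        (fun s r => if r₀ ≤ s ∧ s ≤ r₀ + W then coeff t ν a s r else 0) s r + k * (1 / 2) ^ N := by
  set G : ℝ → unitInterval → ℝ :=
    fun s r => if r₀ ≤ s ∧ s ≤ r₀ + W then coeff t ν a s r else 0 with hG
  have hG0 : ∀ s r, 0 ≤ G s r := fun s r => by
    simp only [hG]; split_ifs
    · exact coeff_nonneg ..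
    · exact le_rfl
  have key : ∀ k (s : ℝ) (r : unitInterval), r₀ ≤ s → s ≤ r₀ + W →
      coeff t ν a s r ≤ ∑ i ∈ range (k + 1), (skew ht N)^[i] G s r + k * (1 / 2) ^ N := by
    intro k s r h1 h2
    rw [sum_range_succ']
    have h3 : (skew ht N)^[0] G s r = coeff t ν a s r := if_pos ⟨h1, h2⟩
    have h4 : 0 ≤ ∑ i ∈ range k, (skew ht N)^[i + 1] G s r :=
      sum_nonneg fun i _ => skew_iterate_nonneg ht N _ hG0 s r
    have h5 : (0 : ℝ) ≤ k * (1 / 2) ^ N := by positivity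
    linarith
  induction k with
  | zero =>
    intro s r h1 h2
    exact key 0 s r (by simpa using h2) h1
  | succ k ih =>
    intro s r h1 h2
    rcases le_or_gt r₀ s with h3 | h3
    · exact key (k + 1) s r h3 h1
    refine (h.coeff_le ht N a s r).trans ?_
    have hstep : skew ht N (coeff t ν a) s r ≤
        ∑ n ∈ range N, wt n * (∑ i ∈ range (k + 1), (skew ht N)^[i] G
          (s + Real.log (den t n r)) (branch ht n r) + k * (1 / 2) ^ N) := by
      refine sum_le_sum fun n hn => mul_le_mul_of_nonneg_left (ih _ _ ?_ ?_) (wt_pos n).le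
      · have hD : Real.log (den t n r) ≤ W := by
          refine le_trans (Real.log_le_log (den_pos ht n r) ?_) hW
          have hn' : (n : ℝ) + 1 ≤ N := by exact_mod_cast mem_range.1 hn
          have := r.2.1
          have : t * ((n : ℝ) + 1) ≤ t * N := by gcongr
          unfold den; linarith
        linarith
      · have hD : Real.log (1 + t) ≤ Real.log (den t n r) :=
          Real.log_le_log (by positivity) (one_add_t_le_den ht n r)
        push_cast at h2
        linarith
    have hsplit : ∑ n ∈ range N, wt n * (∑ i ∈ range (k + 1), (skew ht N)^[i] G
          (s + Real.log (den t n r)) (branch ht n r) + k * (1 / 2) ^ N) =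
        ∑ i ∈ range (k + 1), (skew ht N)^[i + 1] G s r +
          (∑ n ∈ range N, wt n) * (k * (1 / 2) ^ N) := by
      simp only [skew_iterate_succ, smul_eq_mul, mul_add, sum_add_distrib, mul_sum, sum_mul]
      rw [sum_comm]
    rw [hsplit] at hstep
    have h6 : (∑ n ∈ range N, wt n) * (k * (1 / 2) ^ N) ≤ 1 * ((k : ℝ) * (1 / 2) ^ N) :=
      mul_le_mul_of_nonneg_right (sum_wt_le_one N) (by positivity)
    rw [sum_range_succ' _ (k + 1)]
    have h7 : 0 ≤ (skew ht N)^[0] G s r := hG0 s r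
    push_cast
    linarith

end IsConductance

end Lyons

namespace Lyons

open Finset

/-- The function `q` with `x / (1 + y x) - x' / (1 + y x') = (x - x') q`, `y = (1 - r) / t`. -/
noncomputable def pairWeight (t x x' : ℝ) (r : unitInterval) : ℝ :=
  1 / (1 + (1 - r) / t * x) * (1 / (1 + (1 - r) / t * x'))

section pairWeight
variable {t x x' : ℝ} (ht : 0 < t) (hx : x ∈ Set.Icc (0 : ℝ) 1) (hx' : x' ∈ Set.Icc (0 : ℝ) 1)
include ht hx

lemma one_le_one_add_mul (r : unitInterval) : 1 ≤ 1 + (1 - r) / t * x := by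
  have := mul_nonneg (div_nonneg (sub_nonneg.2 r.2.2) ht.le) hx.1
  linarith

lemma one_div_one_add_mul_le (r : unitInterval) : 1 / (1 + (1 - r) / t * x) ≤ 1 := by
  have := one_le_one_add_mul ht hx r
  rw [div_le_one (by linarith)]; exact this

lemma le_one_div_one_add_mul (r : unitInterval) : 1 / (1 + 1 / t) ≤ 1 / (1 + (1 - r) / t * x) := by
  have := one_le_one_add_mul ht hx r
  refine one_div_le_one_div_of_le (by linarith) ?_
  have h1 : (1 - r) / t * x ≤ 1 / t * 1 := by
    have := r.2.1
    gcongr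
    · exact hx.1
    · linarith
    · exact hx.2
  linarith

lemma abs_one_div_one_add_mul_sub_le (r r' : unitInterval) :
    |1 / (1 + (1 - r) / t * x) - 1 / (1 + (1 - r') / t * x)| ≤ 1 / t * |(r : ℝ) - r'| := by
  have h1 := one_le_one_add_mul ht hx r
  have h2 := one_le_one_add_mul ht hx r'
  have e : 1 / (1 + (1 - r) / t * x) - 1 / (1 + (1 - r') / t * x) =
      1 / t * ((r : ℝ) - r') * (x / ((1 + (1 - r) / t * x) * (1 + (1 - r') / t * x))) := by
    rw [div_sub_div _ _ (by linarith) (by linarith), mul_div_assoc']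
    congr 1
    field_simp
    ring
  have h3 : 1 ≤ (1 + (1 - r) / t * x) * (1 + (1 - r') / t * x) := by nlinarith
  rw [e, abs_mul, abs_mul, abs_of_pos (show 0 < 1 / t by positivity)]
  refine mul_le_of_le_one_right (by positivity) ?_
  rw [abs_of_nonneg (div_nonneg hx.1 (by linarith)), div_le_one (by linarith)]
  linarith [hx.2]

include hx'

lemma pairWeight_le_one (r : unitInterval) : pairWeight t x x' r ≤ 1 := by
  have h := one_le_one_add_mul ht hx' r
  exact mul_le_one₀ (one_div_one_add_mul_le ht hx r) (by positivity)
    (one_div_one_add_mul_le ht hx' r)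

lemma le_pairWeight (r : unitInterval) : (1 / (1 + 1 / t)) ^ 2 ≤ pairWeight t x x' r := by
  rw [sq, pairWeight]
  have h := one_le_one_add_mul ht hx r
  exact mul_le_mul (le_one_div_one_add_mul ht hx r) (le_one_div_one_add_mul ht hx' r)
    (by positivity) (by positivity)

lemma abs_pairWeight_sub_le (r r' : unitInterval) :
    |pairWeight t x x' r - pairWeight t x x' r'| ≤ 2 / t * |(r : ℝ) - r'| := by
  have h1 := abs_one_div_one_add_mul_sub_le ht hx r r'
  have h2 := abs_one_div_one_add_mul_sub_le ht hx' r r'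
  have h3 := one_div_one_add_mul_le ht hx r'
  have h4 := one_div_one_add_mul_le ht hx' r
  have h5 : 0 < 1 / (1 + (1 - (r' : ℝ)) / t * x) := by
    have := one_le_one_add_mul ht hx r'; positivity
  have h6 : 0 < 1 / (1 + (1 - (r : ℝ)) / t * x') := by
    have := one_le_one_add_mul ht hx' r; positivity
  have h7 : 2 / t * |(r : ℝ) - r'| = 1 / t * |(r : ℝ) - r'| + 1 / t * |(r : ℝ) - r'| := by ring
  unfold pairWeight
  rw [h7]
  generalize 1 / (1 + (1 - (r : ℝ)) / t * x) = A at *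
  generalize 1 / (1 + (1 - (r' : ℝ)) / t * x) = A' at *
  generalize 1 / (1 + (1 - (r : ℝ)) / t * x') = B at *
  generalize 1 / (1 + (1 - (r' : ℝ)) / t * x') = B' at *
  calc |A * B - A' * B'| = |(A - A') * B + A' * (B - B')| := by ring_nf
    _ ≤ |A - A'| * |B| + |A'| * |B - B'| := by
      rw [← abs_mul, ← abs_mul]; exact abs_add_le _ _
    _ ≤ |A - A'| * 1 + 1 * |B - B'| := by
      gcongr
      · rw [abs_of_pos h6]; exact h4
      · rw [abs_of_pos h5]; exact h3
    _ ≤ _ := by rw [mul_one, one_mul]; exact add_le_add h1 h2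

lemma sub_eq_mul_pairWeight (r : unitInterval) :
    x / (1 + (1 - r) / t * x) - x' / (1 + (1 - r) / t * x') = (x - x') * pairWeight t x x' r := by
  have h1 := one_le_one_add_mul ht hx r
  have h2 := one_le_one_add_mul ht hx' r
  unfold pairWeight
  generalize (1 - (r : ℝ)) / t = y at *
  have h1' : 1 + y * x ≠ 0 := by linarith
  have h2' : 1 + y * x' ≠ 0 := by linarith
  rw [div_sub_div _ _ h1' h2', div_mul_div_comm, mul_div_assoc']
  congr 1
  ring

end pairWeight

namespace IsConductance
variable {t : ℝ} {ν : Measure ℝ} (h : IsConductance t ν)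
include h

lemma sq_coeff_eq (a s : ℝ) (r : unitInterval) : ((coeff t ν a s r ^ 2 : ℝ) : ℂ) =
    ∫ p, Complex.exp ((a * Real.exp (-2 * s) * (p.1 / (1 + (1 - r) / t * p.1) -
      p.2 / (1 + (1 - r) / t * p.2)) : ℝ) * Complex.I) ∂ν.prod ν := by
  have := h.prob
  have e := integral_prod_mul (μ := ν) (ν := ν)
    (fun x : ℝ => Complex.exp ((a * Real.exp (-2 * s) * (x / (1 + (1 - r) / t * x)) : ℝ) *
      Complex.I))
    (fun x : ℝ => (starRingEnd ℂ) (Complex.exp ((a * Real.exp (-2 * s) *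
      (x / (1 + (1 - r) / t * x)) : ℝ) * Complex.I)))
  rw [integral_conj, Complex.mul_conj, Complex.normSq_eq_norm_sq] at e
  rw [coeff, ← e]
  refine integral_congr_ae (Filter.Eventually.of_forall fun p => ?_)
  simp only
  rw [← Complex.exp_conj, ← Complex.exp_add]
  congr 1
  rw [map_mul, Complex.conj_ofReal, Complex.conj_I]
  push_cast
  ring

lemma skew_sq_coeff_le (ht : 0 < t) (N : ℕ) {κ κ₁ κ₂ : ℝ → ℝ} {K : ℝ} (hκ : IsCutoff κ κ₁ κ₂ K)
    (i : ℕ) (a s s' : ℝ) (r : unitInterval) {δ η : ℝ} (hη : 0 ≤ η)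
    (hfar : ∀ x ∈ Set.Icc (0 : ℝ) 1, ∀ x' ∈ Set.Icc (0 : ℝ) 1, δ < |x - x'| →
      ‖(skew ht N)^[i] (fun s r => window κ (a * (x - x') * Real.exp (-2 * s') / (2 * Real.pi))
        (pairWeight t x x' r) s) (s - s') r‖ ≤ η) :
    (skew ht N)^[i] (fun s r => κ (s - s') * coeff t ν a s r ^ 2) s r ≤
      η + (ν.prod ν).real {p | |p.1 - p.2| ≤ δ} := by
  have := h.prob
  set F : ℝ × ℝ → ℝ → unitInterval → ℂ := fun p s r => κ (s - s') *
    Complex.exp ((a * Real.exp (-2 * s) * (p.1 / (1 + (1 - r) / t * p.1) -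
      p.2 / (1 + (1 - r) / t * p.2)) : ℝ) * Complex.I) with hF
  have hF1 : ∀ p s r, ‖F p s r‖ ≤ 1 := fun p s r => by
    simp only [hF]
    rw [norm_mul, Complex.norm_exp_ofReal_mul_I, mul_one, Complex.norm_real]
    exact hκ.abs_le_one _
  have hFi : ∀ s r, Integrable (fun p => F p s r) (ν.prod ν) := fun s r => by
    refine Integrable.of_bound (Measurable.aestronglyMeasurable ?_) 1
      (Filter.Eventually.of_forall fun p => hF1 p s r)
    simp only [hF]
    fun_prop
  obtain ⟨hi, he⟩ := skew_iterate_integral ht N hFi i s r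
  have e1 : (((skew ht N)^[i] (fun s r => κ (s - s') * coeff t ν a s r ^ 2) s r : ℝ) : ℂ) =
      ∫ p, (skew ht N)^[i] (F p) s r ∂ν.prod ν := by
    rw [← skew_iterate_ofReal, ← he]
    refine congrArg (fun G => (skew ht N)^[i] G s r) (funext fun s => funext fun r => ?_)
    rw [Complex.ofReal_mul, h.sq_coeff_eq, ← integral_const_mul]
  have hmem : ∀ᵐ p ∂ν.prod ν, p.1 ∈ Set.Icc (0 : ℝ) 1 ∧ p.2 ∈ Set.Icc (0 : ℝ) 1 :=
    (Measure.quasiMeasurePreserving_fst.ae h.ae_mem).and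
      (Measure.quasiMeasurePreserving_snd.ae h.ae_mem)
  have hms : MeasurableSet {p : ℝ × ℝ | |p.1 - p.2| ≤ δ} :=
    measurableSet_le (by fun_prop) measurable_const
  have hb : ∀ᵐ p ∂ν.prod ν, ‖(skew ht N)^[i] (F p) s r‖ ≤
      η + Set.indicator {p : ℝ × ℝ | |p.1 - p.2| ≤ δ} (fun _ => (1 : ℝ)) p := by
    refine hmem.mono fun p hp => ?_
    rcases le_or_gt |p.1 - p.2| δ with hd | hd
    · rw [Set.indicator_of_mem (by exact hd)]
      refine ((norm_skew_iterate_le ht N i _ s r).trans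
        (skew_iterate_le_of_le ht N i zero_le_one (fun s r => hF1 p s r) s r)).trans ?_
      linarith
    · rw [Set.indicator_of_notMem (by simpa using hd), add_zero]
      have e2 : F p = fun s r => (fun s r => window κ (a * (p.1 - p.2) * Real.exp (-2 * s') /
          (2 * Real.pi)) (pairWeight t p.1 p.2 r) s) (s - s') r := by
        funext s r
        simp only [hF, window, phase]
        rw [sub_eq_mul_pairWeight ht hp.1 hp.2, ← mul_assoc _ _ Complex.I, ← Complex.ofReal_mul]
        congr 4
        have : Real.exp (-2 * s) = Real.exp (-2 * s') * Real.exp (-2 * (s - s')) := by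
          rw [← Real.exp_add]; ring_nf
        rw [this]
        field_simp
      rw [e2]
      exact (congrArg norm (skew_iterate_translate ht N s' i _ s r)).trans_le
        (hfar _ hp.1 _ hp.2 hd)
  have hbi : Integrable (fun p => η + Set.indicator {p : ℝ × ℝ | |p.1 - p.2| ≤ δ}
      (fun _ => (1 : ℝ)) p) (ν.prod ν) :=
    (integrable_const _).add ((integrable_const _).indicator hms)
  have e3 := norm_integral_le_of_norm_le hbi hb
  rw [← e1, integral_add (integrable_const _) ((integrable_const _).indicator hms),
    integral_indicator_const _ hms] at e3
  simp only [Complex.norm_real, integral_const, probReal_univ, smul_eq_mul, one_mul, mul_one] at e3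
  exact (le_abs_self _).trans e3

/-- Cauchy–Schwarz for the contribution of the window `[r₀, r₀ + W]`. -/
lemma sq_skew_stopped_coeff_le (ht : 0 < t) (N : ℕ) {κ κ₁ κ₂ : ℝ → ℝ} {K : ℝ}
    (hκ : IsCutoff κ κ₁ κ₂ K) (i J : ℕ) (a s : ℝ) (r : unitInterval) {r₀ W δ η : ℝ}
    (hJ : W < J) (hη : 0 ≤ η)
    (hfar : ∀ j < J, ∀ x ∈ Set.Icc (0 : ℝ) 1, ∀ x' ∈ Set.Icc (0 : ℝ) 1, δ < |x - x'| →
      ‖(skew ht N)^[i] (fun s r => window κ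
        (a * (x - x') * Real.exp (-2 * (r₀ + j)) / (2 * Real.pi))
        (pairWeight t x x' r) s) (s - (r₀ + j)) r‖ ≤ η) :
    ((skew ht N)^[i] (fun s r => if r₀ ≤ s ∧ s ≤ r₀ + W then coeff t ν a s r else 0) s r) ^ 2 ≤
      J * (η + (ν.prod ν).real {p | |p.1 - p.2| ≤ δ}) := by
  refine (sq_skew_iterate_le ht N i _ s r).trans ?_
  have hdom : ∀ s r, (if r₀ ≤ s ∧ s ≤ r₀ + W then coeff t ν a s r else 0) ^ 2 ≤
      ∑ j ∈ range J, κ (s - (r₀ + j)) * coeff t ν a s r ^ 2 := by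
    intro s r
    have hnn : ∀ j ∈ range J, 0 ≤ κ (s - (r₀ + j)) * coeff t ν a s r ^ 2 :=
      fun j _ => mul_nonneg (hκ.nonneg _) (sq_nonneg _)
    split_ifs with hs
    · have h0 : 0 ≤ s - r₀ := by linarith [hs.1]
      have h1 := Nat.floor_le h0
      have h2 := Nat.lt_floor_add_one (s - r₀)
      have h3 : ⌊s - r₀⌋₊ < J := by
        have : (⌊s - r₀⌋₊ : ℝ) < J := by linarith [hs.2]
        exact_mod_cast this
      refine le_trans (le_of_eq ?_) (single_le_sum hnn (mem_range.2 h3))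
      rw [hκ.eq_one _ (abs_le.2 ⟨by linarith, by linarith⟩), one_mul]
    · rw [zero_pow two_ne_zero]; exact sum_nonneg hnn
  refine (skew_iterate_mono ht N i hdom s r).trans ?_
  rw [skew_iterate_sum]
  refine (sum_le_sum fun (j : ℕ) hj => h.skew_sq_coeff_le ht N hκ i a s (r₀ + j) r hη
    (hfar j (mem_range.1 hj))).trans ?_
  rw [sum_const, card_range, nsmul_eq_mul]

end IsConductance

end Lyons

namespace Lyons

open Finset

lemma abs_sub_le_mul_branch {t : ℝ} (ht : 0 < t) (ht1 : t < 1) {n l : ℕ} (hn : n < l) {u v : ℝ}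
    (hu : u ∈ Set.Icc (0 : ℝ) 1) (hv : v ∈ Set.Icc (0 : ℝ) 1) :
    |u - v| ≤ (1 + 2 * l) ^ 2 * |(u + t) / (1 + (n + 1) * (u + t)) -
      (v + t) / (1 + (n + 1) * (v + t))| := by
  have key : ∀ w ∈ Set.Icc (0 : ℝ) 1, 0 < 1 + ((n : ℝ) + 1) * (w + t) ∧
      1 + ((n : ℝ) + 1) * (w + t) ≤ 1 + 2 * l := by
    intro w hw
    have hn' : (n : ℝ) + 1 ≤ l := by exact_mod_cast hn
    have hw0 := hw.1
    refine ⟨by positivity, ?_⟩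
    have : ((n : ℝ) + 1) * (w + t) ≤ l * 2 := by
      gcongr
      linarith [hw.2]
    linarith
  obtain ⟨u0, u1⟩ := key u hu
  obtain ⟨v0, v1⟩ := key v hv
  have e : (u + t) / (1 + (n + 1) * (u + t)) - (v + t) / (1 + (n + 1) * (v + t)) =
      (u - v) / ((1 + (n + 1) * (u + t)) * (1 + (n + 1) * (v + t))) := by
    rw [div_sub_div _ _ u0.ne' v0.ne']
    congr 1
    ring
  rw [e, abs_div, abs_of_pos (mul_pos u0 v0), mul_div_assoc', le_div_iff₀ (mul_pos u0 v0),
    mul_comm, sq]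
  gcongr

lemma abs_sub_le_mul_parabolic {l : ℕ} {u v : ℝ}
    (hu : u ∈ Set.Icc (0 : ℝ) 1) (hv : v ∈ Set.Icc (0 : ℝ) 1) :
    |u - v| ≤ (1 + 2 * l) ^ 2 * |u / (1 + l * u) - v / (1 + l * v)| := by
  have key : ∀ w ∈ Set.Icc (0 : ℝ) 1, 0 < 1 + (l : ℝ) * w ∧ 1 + (l : ℝ) * w ≤ 1 + 2 * l := by
    intro w hw
    have hw0 := hw.1
    refine ⟨by positivity, ?_⟩
    have : (l : ℝ) * w ≤ l * 2 := by
      gcongr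
      linarith [hw.2]
    linarith
  obtain ⟨u0, u1⟩ := key u hu
  obtain ⟨v0, v1⟩ := key v hv
  have e : u / (1 + l * u) - v / (1 + l * v) = (u - v) / ((1 + l * u) * (1 + l * v)) := by
    rw [div_sub_div _ _ u0.ne' v0.ne']
    congr 1
    ring
  rw [e, abs_div, abs_of_pos (mul_pos u0 v0), mul_div_assoc', le_div_iff₀ (mul_pos u0 v0),
    mul_comm, sq]
  gcongr

namespace IsConductance
variable {t : ℝ} {ν : Measure ℝ} (h : IsConductance t ν)
include h

lemma integral_indicator_comp_le {φ : ℝ → ℝ} (hφ : Measurable φ) {K x ρ m : ℝ} (hm0 : 0 ≤ m)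
    (hK : ∀ u ∈ Set.Icc (0 : ℝ) 1, ∀ v ∈ Set.Icc (0 : ℝ) 1, |u - v| ≤ K * |φ u - φ v|)
    (hK0 : 0 ≤ K) (hm : ∀ u, ν.real (Metric.closedBall u (2 * K * ρ)) ≤ m) :
    ∫ y, (Metric.closedBall x ρ).indicator (fun _ => (1 : ℝ)) (φ y) ∂ν ≤ m := by
  have := h.prob
  have hmeas : Measurable ((Metric.closedBall x ρ).indicator (fun _ => (1 : ℝ))) :=
    measurable_const.indicator measurableSet_closedBall
  by_cases hex : ∃ u ∈ Set.Icc (0 : ℝ) 1, φ u ∈ Metric.closedBall x ρ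
  · obtain ⟨u, hu, huφ⟩ := hex
    have hle : ∀ᵐ y ∂ν, (Metric.closedBall x ρ).indicator (fun _ => (1 : ℝ)) (φ y) ≤
        (Metric.closedBall u (2 * K * ρ)).indicator (fun _ => (1 : ℝ)) y := by
      refine h.ae_mem.mono fun y hy => ?_
      by_cases hyφ : φ y ∈ Metric.closedBall x ρ
      · have hyu : y ∈ Metric.closedBall u (2 * K * ρ) := by
          rw [Metric.mem_closedBall, Real.dist_eq] at *
          have h1 : |φ y - φ u| ≤ 2 * ρ := by
            rw [abs_le] at *
            constructor <;> linarith [hyφ.1, hyφ.2, huφ.1, huφ.2]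
          calc |y - u| ≤ K * |φ y - φ u| := hK y hy u hu
            _ ≤ K * (2 * ρ) := by gcongr
            _ = _ := by ring
        rw [Set.indicator_of_mem hyφ, Set.indicator_of_mem hyu]
      · rw [Set.indicator_of_notMem hyφ]
        exact Set.indicator_nonneg (fun _ _ => zero_le_one) _
    have hb : ∀ (S : Set ℝ) y, ‖S.indicator (fun _ => (1 : ℝ)) y‖ ≤ 1 := fun S y => by
      by_cases hy : y ∈ S <;> simp [hy]
    refine (integral_mono_ae (h.integrable (hmeas.comp hφ).stronglyMeasurable
      (fun y => hb _ (φ y))) ((integrable_const (1 : ℝ)).indicator measurableSet_closedBall)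
      hle).trans ?_
    rw [integral_indicator_const _ measurableSet_closedBall, smul_eq_mul, mul_one]
    exact hm u
  · push Not at hex
    rw [integral_congr_ae (g := fun _ => (0 : ℝ)) (h.ae_mem.mono fun y hy =>
      Set.indicator_of_notMem (hex y hy) _)]
    simpa using hm0

/-- A small ball misses one of the branches, so its mass contracts. -/
lemma real_closedBall_le (ht : 0 < t) (ht1 : t < 1) {l : ℕ} (hl : 1 ≤ l) {x ρ m : ℝ} (hm0 : 0 ≤ m)
    (hρ : 1 / (1 + l) + 2 * ρ < t / (1 + t))
    (hm : ∀ u, ν.real (Metric.closedBall u (2 * (1 + 2 * l) ^ 2 * ρ)) ≤ m) :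
    ν.real (Metric.closedBall x ρ) ≤ (1 - (1 / 2) ^ l) * m := by
  have := h.prob
  set g := (Metric.closedBall x ρ).indicator (fun _ => (1 : ℝ)) with hg
  have hmeas : Measurable g := measurable_const.indicator measurableSet_closedBall
  have hb : ∀ y, ‖g y‖ ≤ 1 := fun y => by
    by_cases hy : y ∈ Metric.closedBall x ρ <;> simp [hg, hy]
  have e0 : ∫ y, g y ∂ν = ν.real (Metric.closedBall x ρ) := by
    rw [hg, integral_indicator_const _ measurableSet_closedBall, smul_eq_mul, mul_one]
  have e := h.integral_eq_sum ht l hmeas.stronglyMeasurable hb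
  rw [e0] at e
  have hbr : ∀ n ∈ range l, ∫ y, g ((y + t) / (1 + (n + 1) * (y + t))) ∂ν ≤ m := fun n hn =>
    h.integral_indicator_comp_le (by fun_prop) hm0
      (fun u hu v hv => abs_sub_le_mul_branch ht ht1 (mem_range.1 hn) hu hv) (by positivity) hm
  have hpar : ∫ y, g (y / (1 + l * y)) ∂ν ≤ m :=
    h.integral_indicator_comp_le (by fun_prop) hm0
      (fun u hu v hv => abs_sub_le_mul_parabolic hu hv) (by positivity) hm
  have hsum := sum_wt l
  have hpow : (0 : ℝ) < (1 / 2) ^ l := by positivity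
  rcases le_or_gt (x - ρ) (1 / (1 + l)) with hx | hx
  · have hz : ∫ y, g ((y + t) / (1 + ((0 : ℕ) + 1) * (y + t))) ∂ν = 0 := by
      rw [integral_congr_ae (g := fun _ => (0 : ℝ)) (h.ae_mem.mono fun y hy =>
        Set.indicator_of_notMem ?_ _), integral_zero]
      have hy0 := hy.1
      have h1 : t / (1 + t) ≤ (y + t) / (1 + ((0 : ℕ) + 1) * (y + t)) := by
        rw [div_le_div_iff₀ (by positivity) (by positivity)]
        push_cast
        nlinarith
      rw [Metric.mem_closedBall, Real.dist_eq, abs_le]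
      intro h2
      linarith [h2.2]
    have hr : ∀ n ∈ range l, wt n • ∫ y, g ((y + t) / (1 + (n + 1) * (y + t))) ∂ν ≤
        wt n * m - if n = 0 then 1 / 2 * m else 0 := by
      intro n hn
      rw [smul_eq_mul]
      split_ifs with h0
      · subst h0
        rw [hz, wt]
        simp
      · rw [sub_zero]
        exact mul_le_mul_of_nonneg_left (hbr n hn) (wt_pos n).le
    have h3 := sum_le_sum hr
    rw [sum_sub_distrib, ← sum_mul, hsum, sum_ite_eq' , if_pos (mem_range.2 hl)] at h3
    have h4 : ((1 / 2 : ℝ) ^ l) • ∫ y, g (y / (1 + l * y)) ∂ν ≤ (1 / 2 : ℝ) ^ l * m :=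
      mul_le_mul_of_nonneg_left hpar hpow.le
    have h5 : (1 / 2 : ℝ) ^ l ≤ 1 / 2 := by
      calc (1 / 2 : ℝ) ^ l ≤ (1 / 2) ^ 1 := pow_le_pow_of_le_one (by norm_num) (by norm_num) hl
        _ = 1 / 2 := pow_one _
    rw [e]
    nlinarith
  · have hz : ∫ y, g (y / (1 + l * y)) ∂ν = 0 := by
      rw [integral_congr_ae (g := fun _ => (0 : ℝ)) (h.ae_mem.mono fun y hy =>
        Set.indicator_of_notMem ?_ _), integral_zero]
      have hy0 := hy.1
      have h1 : y / (1 + l * y) ≤ 1 / (1 + l) := by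
        rw [div_le_div_iff₀ (by positivity) (by positivity)]
        nlinarith [hy.2]
      rw [Metric.mem_closedBall, Real.dist_eq, abs_le]
      intro h2
      linarith [h2.1]
    have h3 : ∑ n ∈ range l, wt n • ∫ y, g ((y + t) / (1 + (n + 1) * (y + t))) ∂ν ≤
        ∑ n ∈ range l, wt n * m :=
      sum_le_sum fun n hn => mul_le_mul_of_nonneg_left (hbr n hn) (wt_pos n).le
    rw [← sum_mul, hsum] at h3
    rw [e, hz, smul_zero, add_zero]
    exact h3

/-- The measure `ν` is Frostman regular. -/
lemma exists_real_closedBall_le (ht : 0 < t) (ht1 : t < 1) :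
    ∃ C : ℝ, 0 < C ∧ ∃ s : ℝ, 0 < s ∧ ∀ x ρ : ℝ, 0 < ρ → ν.real (Metric.closedBall x ρ) ≤ C * ρ ^ s := by
  have := h.prob
  have ht2 : 0 < t / (1 + t) := by positivity
  obtain ⟨k, hk⟩ := exists_nat_one_div_lt ht2
  set l := k + 1 with hl
  have hl1 : 1 ≤ l := by omega
  have hlt : 1 / (1 + (l : ℝ)) < t / (1 + t) := by
    refine lt_of_le_of_lt ?_ hk
    rw [hl]; push_cast
    exact one_div_le_one_div_of_le (by positivity) (by linarith)
  clear_value l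
  obtain ⟨ρ₀, hρ₀, hρ₀'⟩ : ∃ ρ₀ > 0, ∀ ρ ≤ ρ₀, 1 / (1 + (l : ℝ)) + 2 * ρ < t / (1 + t) :=
    ⟨(t / (1 + t) - 1 / (1 + (l : ℝ))) / 3, by linarith, fun ρ hρ => by linarith⟩
  obtain ⟨A, hA⟩ : ∃ A : ℝ, A = 2 * (1 + 2 * l) ^ 2 := ⟨_, rfl⟩
  have hl1' : (1 : ℝ) ≤ l := by exact_mod_cast hl1
  have hA1 : 1 < A := by rw [hA]; nlinarith
  obtain ⟨q, hq⟩ : ∃ q : ℝ, q = 1 - (1 / 2) ^ l := ⟨_, rfl⟩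
  have hq1 : q < 1 := by
    have : (0 : ℝ) < (1 / 2) ^ l := by positivity
    linarith
  have hq0 : 0 < q := by
    have : (1 / 2 : ℝ) ^ l < 1 := pow_lt_one₀ (by norm_num) (by norm_num) (by omega)
    linarith
  obtain ⟨s, hs⟩ : ∃ s : ℝ, s = -Real.log q / Real.log A := ⟨_, rfl⟩
  have hs0 : 0 < s := by
    rw [hs]; exact div_pos (neg_pos.2 (Real.log_neg hq0 hq1)) (Real.log_pos hA1)
  have hqA : q * A ^ s = 1 := by
    rw [Real.rpow_def_of_pos (by linarith), hs, mul_div_cancel₀ _ (Real.log_pos hA1).ne',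
      Real.exp_neg, Real.exp_log hq0, mul_inv_cancel₀ hq0.ne']
  have claim : ∀ j : ℕ, ∀ ρ x : ℝ, 0 < ρ → ρ₀ * (1 / A) ^ j ≤ ρ →
      ν.real (Metric.closedBall x ρ) ≤ (ρ / ρ₀) ^ s := by
    intro j
    induction j with
    | zero =>
      intro ρ x hρ hj
      rw [pow_zero, mul_one] at hj
      exact measureReal_le_one.trans (Real.one_le_rpow (by rwa [one_le_div hρ₀]) hs0.le)
    | succ j ih =>
      intro ρ x hρ hj
      rcases le_or_gt ρ₀ ρ with h1 | h1
      · exact measureReal_le_one.trans (Real.one_le_rpow (by rwa [one_le_div hρ₀]) hs0.le)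
      have hAρ : 0 < A * ρ := by positivity
      have h2 : ρ₀ * (1 / A) ^ j ≤ A * ρ := by
        rw [pow_succ] at hj
        calc ρ₀ * (1 / A) ^ j = A * (ρ₀ * ((1 / A) ^ j * (1 / A))) := by field_simp
          _ ≤ A * ρ := by gcongr
      have h3 := h.real_closedBall_le ht ht1 hl1 (x := x) (m := (A * ρ / ρ₀) ^ s) (by positivity)
        (hρ₀' ρ h1.le) (fun u => by rw [← hA]; exact ih _ u hAρ h2)
      rw [← hq, mul_div_assoc, Real.mul_rpow (by positivity) (by positivity), ← mul_assoc, hqA,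
        one_mul] at h3
      exact h3
  refine ⟨(1 / ρ₀) ^ s, by positivity, s, hs0, fun x ρ hρ => ?_⟩
  obtain ⟨j, hj⟩ := exists_pow_lt_of_lt_one (div_pos hρ hρ₀) (show 1 / A < 1 by
    rw [div_lt_one (by linarith)]; exact hA1)
  rw [lt_div_iff₀ hρ₀] at hj
  refine (claim j ρ x hρ (by linarith)).trans (le_of_eq ?_)
  rw [← Real.mul_rpow (by positivity) hρ.le]
  congr 1
  ring

lemma exists_real_near_diagonal_le (ht : 0 < t) (ht1 : t < 1) :
    ∃ C : ℝ, 0 < C ∧ ∃ s : ℝ, 0 < s ∧ ∀ δ : ℝ, 0 < δ → (ν.prod ν).real {p | |p.1 - p.2| ≤ δ} ≤ C * δ ^ s := by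
  have := h.prob
  obtain ⟨C, hC, s, hs, hb⟩ := h.exists_real_closedBall_le ht ht1
  refine ⟨C, hC, s, hs, fun δ hδ => ?_⟩
  have hms : MeasurableSet {p : ℝ × ℝ | |p.1 - p.2| ≤ δ} :=
    measurableSet_le (by fun_prop) measurable_const
  rw [measureReal_def]
  refine ENNReal.toReal_le_of_le_ofReal (by positivity) ?_
  rw [Measure.prod_apply hms]
  calc ∫⁻ x, ν (Prod.mk x ⁻¹' {p : ℝ × ℝ | |p.1 - p.2| ≤ δ}) ∂ν
      ≤ ∫⁻ _, ENNReal.ofReal (C * δ ^ s) ∂ν := by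
        refine lintegral_mono fun x => ?_
        have e : Prod.mk x ⁻¹' {p : ℝ × ℝ | |p.1 - p.2| ≤ δ} = Metric.closedBall x δ := by
          ext y
          rw [Metric.mem_closedBall, Real.dist_eq, abs_sub_comm]
          rfl
        simp only [e]
        rw [← ofReal_measureReal]
        exact ENNReal.ofReal_le_ofReal (hb x δ hδ)
    _ = _ := by simp

end IsConductance

end Lyons

namespace Lyons

open Finset

/-- Power decay of the iterates of an oscillating window, uniformly in the number of steps. -/
lemma exists_norm_skew_window_le_pow {t : ℝ} (ht : 0 < t) (ht1 : t < 1) {κ κ₁ κ₂ : ℝ → ℝ} {K : ℝ}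
    (hκ : IsCutoff κ κ₁ κ₂ K) {c L : ℝ} (hc : 0 < c) (hL : 0 ≤ L) :
    ∃ N₀ m : ℕ, ∃ C : ℝ, 0 < C ∧ ∀ N ≥ N₀, ∀ q : unitInterval → ℝ, (∀ r, c ≤ q r) →
      (∀ r, q r ≤ 1) → (∀ r r', |q r - q r'| ≤ L * |(r : ℝ) - r'|) → ∀ Z B : ℝ, 1 ≤ Z →
      Z ^ 4 / 16 ≤ |B| → |B| ≤ Z ^ 8 → ∀ (i : ℕ) (s : ℝ) (r : unitInterval),
        s ≤ -(32 * m + 4) * Real.log Z →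
        ‖(skew ht N)^[i] (fun s r => window κ B (q r) s) s r‖ ≤ C * (1 / Z ^ 4) := by
  obtain ⟨N₀, σ, hσ0, hσ1, hw⟩ := exists_norm_skew_window_le ht ht1 hκ
  obtain ⟨C, hC, hw⟩ := hw c L hc hL
  obtain ⟨m, hm⟩ := exists_pow_lt_of_lt_one (show (0 : ℝ) < 1 / 4 by norm_num) hσ1
  have hm0 : m ≠ 0 := by
    rintro rfl
    norm_num at hm
  refine ⟨N₀, m, 16 + 17 * C + Real.exp 2, by positivity, ?_⟩
  intro N hN q hcq hq1 hqL Z B hZ hB1 hB2 i s r hs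
  have hZ0 : 0 < Z := by linarith
  have hZ4 : 0 < 1 / Z ^ 4 := by positivity
  have he2 := Real.exp_pos 2
  have hB0 : 0 < |B| := lt_of_lt_of_le (by positivity) hB1
  have hBinv : 1 / |B| ≤ 16 * (1 / Z ^ 4) := by
    calc 1 / |B| ≤ 1 / (Z ^ 4 / 16) := one_div_le_one_div_of_le (by positivity) hB1
      _ = _ := by field_simp
  have hκle := norm_skew_iterate_le ht N i (fun s r => window κ B (q r) s) s r
  have hwin : ∀ s r, ‖window κ B (q r) s‖ ≤ κ s := fun s r => hκ.norm_window_le _ _ _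
  rcases le_or_gt ((4 : ℝ) ^ i) (Z ^ (32 * m)) with hi | hi
  · have hκexp : ∀ s (r : unitInterval), ‖window κ B (q r) s‖ ≤ Real.exp 2 * Real.exp s := by
      intro s r
      refine (hwin s r).trans ?_
      rw [← Real.exp_add]
      rcases le_or_gt |s| 2 with h2 | h2
      · exact (hκ.le_one s).trans (Real.one_le_exp (by linarith [(abs_le.1 h2).1]))
      · rw [hκ.eq_zero s h2]; positivity
    have h1 := hκle.trans (skew_iterate_exp_le ht N ht1.le i he2.le hκexp s r)
    have h2 : Real.exp s ≤ 1 / Z ^ (32 * m + 4) := by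
      calc Real.exp s ≤ Real.exp (-((32 * m + 4 : ℕ) * Real.log Z)) :=
            Real.exp_le_exp.2 (hs.trans (le_of_eq (by push_cast; ring)))
        _ = _ := by rw [Real.exp_neg, Real.exp_nat_mul, Real.exp_log hZ0, one_div]
    calc _ ≤ 4 ^ i * Real.exp 2 * Real.exp s := h1
      _ ≤ Z ^ (32 * m) * Real.exp 2 * (1 / Z ^ (32 * m + 4)) := by gcongr
      _ = Real.exp 2 * (1 / Z ^ 4) := by rw [pow_add]; field_simp
      _ ≤ _ := by gcongr; linarith
  · rcases le_or_gt 1 |B| with hB | hB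
    · have h1 : (σ ^ i) ^ m ≤ (1 / Z ^ 32) ^ m := by
        rw [← pow_mul, mul_comm, pow_mul]
        calc (σ ^ m) ^ i ≤ (1 / 4) ^ i := by gcongr
          _ = 1 / 4 ^ i := by rw [one_div_pow]
          _ ≤ 1 / Z ^ (32 * m) := one_div_le_one_div_of_le (by positivity) hi.le
          _ = _ := by rw [one_div_pow, ← pow_mul]
      have h2 : σ ^ i ≤ 1 / Z ^ 32 := le_of_pow_le_pow_left₀ hm0 (by positivity) h1
      have h3 : |B| ^ 3 * σ ^ i ≤ 1 / Z ^ 4 := by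
        calc |B| ^ 3 * σ ^ i ≤ (Z ^ 8) ^ 3 * (1 / Z ^ 32) := by gcongr
          _ = 1 / Z ^ 8 := by field_simp
          _ ≤ 1 / Z ^ 4 := one_div_le_one_div_of_le (by positivity)
            (pow_le_pow_right₀ hZ (by norm_num))
      calc _ ≤ C * (1 / |B| + |B| ^ 3 * σ ^ i) := hw N hN q hcq hq1 hqL B hB i s r
        _ ≤ C * (16 * (1 / Z ^ 4) + 1 / Z ^ 4) := by gcongr
        _ = 17 * C * (1 / Z ^ 4) := by ring
        _ ≤ _ := by gcongr; linarith
    · have h1 : 1 ≤ 16 * (1 / Z ^ 4) := le_trans (by rw [le_div_iff₀ hB0]; linarith) hBinv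
      calc _ ≤ 1 := hκle.trans (skew_iterate_le_of_le ht N i zero_le_one
            (fun s r => (hwin s r).trans (hκ.le_one s)) s r)
        _ ≤ 16 * (1 / Z ^ 4) := h1
        _ ≤ _ := by gcongr; nlinarith

namespace IsConductance
variable {t : ℝ} {ν : Measure ℝ} (h : IsConductance t ν)
include h

/-- The basic estimate, at frequency `Z ^ (64 m + 16)`. -/
lemma exists_coeff_le (ht : 0 < t) (ht1 : t < 1) :
    ∃ N₀ m : ℕ, ∃ C : ℝ, 0 < C ∧ ∀ Z a : ℝ, 1 ≤ Z → ∀ N k J : ℕ, N₀ ≤ N → (N : ℝ) ≤ 2 * Z →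
      |a| = 2 * Real.pi * Z ^ (64 * m + 16) → Real.log (2 + N) < J → J ≤ Real.log (2 + N) + 1 →
      (32 * m + 4) * Real.log Z ≤ k * Real.log (1 + t) → ∀ r : unitInterval,
        coeff t ν a 0 r ≤ (k + 1) * √(J * (C * (1 / Z ^ 4) +
          (ν.prod ν).real {p | |p.1 - p.2| ≤ 1 / Z ^ 2})) + k * (1 / 2) ^ N := by
  obtain ⟨κ, κ₁, κ₂, K, hκ⟩ := exists_isCutoff
  obtain ⟨N₀, m, C, hC, hw⟩ := exists_norm_skew_window_le_pow ht ht1 hκ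
    (c := (1 / (1 + 1 / t)) ^ 2) (L := 2 / t) (by positivity) (by positivity)
  refine ⟨N₀, m, C, hC, fun Z a hZ N k J hN hNZ ha hJ hJ' hk r => ?_⟩
  have hZ0 : 0 < Z := by linarith
  have hlog : 0 ≤ Real.log Z := Real.log_nonneg hZ
  obtain ⟨r₀, hr₀⟩ : ∃ r₀ : ℝ, r₀ = (32 * m + 4) * Real.log Z := ⟨_, rfl⟩
  have hr₀0 : 0 ≤ r₀ := by rw [hr₀]; positivity
  have hexp : Real.exp (-2 * r₀) = 1 / Z ^ (64 * m + 8) := by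
    have : -2 * r₀ = -((64 * m + 8 : ℕ) * Real.log Z) := by rw [hr₀]; push_cast; ring
    rw [this, Real.exp_neg, Real.exp_nat_mul, Real.exp_log hZ0, one_div]
  have hW : Real.log (2 + t * N) ≤ Real.log (2 + N) := by
    refine Real.log_le_log (by positivity) ?_
    have : t * N ≤ 1 * N := by gcongr
    linarith
  have hW0 : 0 ≤ Real.log (2 + N) := Real.log_nonneg (by linarith [N.cast_nonneg (α := ℝ)])
  have hterm : ∀ i : ℕ, (skew ht N)^[i] (fun s r => if r₀ ≤ s ∧ s ≤ r₀ + Real.log (2 + N) then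
      coeff t ν a s r else 0) 0 r ≤ √(J * (C * (1 / Z ^ 4) +
        (ν.prod ν).real {p | |p.1 - p.2| ≤ 1 / Z ^ 2})) := by
    intro i
    refine Real.le_sqrt_of_sq_le (h.sq_skew_stopped_coeff_le ht N hκ i J a 0 r hJ (by positivity) ?_)
    intro j hj x hx x' hx' hd
    have hj1 : (j : ℝ) + 1 ≤ J := by exact_mod_cast hj
    have hxx : |x - x'| ≤ 1 := abs_le.2 ⟨by linarith [hx.1, hx'.2], by linarith [hx.2, hx'.1]⟩
    have hB : |a * (x - x') * Real.exp (-2 * (r₀ + j)) / (2 * Real.pi)| =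
        Z ^ 8 * |x - x'| * Real.exp (-2 * j) := by
      rw [mul_add, Real.exp_add, hexp, abs_div, abs_mul, abs_mul, ha, abs_mul, Real.abs_exp,
        abs_of_pos (show 0 < 2 * Real.pi by positivity), abs_of_pos (show 0 < 1 / Z ^ (64 * m + 8) by
        positivity), show 64 * m + 16 = (64 * m + 8) + 8 by ring, pow_add Z (64 * m + 8) 8]
      field_simp
    refine hw N hN _ (le_pairWeight ht hx hx') (pairWeight_le_one ht hx hx')
      (abs_pairWeight_sub_le ht hx hx') Z _ hZ ?_ ?_ i _ r ?_
    · rw [hB]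
      have h1 : Real.exp j ≤ 4 * Z := by
        calc Real.exp j ≤ Real.exp (Real.log (2 + N)) := Real.exp_le_exp.2 (by linarith)
          _ = 2 + N := Real.exp_log (by positivity)
          _ ≤ 4 * Z := by linarith
      have h2 : 1 / (4 * Z) ^ 2 ≤ Real.exp (-2 * j) := by
        rw [neg_mul, Real.exp_neg, two_mul, Real.exp_add, ← sq, ← one_div]
        exact one_div_le_one_div_of_le (by positivity) (by gcongr)
      calc Z ^ 4 / 16 = Z ^ 8 * (1 / Z ^ 2) * (1 / (4 * Z) ^ 2) := by field_simp; norm_num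
        _ ≤ _ := by gcongr
    · rw [hB]
      have h1 : Real.exp (-2 * j) ≤ 1 := Real.exp_le_one_iff.2 (by
        have : (0 : ℝ) ≤ j := j.cast_nonneg
        linarith)
      calc Z ^ 8 * |x - x'| * Real.exp (-2 * j) ≤ Z ^ 8 * 1 * 1 := by gcongr
        _ = Z ^ 8 := by ring
    · have : (0 : ℝ) ≤ j := j.cast_nonneg
      rw [hr₀]; linarith
  refine (h.coeff_le_sum ht N a (r₀ := r₀) hW k 0 r (by linarith) (by rw [hr₀]; linarith)).trans ?_
  refine add_le_add_left ((sum_le_sum fun i _ => hterm i).trans (le_of_eq ?_)) _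
  rw [sum_const, card_range, nsmul_eq_mul]
  push_cast
  ring

end IsConductance

end Lyons

namespace Lyons

namespace IsConductance
variable {t : ℝ} {ν : Measure ℝ} (h : IsConductance t ν)
include h

lemma exists_coeff_le_one_div_sq (ht : 0 < t) (ht1 : t < 1) :
    ∃ P : ℕ, P ≠ 0 ∧ ∃ u : ℝ, 0 < u ∧ ∃ C : ℝ, 0 < C ∧ ∀ Z a : ℝ, 1 ≤ Z →
      |a| = 2 * Real.pi * Z ^ P → ∀ r : unitInterval,
        coeff t ν a 0 r ≤ C * (1 / (Z ^ (u / 8)) ^ 2) := by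
  obtain ⟨N₀, m, C₁, hC₁, hbasic⟩ := h.exists_coeff_le ht ht1
  obtain ⟨C₂, hC₂, s, hs, hnear⟩ := h.exists_real_near_diagonal_le ht ht1
  obtain ⟨u, hu0, hu2, hus⟩ : ∃ u : ℝ, 0 < u ∧ u ≤ 2 ∧ u ≤ 2 * s :=
    ⟨min 2 (2 * s), by positivity, min_le_left _ _, min_le_right _ _⟩
  have ht2 : 0 < Real.log (1 + t) := Real.log_pos (by linarith)
  have hlog4 : 0 < Real.log 4 := Real.log_pos (by norm_num)
  obtain ⟨M, hM⟩ : ∃ M : ℝ, M = (32 * m + 4) / Real.log (1 + t) := ⟨_, rfl⟩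
  have hM0 : 0 < M := by rw [hM]; positivity
  obtain ⟨Cj, hCj⟩ : ∃ Cj : ℝ, Cj = Real.log 4 + 1 + 8 / u := ⟨_, rfl⟩
  obtain ⟨Ck, hCk⟩ : ∃ Ck : ℝ, Ck = M * (8 / u) + 2 := ⟨_, rfl⟩
  have hCj0 : 0 < Cj := by rw [hCj]; positivity
  have hCk0 : 0 < Ck := by rw [hCk]; positivity
  refine ⟨64 * m + 16, by omega, u, hu0, Ck * √(Cj * (C₁ + C₂)) + Ck + N₀, by positivity, ?_⟩
  intro Z a hZ ha r
  have hZ0 : 0 < Z := by linarith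
  obtain ⟨E, hE⟩ : ∃ E : ℝ, E = Z ^ (u / 8) := ⟨_, rfl⟩
  rw [← hE]
  have hE1 : 1 ≤ E := by rw [hE]; exact Real.one_le_rpow hZ (by positivity)
  have hE0 : 0 < E := by linarith
  have hEpow : ∀ n : ℕ, E ^ n = Z ^ (u / 8 * n) := fun n => by
    rw [hE, Real.rpow_mul_natCast hZ0.le]
  have hE4 : E ^ 4 ≤ Z := by
    rw [hEpow]
    calc Z ^ (u / 8 * (4 : ℕ)) ≤ Z ^ (1 : ℝ) :=
          Real.rpow_le_rpow_of_exponent_le hZ (by push_cast; linarith)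
      _ = Z := Real.rpow_one _
  have hlogE : Real.log Z ≤ 8 / u * E := by
    rw [hE]
    refine (Real.log_le_rpow_div hZ0.le (show 0 < u / 8 by positivity)).trans (le_of_eq ?_)
    field_simp
  have hlogZ : 0 ≤ Real.log Z := Real.log_nonneg hZ
  have hsqrt := Real.sqrt_nonneg (Cj * (C₁ + C₂))
  rcases lt_or_ge Z N₀ with hN | hN
  · refine (h.coeff_le_one _ _ _).trans ?_
    have h1 : E ^ 2 ≤ N₀ := ((pow_le_pow_right₀ hE1 (by norm_num)).trans hE4).trans hN.le
    have h2 : 0 < E ^ 2 := by positivity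
    rw [mul_one_div, le_div_iff₀ h2]
    have : 0 ≤ Ck * √(Cj * (C₁ + C₂)) := by positivity
    linarith
  obtain ⟨N, hNdef⟩ : ∃ N : ℕ, N = ⌈Z⌉₊ := ⟨_, rfl⟩
  obtain ⟨J, hJdef⟩ : ∃ J : ℕ, J = ⌊Real.log (2 + N)⌋₊ + 1 := ⟨_, rfl⟩
  obtain ⟨k, hkdef⟩ : ∃ k : ℕ, k = ⌈M * Real.log Z⌉₊ := ⟨_, rfl⟩
  have hNZ : Z ≤ N := by rw [hNdef]; exact Nat.le_ceil _
  have hNZ' : (N : ℝ) ≤ 2 * Z := by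
    have := Nat.ceil_lt_add_one hZ0.le
    rw [← hNdef] at this
    linarith
  have hlogN : 0 ≤ Real.log (2 + N) := Real.log_nonneg (by linarith)
  have hJ : Real.log (2 + N) < J := by
    rw [hJdef]; push_cast; exact Nat.lt_floor_add_one _
  have hJ' : (J : ℝ) ≤ Real.log (2 + N) + 1 := by
    rw [hJdef]; push_cast; linarith [Nat.floor_le hlogN]
  have hk : M * Real.log Z ≤ k := by rw [hkdef]; exact Nat.le_ceil _
  have hk' : (k : ℝ) < M * Real.log Z + 1 := by
    rw [hkdef]; exact Nat.ceil_lt_add_one (by positivity)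
  have hN₀N : N₀ ≤ N := by exact_mod_cast hN.trans hNZ
  have hmain := hbasic Z a hZ N k J hN₀N hNZ' ha hJ hJ' (by
    rw [hM, div_mul_eq_mul_div, div_le_iff₀ ht2] at hk; exact hk) r
  have hJE : (J : ℝ) ≤ Cj * E := by
    have h1 : Real.log (2 + N) ≤ Real.log 4 + Real.log Z := by
      rw [← Real.log_mul (by norm_num) hZ0.ne']
      exact Real.log_le_log (by positivity) (by linarith)
    have h2 : Real.log 4 + 1 ≤ (Real.log 4 + 1) * E := le_mul_of_one_le_right (by positivity) hE1
    rw [hCj, add_mul]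
    linarith
  have hkE : (k : ℝ) + 1 ≤ Ck * E := by
    have h1 : M * Real.log Z ≤ M * (8 / u * E) := by gcongr
    rw [hCk, add_mul, mul_assoc]
    linarith
  have hZ4 : 1 / Z ^ 4 ≤ 1 / E ^ 8 := by
    refine one_div_le_one_div_of_le (by positivity) ?_
    calc E ^ 8 = (E ^ 4) ^ 2 := by ring
      _ ≤ Z ^ 2 := by gcongr
      _ ≤ Z ^ 4 := pow_le_pow_right₀ hZ (by norm_num)
  have hnear' : (ν.prod ν).real {p | |p.1 - p.2| ≤ 1 / Z ^ 2} ≤ C₂ * (1 / E ^ 8) := by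
    refine (hnear _ (by positivity)).trans ?_
    gcongr
    rw [Real.div_rpow zero_le_one (by positivity), Real.one_rpow, hEpow, ← Real.rpow_natCast Z 2,
      ← Real.rpow_mul hZ0.le]
    refine one_div_le_one_div_of_le (by positivity)
      (Real.rpow_le_rpow_of_exponent_le hZ (by push_cast; linarith))
  have hroot : √(J * (C₁ * (1 / Z ^ 4) + (ν.prod ν).real {p | |p.1 - p.2| ≤ 1 / Z ^ 2})) ≤
      √(Cj * (C₁ + C₂)) * (1 / E ^ 3) := by
    have h0 : 0 ≤ (ν.prod ν).real {p : ℝ × ℝ | |p.1 - p.2| ≤ 1 / Z ^ 2} := measureReal_nonneg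
    rw [← Real.sqrt_sq (show 0 ≤ 1 / E ^ 3 by positivity), ← Real.sqrt_mul (by positivity)]
    refine Real.sqrt_le_sqrt ?_
    calc _ ≤ Cj * E * (C₁ * (1 / E ^ 8) + C₂ * (1 / E ^ 8)) := by gcongr
      _ = Cj * (C₁ + C₂) * (1 / E ^ 7) := by field_simp
      _ ≤ Cj * (C₁ + C₂) * (1 / E ^ 6) := by
        gcongr
        norm_num
      _ = _ := by field_simp
  have hpow : (1 / 2 : ℝ) ^ N ≤ 1 / E ^ 3 := by
    rw [one_div_pow]
    refine one_div_le_one_div_of_le (by positivity) ?_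
    have : (N : ℝ) < 2 ^ N := by exact_mod_cast Nat.lt_two_pow_self
    have h1 : E ^ 3 ≤ E ^ 4 := pow_le_pow_right₀ hE1 (by norm_num)
    linarith
  calc coeff t ν a 0 r ≤ Ck * E * (√(Cj * (C₁ + C₂)) * (1 / E ^ 3)) + Ck * E * (1 / E ^ 3) := by
        refine hmain.trans ?_
        gcongr
        linarith
    _ = (Ck * √(Cj * (C₁ + C₂)) + Ck) * (1 / E ^ 2) := by field_simp
    _ ≤ _ := mul_le_mul_of_nonneg_right (by linarith [N₀.cast_nonneg (α := ℝ)]) (by positivity)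

/-- Power decay of the Fourier transform of `ν`. -/
lemma exists_norm_fourier_le (ht : 0 < t) (ht1 : t < 1) :
    ∃ β : ℝ, 0 < β ∧ ∃ C : ℝ, 0 < C ∧ ∀ ξ : ℝ, 1 ≤ |ξ| →
      ‖∫ x : ℝ, Complex.exp (Complex.ofReal (-(2 * Real.pi * ξ * x)) * Complex.I) ∂ν‖
        ≤ C * |ξ| ^ (-β) := by
  obtain ⟨P, hP, u, hu, C, hC, hb⟩ := h.exists_coeff_le_one_div_sq ht ht1
  have hP0 : (0 : ℝ) < P := by exact_mod_cast Nat.pos_of_ne_zero hP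
  refine ⟨u / (4 * P), by positivity, C, hC, fun ξ hξ => ?_⟩
  have hξ0 : 0 ≤ |ξ| := abs_nonneg _
  have hc := hb (|ξ| ^ (P : ℝ)⁻¹) (-(2 * Real.pi * ξ)) (Real.one_le_rpow hξ (by positivity)) (by
    rw [Real.rpow_inv_natCast_pow hξ0 hP, abs_neg, abs_mul,
      abs_of_pos (show 0 < 2 * Real.pi by positivity)]) 1
  have e1 : 1 / ((|ξ| ^ (P : ℝ)⁻¹) ^ (u / 8)) ^ 2 = |ξ| ^ (-(u / (4 * P))) := by
    rw [← Real.rpow_mul hξ0, ← Real.rpow_mul_natCast hξ0, Real.rpow_neg hξ0, one_div]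
    congr 2
    push_cast
    field_simp
    norm_num
  rw [e1] at hc
  refine le_trans (le_of_eq ?_) hc
  simp [coeff]

end IsConductance

end Lyons

/-- **Power Fourier decay of the Lyons conductance measures** (Theorem 1.3).

For every `0 < t < 1`, any Borel probability measure `ν_t` on `[0,1]` satisfying the
self-conformality equation `ν_t = ½ (f₀)_*ν_t + ½ (f_t)_*ν_t` for the parabolic
overlapping Lyons IFS `f₀(x) = x/(1+x)`, `f_t(x) = (x+t)/(1+x+t)` has power Fourier
decay: there are `β > 0` and `C > 0` with `|ν̂_t(ξ)| ≤ C |ξ|^{-β}` for all `|ξ| ≥ 1`. -/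
theorem lyons_measure_fourier_decay (t : ℝ) (ht : t ∈ Set.Ioo (0:ℝ) 1)
    (ν : Measure ℝ) [IsProbabilityMeasure ν]
    (hsupp : ν (Set.Icc (0:ℝ) 1)ᶜ = 0)
    (hconf : ν = (1/2 : ℝ≥0∞) • Measure.map (fun x : ℝ => x / (1 + x)) ν
               + (1/2 : ℝ≥0∞) • Measure.map (fun x : ℝ => (x + t) / (1 + x + t)) ν) :
    ∃ β : ℝ, 0 < β ∧ ∃ C : ℝ, 0 < C ∧ ∀ ξ : ℝ, 1 ≤ |ξ| →
      ‖∫ x : ℝ, Complex.exp (Complex.ofReal (-(2 * Real.pi * ξ * x)) * Complex.I) ∂ν‖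
        ≤ C * |ξ| ^ (-β) := by
  have h : Lyons.IsConductance t ν := ⟨inferInstance, hsupp, hconf⟩
  exact h.exists_norm_fourier_le ht.1 ht.2
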